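/- arXiv:2602.04544 — 3 statements merged into one kernel-verified Lean document; each statement's English description precedes it below -/
import Mathlib

section
/- Let a : ℕ₊ → ℕ be the 8-periodic sequence determined by (a_1,…,a_8) = (2,1,1,1,2,2,2,1), and define b : ℕ₊ → ℕ₊ by b_1 = 1 and b_{i+1} = a_i·b_i. Suppose a function f : ℕ₊ × ℕ₊ → ℕ satisfies, for all i, N ≥ 1: (i) f(i,N) + 1 ≤ f(i+1, a_i·N); (ii) f(i+8, N) = f(i, N); (iii) f(2,N) ≥ 1 and f(6,N) ≥ 1; (iv) f(1,N) = ρ(N). Then for all i, N ≥ 1 one has the equality of integers f(i,N) = ρ(N / b_i) + i − 1. -/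
/-- Extended Hurwitz–Radon number: writing the 2-adic valuation of `t` as `4a + b`
with `a ∈ ℤ` and `b ∈ {0,1,2,3}`, `ρ(t) := 8a + 2^b`. -/
noncomputable def hrRho (t : ℚ) : ℤ :=
  8 * (padicValRat 2 t / 4) + 2 ^ (padicValRat 2 t % 4).toNat

/-- The 8-periodic sequence determined by `(a_1,…,a_8) = (2,1,1,1,2,2,2,1)`. -/
def hrA (i : ℕ) : ℕ :=
  if i % 8 = 1 ∨ i % 8 = 5 ∨ i % 8 = 6 ∨ i % 8 = 7 then 2 else 1

/-- `hrB i = b_i` for `i ≥ 1`: indeed `hrB 1 = hrA 0 * hrB 0 = 1` and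
`hrB (i+1) = hrA i * hrB i`, i.e. `b_1 = 1` and `b_{i+1} = a_i · b_i`. -/
def hrB : ℕ → ℕ
  | 0 => 1
  | i + 1 => hrA i * hrB i

theorem hrA_cases (i : ℕ) : hrA i = 1 ∨ hrA i = 2 := by
  unfold hrA; split_ifs <;> simp

theorem hrA_pos (i : ℕ) : 1 ≤ hrA i := by
  rcases hrA_cases i with h | h <;> omega

theorem hrB_pos (i : ℕ) : 1 ≤ hrB i := by
  induction i with
  | zero => simp [hrB]
  | succ n ih => exact Nat.mul_pos (hrA_pos n) ih

theorem hrA_add (i : ℕ) : hrA (i + 8) = hrA i := by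
  simp [hrA]

theorem hrB_add (i : ℕ) : hrB (i + 8) = 16 * hrB i := by
  induction i with
  | zero => decide
  | succ n ih =>
    have e : n + 1 + 8 = (n + 8) + 1 := by omega
    rw [e]
    change hrA (n + 8) * hrB (n + 8) = 16 * (hrA n * hrB n)
    rw [ih, hrA_add]; ring

theorem hrRho_div16 (t : ℚ) (ht : t ≠ 0) : hrRho (t / 16) = hrRho t - 8 := by
  have h : padicValRat 2 (t / 16) = padicValRat 2 t - 4 := by
    have h16 : (16 : ℚ) = (((2 : ℕ) : ℚ)) ^ 4 := by norm_num
    rw [h16, padicValRat.div ht (by norm_num), padicValRat.pow,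
      padicValRat.self (by norm_num)]
    norm_num
  unfold hrRho
  rw [h]
  have e1 : (padicValRat 2 t - 4) / 4 = padicValRat 2 t / 4 - 1 := by omega
  have e2 : (padicValRat 2 t - 4) % 4 = padicValRat 2 t % 4 := by omega
  rw [e1, e2]; ring

theorem hrRho_odd (N : ℕ) (hN : N % 2 = 1) (k : ℕ) :
    hrRho ((N : ℚ) / (2 : ℚ) ^ k) = 8 * (-(k : ℤ) / 4) + 2 ^ (-(k : ℤ) % 4).toNat := by
  have h : padicValRat 2 ((N : ℚ) / (2 : ℚ) ^ k) = -(k : ℤ) := by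
    have h2 : (2 : ℚ) = ((2 : ℕ) : ℚ) := by norm_num
    have hN0 : (N : ℚ) ≠ 0 := by
      have : N ≠ 0 := by omega
      exact_mod_cast this
    rw [h2, padicValRat.div hN0 (by norm_num), padicValRat.pow,
      padicValRat.self (by norm_num), padicValRat.of_nat,
      padicValNat.eq_zero_of_not_dvd (by omega)]
    norm_num
  unfold hrRho
  rw [h]

/-- The target value. -/
noncomputable def hrT (i N : ℕ) : ℤ := hrRho ((N : ℚ) / (hrB i : ℚ)) + (i : ℤ) - 1

theorem hrT_succ (i N : ℕ) : hrT (i + 1) (hrA i * N) = hrT i N + 1 := by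
  have hA : (hrA i : ℚ) ≠ 0 := by
    have := hrA_pos i
    have : hrA i ≠ 0 := by omega
    exact_mod_cast this
  unfold hrT
  have e : hrB (i + 1) = hrA i * hrB i := rfl
  rw [e]
  push_cast
  rw [mul_div_mul_left _ _ hA]
  ring

theorem hrT_add (i N : ℕ) (hN : 1 ≤ N) : hrT (i + 8) N = hrT i N := by
  unfold hrT
  rw [hrB_add]
  have hb := hrB_pos i
  have hb0 : (hrB i : ℚ) ≠ 0 := by
    have : hrB i ≠ 0 := by omega
    exact_mod_cast this
  have hN0 : (N : ℚ) ≠ 0 := by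
    have : N ≠ 0 := by omega
    exact_mod_cast this
  have e : (N : ℚ) / ((16 * hrB i : ℕ) : ℚ) = (N : ℚ) / (hrB i : ℚ) / 16 := by
    push_cast; field_simp
  rw [e, hrRho_div16 _ (div_ne_zero hN0 hb0)]
  push_cast; ring

theorem hurwitzRadon_eight_periodic_lemma (f : ℕ → ℕ → ℕ)
    (h1 : ∀ i ≥ 1, ∀ N ≥ 1, f i N + 1 ≤ f (i + 1) (hrA i * N))
    (h2 : ∀ i ≥ 1, ∀ N ≥ 1, f (i + 8) N = f i N)
    (h3 : ∀ N ≥ 1, 1 ≤ f 2 N ∧ 1 ≤ f 6 N)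
    (h4 : ∀ N ≥ 1, (f 1 N : ℤ) = hrRho (N : ℚ)) :
    ∀ i ≥ 1, ∀ N ≥ 1,
      (f i N : ℤ) = hrRho ((N : ℚ) / (hrB i : ℚ)) + (i : ℤ) - 1 := by
  have base : ∀ N ≥ 1, (f 1 N : ℤ) = hrT 1 N := by
    intro N hN
    rw [h4 N hN]
    simp [hrT, hrB, hrA]
  -- upper bound, downwards from index 9
  have up : ∀ i ≥ 1, (∀ N ≥ 1, (f (i + 1) N : ℤ) ≤ hrT (i + 1) N) →
      ∀ N ≥ 1, (f i N : ℤ) ≤ hrT i N := by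
    intro i hi h N hN
    have a := h1 i hi N hN
    have b := h (hrA i * N) (Nat.mul_pos (hrA_pos i) hN)
    rw [hrT_succ] at b
    have a' : (f i N : ℤ) + 1 ≤ (f (i + 1) (hrA i * N) : ℤ) := by exact_mod_cast a
    linarith
  -- lower bound, upwards from index 1
  have lo : ∀ i ≥ 1, (∀ N ≥ 1, N % 2 = 1 → hrA i = 2 → hrT (i + 1) N ≤ (f (i + 1) N : ℤ)) →
      (∀ N ≥ 1, hrT i N ≤ (f i N : ℤ)) → ∀ N ≥ 1, hrT (i + 1) N ≤ (f (i + 1) N : ℤ) := by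
    intro i hi ho h N hN
    have key : ∀ M ≥ 1, N = hrA i * M → hrT (i + 1) N ≤ (f (i + 1) N : ℤ) := by
      intro M hM e
      have a := h1 i hi M hM
      have a' : (f i M : ℤ) + 1 ≤ (f (i + 1) (hrA i * M) : ℤ) := by exact_mod_cast a
      rw [e, hrT_succ]
      have := h M hM
      linarith
    rcases hrA_cases i with hA | hA
    · exact key N hN (by rw [hA, one_mul])
    · rcases Nat.mod_two_eq_zero_or_one N with hp | hp
      · exact key (N / 2) (by omega) (by rw [hA]; omega)
      · exact ho N hN hp hA
  have U9 : ∀ N ≥ 1, (f 9 N : ℤ) ≤ hrT 9 N := by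
    intro N hN
    rw [h2 1 le_rfl N hN, hrT_add 1 N hN, base N hN]
  have U8 := up 8 (by norm_num) U9
  have U7 := up 7 (by norm_num) U8
  have U6 := up 6 (by norm_num) U7
  have U5 := up 5 (by norm_num) U6
  have U4 := up 4 (by norm_num) U5
  have U3 := up 3 (by norm_num) U4
  have U2 := up 2 (by norm_num) U3
  have b2 : hrB 2 = 2 := by decide
  have b6 : hrB 6 = 4 := by decide
  have b7 : hrB 7 = 8 := by decide
  have b8 : hrB 8 = 16 := by decide
  have L1 : ∀ N ≥ 1, hrT 1 N ≤ (f 1 N : ℤ) := fun N hN => (base N hN).ge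
  have L2 := lo 1 (by norm_num) (by
    intro N hN hp _
    have a := (h3 N hN).1
    have r := hrRho_odd N hp 1
    norm_num at r
    simp only [hrT, b2]
    norm_num [r, show Int.toNat 3 = 3 from rfl, show Int.toNat 2 = 2 from rfl]
    omega) L1
  have L3 := lo 2 (by norm_num) (fun N _ _ h => absurd h (by decide)) L2
  have L4 := lo 3 (by norm_num) (fun N _ _ h => absurd h (by decide)) L3
  have L5 := lo 4 (by norm_num) (fun N _ _ h => absurd h (by decide)) L4
  have L6 := lo 5 (by norm_num) (by
    intro N hN hp _
    have a := (h3 N hN).2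
    have r := hrRho_odd N hp 2
    norm_num at r
    simp only [hrT, b6]
    norm_num [r, show Int.toNat 3 = 3 from rfl, show Int.toNat 2 = 2 from rfl]
    omega) L5
  have L7 := lo 6 (by norm_num) (by
    intro N hN hp _
    have r := hrRho_odd N hp 3
    norm_num at r
    simp only [hrT, b7]
    norm_num [r]) L6
  have L8 := lo 7 (by norm_num) (by
    intro N hN hp _
    have r := hrRho_odd N hp 4
    norm_num at r
    simp only [hrT, b8]
    norm_num [r]) L7
  have main : ∀ i ≥ 1, ∀ N ≥ 1, (f i N : ℤ) = hrT i N := by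
    intro i
    induction i using Nat.strong_induction_on with
    | _ i ih =>
      intro hi N hN
      by_cases h8 : i ≤ 8
      · interval_cases i
        · exact base N hN
        · exact le_antisymm (U2 N hN) (L2 N hN)
        · exact le_antisymm (U3 N hN) (L3 N hN)
        · exact le_antisymm (U4 N hN) (L4 N hN)
        · exact le_antisymm (U5 N hN) (L5 N hN)
        · exact le_antisymm (U6 N hN) (L6 N hN)
        · exact le_antisymm (U7 N hN) (L7 N hN)
        · exact le_antisymm (U8 N hN) (L8 N hN)
      · obtain ⟨j, rfl⟩ : ∃ j, i = j + 8 := ⟨i - 8, by omega⟩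
        rw [h2 j (by omega) N hN, hrT_add j N hN]
        exact ih j (by omega) (by omega) N hN
  exact main
end

section
/- Let k ∈ ℕ and suppose a function f : ℕ₊ → ℕ satisfies, for every N ≥ 1: (i) f(N) + 2 ≤ f(2N); (ii) f(N) ≤ ρ(N) + k; (iii) f(N) ≥ k. Then f(N) = 2·ord₂(N) + k for every N ≥ 1, where ord₂(N) is the 2-adic valuation of N. -/
theorem hurwitzRadon_two_periodic_lemma (k : ℕ) (f : ℕ → ℕ)
    (h1 : ∀ N ≥ 1, f N + 2 ≤ f (2 * N))
    (h2 : ∀ N ≥ 1, (f N : ℤ) ≤ hrRho (N : ℚ) + (k : ℤ))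
    (h3 : ∀ N ≥ 1, k ≤ f N) :
    ∀ N ≥ 1, f N = 2 * padicValNat 2 N + k := by
  have hpow : ∀ N ≥ 1, ∀ j : ℕ, f N + 2 * j ≤ f (2 ^ j * N) := by
    intro N hN j
    induction j with
    | zero => simp
    | succ j ih =>
      have h := h1 (2 ^ j * N) (Nat.mul_pos (by positivity) hN)
      have e : 2 * (2 ^ j * N) = 2 ^ (j + 1) * N := by ring
      rw [e] at h
      omega
  intro N hN
  have hN0 : N ≠ 0 := by omega
  set v := padicValNat 2 N with hv
  apply le_antisymm
  · have hM : 1 ≤ 2 ^ ((4 * v + 1) - v) * N := Nat.mul_pos (by positivity) hN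
    have a := hpow N hN ((4 * v + 1) - v)
    have b := h2 _ hM
    have c : padicValNat 2 (2 ^ ((4 * v + 1) - v) * N) = 4 * v + 1 := by
      rw [padicValNat.mul (by positivity) hN0, padicValNat.prime_pow, ← hv]
      omega
    have e1 : ((4 * v + 1 : ℕ) : ℤ) / 4 = v := by omega
    have e2 : ((4 * v + 1 : ℕ) : ℤ) % 4 = 1 := by omega
    rw [hrRho, padicValRat.of_nat, c, e1, e2] at b
    norm_num at b
    zify at a ⊢
    push_cast at a b ⊢
    omega
  · obtain ⟨M, hM⟩ : 2 ^ v ∣ N := pow_padicValNat_dvd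
    have hM1 : 1 ≤ M := by
      rcases Nat.eq_zero_or_pos M with h | h
      · subst h; simp at hM; omega
      · exact h
    have a := hpow M hM1 v
    rw [← hM] at a
    have b := h3 M hM1
    omega
end

section
/- For every N ≥ 1 and every n ∈ ℕ, the following are equivalent: (1) there exists an ℝ-linear map f : ℝⁿ → M(N,ℝ) with f(v)ᵀ f(v) = ‖v‖² I_N for all v ∈ ℝⁿ; (2) there exists an ℝ-linear map f : ℝⁿ → M(N,ℝ) such that f(v) is invertible for every nonzero v ∈ ℝⁿ; (3) n ≤ ρ(N). (This is the reformulation ρ(N) = ρ⁽¹⁾(𝔰𝔬(N,N),ι) = ρ⁽²⁾(𝔰𝔬(N,N),ι) of the Hurwitz–Radon–Eckmann–Adams theorem, where ι is the standard representation.) -/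
open Matrix

open Matrix
namespace HR

section sig
variable {κ : Type} [Fintype κ]

/-- quadratic form of a matrix -/
def q (A : Matrix κ κ ℝ) (u : κ → ℝ) : ℝ := u ⬝ᵥ (A *ᵥ u)

lemma q_add (A B : Matrix κ κ ℝ) (u) : q (A + B) u = q A u + q B u := by
  simp [q, add_mulVec]
lemma q_sub (A B : Matrix κ κ ℝ) (u) : q (A - B) u = q A u - q B u := by
  simp [q, sub_mulVec]
lemma q_neg (A : Matrix κ κ ℝ) (u) : q (-A) u = -q A u := by
  simp [q, neg_mulVec]
lemma q_smul (c : ℝ) (A : Matrix κ κ ℝ) (u) : q (c • A) u = c * q A u := by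
  simp [q, smul_mulVec]
lemma q_sum {ι : Type} (s : Finset ι) (A : ι → Matrix κ κ ℝ) (u) :
    q (∑ i ∈ s, A i) u = ∑ i ∈ s, q (A i) u := by
  simp [q, sum_mulVec, dotProduct_sum]
lemma q_one [DecidableEq κ] (u : κ → ℝ) : q (1 : Matrix κ κ ℝ) u = u ⬝ᵥ u := by simp [q]
lemma q_mul (A B : Matrix κ κ ℝ) (u) : q (A * B) u = (Aᵀ *ᵥ u) ⬝ᵥ (B *ᵥ u) := by
  rw [q, ← mulVec_mulVec, dotProduct_mulVec, ← mulVec_transpose]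
lemma q_tr (A : Matrix κ κ ℝ) (u) : q Aᵀ u = q A u := by
  rw [q, q, mulVec_transpose, dotProduct_comm, ← dotProduct_mulVec]
lemma nsq_nonneg (u : κ → ℝ) : 0 ≤ u ⬝ᵥ u :=
  Finset.sum_nonneg fun i _ => mul_self_nonneg (u i)
lemma nsq_pos (u : κ → ℝ) (h : u ≠ 0) : 0 < u ⬝ᵥ u :=
  lt_of_le_of_ne (nsq_nonneg u) (fun h' => h (dotProduct_self_eq_zero.1 h'.symm))
lemma nsq_add (u v : κ → ℝ) : (u + v) ⬝ᵥ (u + v) = u ⬝ᵥ u + 2 * (u ⬝ᵥ v) + v ⬝ᵥ v := by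
  simp only [add_dotProduct, dotProduct_add, dotProduct_comm v u]; ring
lemma dot_le (a : ℝ) (ha : 0 < a) (u v : κ → ℝ) :
    u ⬝ᵥ v ≤ a / 2 * (u ⬝ᵥ u) + 1 / (2 * a) * (v ⬝ᵥ v) := by
  have h := nsq_nonneg (a • u - v)
  simp only [sub_dotProduct, dotProduct_sub, smul_dotProduct, dotProduct_smul, smul_eq_mul,
    dotProduct_comm v u] at h
  have : a / 2 * (u ⬝ᵥ u) + 1 / (2 * a) * (v ⬝ᵥ v) - u ⬝ᵥ v =
    1 / (2 * a) * (a * (a * u ⬝ᵥ u) - a * u ⬝ᵥ v - (a * u ⬝ᵥ v - v ⬝ᵥ v)) := by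
    field_simp; ring
  have h2 : 0 ≤ 1 / (2 * a) * (a * (a * u ⬝ᵥ u) - a * u ⬝ᵥ v - (a * u ⬝ᵥ v - v ⬝ᵥ v)) :=
    mul_nonneg (by positivity) (by linarith)
  linarith

lemma dot_ge (a : ℝ) (ha : 0 < a) (u v : κ → ℝ) :
    -(a / 2 * (u ⬝ᵥ u) + 1 / (2 * a) * (v ⬝ᵥ v)) ≤ u ⬝ᵥ v := by
  have := dot_le a ha u (-v)
  simp at this
  simp; linarith

/-- upper bound of a quadratic form -/
lemma exists_bound (A : Matrix κ κ ℝ) : ∃ C : ℝ, 0 ≤ C ∧ ∀ u, |q A u| ≤ C * (u ⬝ᵥ u) := by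
  refine ⟨∑ i, ∑ j, |A i j|, by positivity, fun u => ?_⟩
  have hq : q A u = ∑ i, ∑ j, u i * (A i j * u j) := by
    simp only [q, dotProduct, mulVec, Finset.mul_sum]
  rw [hq, Finset.sum_mul]
  refine (Finset.abs_sum_le_sum_abs _ _).trans (Finset.sum_le_sum fun i _ => ?_)
  rw [Finset.sum_mul]
  refine (Finset.abs_sum_le_sum_abs _ _).trans (Finset.sum_le_sum fun j _ => ?_)
  rw [show u i * (A i j * u j) = A i j * (u i * u j) by ring, abs_mul]
  refine mul_le_mul_of_nonneg_left ?_ (abs_nonneg _)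
  have hi : u i * u i ≤ ∑ x, u x * u x :=
    Finset.single_le_sum (f := fun x => u x * u x) (fun x _ => mul_self_nonneg _) (Finset.mem_univ i)
  have hj : u j * u j ≤ ∑ x, u x * u x :=
    Finset.single_le_sum (f := fun x => u x * u x) (fun x _ => mul_self_nonneg _) (Finset.mem_univ j)
  change _ ≤ ∑ x, u x * u x
  rw [abs_le]
  constructor <;> nlinarith [sq_nonneg (u i + u j), sq_nonneg (u i - u j)]

/-- the quadratic function `Q` is nondegenerate with positive index `k` -/
def HasSig (Q : (κ → ℝ) → ℝ) (k : ℕ) : Prop :=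
  ∃ (U V : Submodule ℝ (κ → ℝ)) (δ : ℝ), 0 < δ ∧ Module.finrank ℝ U = k ∧
    Module.finrank ℝ U + Module.finrank ℝ V = Fintype.card κ ∧
    (∀ u ∈ U, δ * (u ⬝ᵥ u) ≤ Q u) ∧ (∀ u ∈ V, Q u ≤ -δ * (u ⬝ᵥ u))

lemma HasSig.le {Q : (κ → ℝ) → ℝ} {k l : ℕ} (h : HasSig Q k) (h' : HasSig Q l) : k ≤ l := by
  obtain ⟨U, V, δ, hδ, hk, hd, hU, hV⟩ := h
  obtain ⟨U', V', δ', hδ', hk', hd', hU', hV'⟩ := h'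
  have hdis : U ⊓ V' = ⊥ := by
    rw [eq_bot_iff]
    rintro u ⟨h1, h2⟩
    by_contra hu
    have hp := nsq_pos u hu
    have := hU u h1
    have := hV' u h2
    nlinarith [mul_pos hδ hp, mul_pos hδ' hp]
  have h1 := Submodule.finrank_sup_add_finrank_inf_eq U V'
  rw [hdis, finrank_bot] at h1
  have h2 := Submodule.finrank_le (U ⊔ V')
  rw [Module.finrank_fintype_fun_eq_card] at h2
  omega

lemma HasSig.unique {Q : (κ → ℝ) → ℝ} {k l : ℕ} (h : HasSig Q k) (h' : HasSig Q l) : k = l :=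
  le_antisymm (h.le h') (h'.le h)

lemma HasSig.stable {Q : (κ → ℝ) → ℝ} {k : ℕ} (h : HasSig Q k) :
    ∃ ε > 0, ∀ Q' : (κ → ℝ) → ℝ, (∀ u, |Q' u - Q u| ≤ ε * (u ⬝ᵥ u)) → HasSig Q' k := by
  obtain ⟨U, V, δ, hδ, hk, hd, hU, hV⟩ := h
  refine ⟨δ / 2, by positivity, fun Q' hQ => ⟨U, V, δ / 2, by positivity, hk, hd, ?_, ?_⟩⟩
  · intro u hu
    have := hU u hu
    have := abs_le.1 (hQ u)
    linarith
  · intro u hu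
    have := hV u hu
    have := abs_le.1 (hQ u)
    linarith

/-- block diagonal forms -/
lemma HasSig.blocks {β ι : Type} [Fintype β] [Fintype ι] (e : κ ≃ β × ι)
    (Q : (κ → ℝ) → ℝ) (Qb : β → (ι → ℝ) → ℝ) (k : β → ℕ)
    (hQ : ∀ u, Q u = ∑ b, Qb b (fun i => u (e.symm (b, i))))
    (h : ∀ b, HasSig (Qb b) (k b)) : HasSig Q (∑ b, k b) := by
  classical
  choose U V δ hδ hk hd hU hV using h
  let Ψ : (κ → ℝ) ≃ₗ[ℝ] (β → ι → ℝ) :=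
    (LinearEquiv.funCongrLeft ℝ ℝ e.symm).trans (LinearEquiv.curry ℝ ℝ β ι)
  have hΨ : ∀ u b, Ψ u b = fun i => u (e.symm (b, i)) := fun u b => rfl
  have hn : ∀ u : κ → ℝ, u ⬝ᵥ u = ∑ b, (Ψ u b) ⬝ᵥ (Ψ u b) := by
    intro u
    simp only [dotProduct, hΨ]
    rw [← Fintype.sum_prod_type' (f := fun b i => u (e.symm (b, i)) * u (e.symm (b, i)))]
    exact (Equiv.sum_comp e.symm (fun x => u x * u x)).symm
  obtain ⟨δ₀, hδ₀, hδm⟩ : ∃ δ₀ > 0, ∀ b, δ₀ ≤ δ b := by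
    rcases isEmpty_or_nonempty β with hb | hb
    · exact ⟨1, one_pos, fun b => hb.elim b⟩
    · obtain ⟨b₀, hb₀⟩ := Finite.exists_min δ
      exact ⟨δ b₀, hδ b₀, hb₀⟩
  have key : ∀ S : β → Submodule ℝ (ι → ℝ),
      Module.finrank ℝ ((Submodule.pi Set.univ S).comap Ψ.toLinearMap) =
        ∑ b, Module.finrank ℝ (S b) := by
    intro S
    rw [← Module.finrank_pi_fintype]
    refine LinearEquiv.finrank_eq ?_
    exact
      { toFun := fun x b => ⟨Ψ x.1 b, x.2 b (Set.mem_univ b)⟩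
        invFun := fun y => ⟨Ψ.symm (fun b => (y b).1), fun b _ => by
          change Ψ (Ψ.symm _) b ∈ S b
          rw [LinearEquiv.apply_symm_apply]; exact (y b).2⟩
        left_inv := fun x => Subtype.ext (Ψ.symm_apply_apply x.1)
        right_inv := fun y => by
          funext b; apply Subtype.ext
          change Ψ (Ψ.symm _) b = _
          rw [LinearEquiv.apply_symm_apply]
        map_add' := fun x y => rfl
        map_smul' := fun c x => rfl }
  refine ⟨(Submodule.pi Set.univ U).comap Ψ.toLinearMap, (Submodule.pi Set.univ V).comap Ψ.toLinearMap,
    δ₀, hδ₀, ?_, ?_, ?_, ?_⟩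
  · rw [key]; exact Finset.sum_congr rfl fun b _ => hk b
  · rw [key, key, ← Finset.sum_add_distrib, Finset.sum_congr rfl fun b _ => hd b,
      Fintype.card_congr e]
    simp
  · intro u hu
    rw [hQ, hn, Finset.mul_sum]
    refine Finset.sum_le_sum fun b _ => ?_
    have h1 := hU b (Ψ u b) (hu b (Set.mem_univ b))
    have h2 := nsq_nonneg (Ψ u b)
    have := mul_le_mul_of_nonneg_right (hδm b) h2
    rw [← hΨ]; linarith
  · intro u hu
    rw [hQ, hn, Finset.mul_sum]
    refine Finset.sum_le_sum fun b _ => ?_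
    have h1 := hV b (Ψ u b) (hu b (Set.mem_univ b))
    have h2 := nsq_nonneg (Ψ u b)
    have := mul_le_mul_of_nonneg_right (hδm b) h2
    rw [← hΨ]; linarith

lemma HasSig.conj {Q : (κ → ℝ) → ℝ} {k : ℕ} (h : HasSig Q k) (R : Matrix κ κ ℝ)
    [DecidableEq κ] (hR : R * R = 1) (hRt : Rᵀ = R) : HasSig (fun u => Q (R *ᵥ u)) k := by
  obtain ⟨U, V, δ, hδ, hk, hd, hU, hV⟩ := h
  let Ψ : (κ → ℝ) ≃ₗ[ℝ] (κ → ℝ) := LinearEquiv.ofInvolutive (Matrix.mulVecLin R) (by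
    intro u; simp [hR])
  have hn : ∀ u, (R *ᵥ u) ⬝ᵥ (R *ᵥ u) = u ⬝ᵥ u := by
    intro u
    have := q_mul R R u
    rw [hR, hRt, q_one] at this
    exact this.symm
  have key : ∀ S : Submodule ℝ (κ → ℝ), Module.finrank ℝ (S.map Ψ.toLinearMap) = Module.finrank ℝ S :=
    fun S => LinearEquiv.finrank_map_eq Ψ S
  refine ⟨U.map Ψ.toLinearMap, V.map Ψ.toLinearMap, δ, hδ, by rw [key, hk], by rw [key, key, hd], ?_, ?_⟩
  · rintro _ ⟨u, hu, rfl⟩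
    change δ * ((R *ᵥ u) ⬝ᵥ (R *ᵥ u)) ≤ Q (R *ᵥ (R *ᵥ u))
    rw [hn, mulVec_mulVec, hR, one_mulVec]; exact hU u hu
  · rintro _ ⟨u, hu, rfl⟩
    change Q (R *ᵥ (R *ᵥ u)) ≤ -δ * ((R *ᵥ u) ⬝ᵥ (R *ᵥ u))
    rw [hn, mulVec_mulVec, hR, one_mulVec]; exact hV u hu
end sig
end HR

open Matrix
namespace HR

lemma four_dvd_of_quat {p : Type} [Fintype p] [DecidableEq p] (K₁ K₂ : Matrix p p ℝ)
    (h1 : K₁ * K₁ = -1) (h2 : K₂ * K₂ = -1) (h12 : K₁ * K₂ = -(K₂ * K₁)) :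
    4 ∣ Fintype.card p := by
  let B : QuaternionAlgebra.Basis (Matrix p p ℝ) (-1 : ℝ) 0 (-1) :=
    { i := K₁, j := K₂, k := K₁ * K₂
      i_mul_i := by simp [h1]
      j_mul_j := by simp [h2]
      i_mul_j := rfl
      j_mul_i := by simp [h12] }
  let φ : Quaternion ℝ →ₐ[ℝ] Matrix p p ℝ := B.liftHom
  let ψ : Quaternion ℝ →+* Module.End ℝ (p → ℝ) :=
    ((Matrix.toLinAlgEquiv' (R := ℝ) (n := p)).toAlgHom.comp φ).toRingHom
  let _ : Module (Quaternion ℝ) (p → ℝ) := Module.compHom (p → ℝ) ψ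
  have _ : IsScalarTower ℝ (Quaternion ℝ) (p → ℝ) := ⟨fun a x v => by
    change ψ (a • x) v = a • (ψ x v)
    have : ψ (a • x) = a • ψ x :=
      map_smul ((Matrix.toLinAlgEquiv' (R := ℝ) (n := p)).toAlgHom.comp φ) a x
    rw [this]; rfl⟩
  have h := Module.finrank_mul_finrank ℝ (Quaternion ℝ) (p → ℝ)
  rw [Module.finrank_fintype_fun_eq_card, Quaternion.finrank_eq_four] at h
  exact ⟨_, h.symm⟩

lemma hasSig_unit (a : ℝ) (ha : a ≠ 0) :
    HasSig (κ := Unit) (fun v => a * (v () * v ())) (if 0 < a then 1 else 0) := by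
  have hc : Module.finrank ℝ (Unit → ℝ) = 1 := by simp
  rcases lt_or_gt_of_ne ha with h | h
  · rw [if_neg (by linarith)]
    refine ⟨⊥, ⊤, -a, by linarith, by simp, by simp, ?_, ?_⟩
    · intro u hu; rw [Submodule.mem_bot] at hu; subst hu; simp
    · intro u _; simp [dotProduct]
  · rw [if_pos h]
    refine ⟨⊤, ⊥, a, h, by simp, by simp, ?_, ?_⟩
    · intro u _; simp [dotProduct]
    · intro u hu; rw [Submodule.mem_bot] at hu; subst hu; simp

variable {κ : Type} [Fintype κ] [DecidableEq κ]

lemma HasSig.conj' {Q : (κ → ℝ) → ℝ} {k : ℕ} (h : HasSig Q k) (O : Matrix κ κ ℝ)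
    (h1 : O * Oᵀ = 1) (h2 : Oᵀ * O = 1) : HasSig (fun u => Q (Oᵀ *ᵥ u)) k := by
  obtain ⟨U, V, δ, hδ, hk, hd, hU, hV⟩ := h
  let Ψ : (κ → ℝ) ≃ₗ[ℝ] (κ → ℝ) := LinearEquiv.ofLinearMap (Matrix.mulVecLin O) (Matrix.mulVecLin Oᵀ)
    (by rw [← mulVecLin_mul, h1, mulVecLin_one]) (by rw [← mulVecLin_mul, h2, mulVecLin_one])
  have hn : ∀ u, (O *ᵥ u) ⬝ᵥ (O *ᵥ u) = u ⬝ᵥ u := by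
    intro u
    have := q_mul Oᵀ O u
    rw [h2, q_one, transpose_transpose] at this
    exact this.symm
  have key : ∀ S : Submodule ℝ (κ → ℝ), Module.finrank ℝ (S.map Ψ.toLinearMap) = Module.finrank ℝ S :=
    fun S => LinearEquiv.finrank_map_eq Ψ S
  refine ⟨U.map Ψ.toLinearMap, V.map Ψ.toLinearMap, δ, hδ, by rw [key, hk], by rw [key, key, hd], ?_, ?_⟩
  · rintro _ ⟨u, hu, rfl⟩
    change δ * ((O *ᵥ u) ⬝ᵥ (O *ᵥ u)) ≤ Q (Oᵀ *ᵥ (O *ᵥ u))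
    rw [hn, mulVec_mulVec, h2, one_mulVec]; exact hU u hu
  · rintro _ ⟨u, hu, rfl⟩
    change Q (Oᵀ *ᵥ (O *ᵥ u)) ≤ -δ * ((O *ᵥ u) ⬝ᵥ (O *ᵥ u))
    rw [hn, mulVec_mulVec, h2, one_mulVec]; exact hV u hu

lemma exists_diag (L : Matrix κ κ ℝ) (hL : Lᵀ = L) : ∃ (O : Matrix κ κ ℝ) (d : κ → ℝ),
    O * Oᵀ = 1 ∧ Oᵀ * O = 1 ∧ L = O * diagonal d * Oᵀ := by
  have hH : L.IsHermitian := by rw [IsHermitian, conjTranspose_eq_transpose_of_trivial, hL]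
  refine ⟨hH.eigenvectorUnitary, hH.eigenvalues, ?_, ?_, ?_⟩
  · have := Unitary.mul_star_self_of_mem hH.eigenvectorUnitary.2
    simpa [star_eq_conjTranspose] using this
  · have := Unitary.star_mul_self_of_mem hH.eigenvectorUnitary.2
    simpa [star_eq_conjTranspose] using this
  · have := hH.spectral_theorem
    conv_lhs => rw [this]
    simp [Unitary.conjStarAlgAut_apply, star_eq_conjTranspose]

lemma hasSig_diag (d : κ → ℝ) (hd : ∀ i, d i ≠ 0) :
    HasSig (q (diagonal d)) (∑ i, if 0 < d i then 1 else 0) := by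
  refine HasSig.blocks (Equiv.prodPUnit κ).symm _ (fun i v => d i * (v () * v ())) _ ?_
    (fun i => hasSig_unit _ (hd i))
  intro u
  simp only [q, mulVec_diagonal, dotProduct]
  exact Finset.sum_congr rfl fun i _ => by simp; ring

lemma exists_sig (L : Matrix κ κ ℝ) (hL : Lᵀ = L) (hi : ∀ u, L *ᵥ u = 0 → u = 0) :
    (∃ k, HasSig (q L) k) ∧ ∀ K₁ K₂ : Matrix κ κ ℝ, K₁ * K₁ = -1 → K₂ * K₂ = -1 →
      K₁ * K₂ = -(K₂ * K₁) → K₁ * L = L * K₁ → K₂ * L = L * K₂ →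
      ∃ k, HasSig (q L) k ∧ 4 ∣ k := by
  obtain ⟨O, d, h1, h2, rfl⟩ := exists_diag L hL
  have hd : ∀ i, d i ≠ 0 := by
    intro i h0
    have h3 := hi (O *ᵥ Pi.single i 1) (by
      rw [mulVec_mulVec, mul_assoc, h2, mul_one, ← mulVec_mulVec]
      have : diagonal d *ᵥ Pi.single i 1 = 0 := by
        ext j
        rw [mulVec_diagonal]
        rcases eq_or_ne j i with rfl | hj
        · simp [h0]
        · simp [hj]
      rw [this, mulVec_zero])
    have h4 : Oᵀ *ᵥ (O *ᵥ Pi.single i (1:ℝ)) = 0 := by rw [h3, mulVec_zero]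
    rw [mulVec_mulVec, h2, one_mulVec] at h4
    have := congrFun h4 i
    simp at this
  have hs : HasSig (q (O * diagonal d * Oᵀ)) (∑ i, if 0 < d i then 1 else 0) := by
    have := (hasSig_diag d hd).conj' O h1 h2
    convert this using 2 with u
    rw [mul_assoc, q_mul, q, ← mulVec_mulVec]
  refine ⟨⟨_, hs⟩, fun K₁ K₂ hK1 hK2 hK12 hc1 hc2 => ⟨_, hs, ?_⟩⟩
  have comm : ∀ K : Matrix κ κ ℝ, K * (O * diagonal d * Oᵀ) = (O * diagonal d * Oᵀ) * K →
      ∀ i j, d i ≠ d j → (Oᵀ * K * O) i j = 0 := by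
    intro K hK i j hij
    have h5 : (Oᵀ * K * O) * diagonal d = diagonal d * (Oᵀ * K * O) := by
      calc (Oᵀ * K * O) * diagonal d = Oᵀ * (K * (O * diagonal d * Oᵀ)) * O := by
            simp only [mul_assoc, h2, mul_one]
        _ = (Oᵀ * O) * diagonal d * (Oᵀ * K * O) := by rw [hK]; simp only [mul_assoc]
        _ = _ := by rw [h2, one_mul]
    have := congrFun (congrFun h5 i) j
    rw [mul_diagonal, diagonal_mul] at this
    have h6 : (d i - d j) * (Oᵀ * K * O) i j = 0 := by linarith
    rcases mul_eq_zero.1 h6 with h | h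
    · exact absurd (sub_eq_zero.1 h) hij
    · exact h
  have hconj : ∀ A B : Matrix κ κ ℝ, (Oᵀ * A * O) * (Oᵀ * B * O) = Oᵀ * (A * B) * O := by
    intro A B
    calc _ = Oᵀ * A * (O * Oᵀ) * B * O := by simp only [mul_assoc]
      _ = _ := by rw [h1, mul_one]; simp only [mul_assoc]
  let r : Matrix κ κ ℝ → Matrix {i // 0 < d i} {i // 0 < d i} ℝ := fun A =>
    (Oᵀ * A * O).submatrix (fun i => i.1) (fun i => i.1)
  have hr : ∀ A B : Matrix κ κ ℝ, B * (O * diagonal d * Oᵀ) = (O * diagonal d * Oᵀ) * B →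
      r A * r B = r (A * B) := by
    intro A B hB
    ext i j
    simp only [r, submatrix_apply, ← hconj, mul_apply (M := (Oᵀ * A * O).submatrix _ _),
      mul_apply (M := (Oᵀ * A * O))]
    rw [← Fintype.sum_subtype_add_sum_subtype (fun i => 0 < d i)
      (fun l => (Oᵀ * A * O) i.1 l * (Oᵀ * B * O) l j.1)]
    rw [Finset.sum_eq_zero (s := (Finset.univ : Finset {x // ¬ 0 < d x})), add_zero]
    intro l _
    rw [comm B hB l.1 j.1 (fun h => l.2 (h ▸ j.2)), mul_zero]
  have hr1 : r (-1) = -1 := by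
    ext i j
    simp [r, h2, one_apply, Subtype.ext_iff]
  have hrn : ∀ A, r (-A) = - r A := by
    intro A; ext i j; simp [r]
  have := four_dvd_of_quat (r K₁) (r K₂) (by rw [hr _ _ hc1, hK1, hr1]) (by rw [hr _ _ hc2, hK2, hr1])
    (by rw [hr _ _ hc2, hr _ _ hc1, hK12, hrn])
  rwa [Fintype.card_subtype, Finset.card_filter] at this

/-- affine homotopy invariance -/
lemma sig_path (A B : Matrix κ κ ℝ) (hA : Aᵀ = A) (hB : Bᵀ = B)
    (hi : ∀ t : ℝ, 0 ≤ t → t ≤ 1 → ∀ u, (A + t • B) *ᵥ u = 0 → u = 0) (k : ℕ)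
    (hk : HasSig (q A) k) : HasSig (q (A + B)) k := by
  obtain ⟨C, hC0, hC⟩ := exists_bound B
  have loc : ∀ t : ℝ, 0 ≤ t → t ≤ 1 → ∃ ε > 0, ∃ k', ∀ s, |s - t| < ε → HasSig (q (A + s • B)) k' := by
    intro t h0 h1
    obtain ⟨k', hk'⟩ := (exists_sig (A + t • B) (by simp [hA, hB]) (hi t h0 h1)).1
    obtain ⟨ε, hε, h⟩ := hk'.stable
    refine ⟨ε / (C + 1), by positivity, k', fun s hs => h _ fun u => ?_⟩
    rw [q_add, q_add, q_smul, q_smul, show q A u + s * q B u - (q A u + t * q B u) = (s - t) * q B u by ring,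
      abs_mul]
    have h3 := hC u
    have h4 := nsq_nonneg u
    have h5 : |s - t| * C ≤ ε := by
      rw [lt_div_iff₀ (by positivity)] at hs
      nlinarith [abs_nonneg (s - t)]
    calc |s - t| * |q B u| ≤ |s - t| * (C * (u ⬝ᵥ u)) := mul_le_mul_of_nonneg_left h3 (abs_nonneg _)
      _ = (|s - t| * C) * (u ⬝ᵥ u) := by ring
      _ ≤ _ := mul_le_mul_of_nonneg_right h5 h4
  let f : unitInterval → Prop := fun t => HasSig (q (A + (t : ℝ) • B)) k
  have hf : IsLocallyConstant f := by
    rw [IsLocallyConstant.iff_eventually_eq]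
    intro t
    obtain ⟨ε, hε, k', h⟩ := loc t t.2.1 t.2.2
    filter_upwards [Metric.ball_mem_nhds t hε] with s hs
    have h1 := h t (by simpa using hε)
    have h2 := h s (by simpa [Subtype.dist_eq, Real.dist_eq] using hs)
    have e1 : f t ↔ k = k' := ⟨fun h' => h'.unique h1, fun h' => by subst h'; exact h1⟩
    have e2 : f s ↔ k = k' := ⟨fun h' => h'.unique h2, fun h' => by subst h'; exact h2⟩
    exact propext (e2.trans e1.symm)
  have h01 : f 0 = f 1 := hf.apply_eq_of_isPreconnected isPreconnected_univ (Set.mem_univ _) (Set.mem_univ _)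
  have h0 : f 0 := by simpa [f] using hk
  rw [h01] at h0
  simpa [f] using h0
end HR

open Matrix
set_option linter.all false
set_option linter.unusedSectionVars false
set_option linter.unusedSimpArgs false
namespace HR

section osc1
variable (M : ℕ)
noncomputable def a1 : Matrix (Fin M) (Fin M) ℝ :=
  of fun k l => if (l : ℕ) = k + 1 then Real.sqrt l else 0
noncomputable def X1 : Matrix (Fin M) (Fin M) ℝ := a1 M + (a1 M)ᵀ
noncomputable def D1 : Matrix (Fin M) (Fin M) ℝ := a1 M - (a1 M)ᵀ
noncomputable def N1 : Matrix (Fin M) (Fin M) ℝ := diagonal fun k => ((k : ℕ) : ℝ)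
noncomputable def T1 : Matrix (Fin M) (Fin M) ℝ := diagonal fun k => if (k : ℕ) + 1 = M then 1 else 0

lemma X1t : (X1 M)ᵀ = X1 M := by simp [X1, add_comm]
lemma D1t : (D1 M)ᵀ = -D1 M := by simp [D1]
lemma N1t : (N1 M)ᵀ = N1 M := by simp [N1]
lemma T1t : (T1 M)ᵀ = T1 M := by simp [T1]

lemma ata : (a1 M)ᵀ * a1 M = N1 M := by
  ext k l
  simp only [mul_apply, transpose_apply, a1, of_apply, N1, diagonal_apply]
  by_cases hkl : k = l
  · subst hkl
    rw [if_pos rfl]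
    by_cases h0 : (k : ℕ) = 0
    · rw [Finset.sum_eq_zero, h0]; · simp
      intro m _; rw [if_neg (by omega)]; simp
    · rw [Finset.sum_eq_single (⟨k - 1, by omega⟩ : Fin M)]
      · rw [if_pos (by simp; omega)]; exact Real.mul_self_sqrt (by positivity)
      · intro m _ hm
        rw [if_neg]; · simp
        intro h; apply hm; ext; simp; omega
      · simp
  · rw [if_neg hkl, Finset.sum_eq_zero]
    intro m _
    by_cases h1 : (k : ℕ) = m + 1
    · rw [if_neg (c := (l : ℕ) = m + 1)]; · simp
      intro h; apply hkl; ext; omega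
    · rw [if_neg h1]; simp

lemma aat : a1 M * (a1 M)ᵀ = N1 M + 1 - (M : ℝ) • T1 M := by
  ext k l
  simp only [mul_apply, transpose_apply, a1, of_apply, N1, T1, Matrix.sub_apply, Matrix.add_apply, Matrix.smul_apply,
    diagonal_apply, one_apply]
  by_cases hkl : k = l
  · subst hkl
    simp only [if_true]
    by_cases h0 : (k : ℕ) + 1 = M
    · rw [Finset.sum_eq_zero, if_pos h0]
      · have : ((k : ℕ) : ℝ) + 1 = M := by exact_mod_cast h0
        simp; linarith
      intro m _; rw [if_neg (by omega)]; simp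
    · rw [Finset.sum_eq_single (⟨k + 1, by omega⟩ : Fin M)]
      · rw [if_pos rfl, if_neg h0, Real.mul_self_sqrt (by positivity)]; simp
      · intro m _ hm
        rw [if_neg]; · simp
        intro h; apply hm; ext; simp; omega
      · simp
  · simp only [if_neg hkl]
    rw [Finset.sum_eq_zero]; · simp
    intro m _
    by_cases h1 : (m : ℕ) = k + 1
    · rw [if_neg (c := (m : ℕ) = l + 1)]; · simp
      intro h; apply hkl; ext; omega
    · rw [if_neg h1]; simp

lemma aN : a1 M * N1 M - N1 M * a1 M = a1 M := by
  ext k l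
  simp only [N1, Matrix.sub_apply, mul_diagonal, diagonal_mul, a1, of_apply]
  by_cases h : (l : ℕ) = k + 1
  · rw [if_pos h, h]; push_cast; ring
  · rw [if_neg h]; ring

lemma atN : (a1 M)ᵀ * N1 M - N1 M * (a1 M)ᵀ = -(a1 M)ᵀ := by
  have := congrArg transpose (aN M)
  simp only [transpose_sub, transpose_mul, N1t] at this
  linear_combination (norm := abel) -this

lemma XN : X1 M * N1 M - N1 M * X1 M = D1 M := by
  have h1 := aN M; have h2 := atN M
  rw [X1, D1]; linear_combination (norm := noncomm_ring) h1 + h2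
lemma DN : D1 M * N1 M - N1 M * D1 M = X1 M := by
  have h1 := aN M; have h2 := atN M
  rw [X1, D1]; linear_combination (norm := noncomm_ring) h1 - h2
lemma DX : D1 M * X1 M - X1 M * D1 M = (2:ℝ) • (1 - (M : ℝ) • T1 M) := by
  have : (2:ℝ) • (1 - (M : ℝ) • T1 M) = (2:ℝ) • (a1 M * (a1 M)ᵀ - (a1 M)ᵀ * a1 M) := by
    rw [aat, ata]; congr 1; abel
  rw [this, X1, D1, two_smul]; noncomm_ring
lemma XXDD : X1 M * X1 M - D1 M * D1 M = (2:ℝ) • ((2:ℝ) • N1 M + 1 - (M : ℝ) • T1 M) := by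
  have : (2:ℝ) • ((2:ℝ) • N1 M + 1 - (M : ℝ) • T1 M) = (2:ℝ) • (a1 M * (a1 M)ᵀ + (a1 M)ᵀ * a1 M) := by
    rw [aat, ata, two_smul ℝ (N1 M)]; congr 1; abel
  rw [this, X1, D1, two_smul]; noncomm_ring
lemma X1_zero (k l : Fin M) (h : (-1 : ℝ) ^ (k : ℕ) ≠ -(-1 : ℝ) ^ (l : ℕ)) : X1 M k l = 0 := by
  simp only [X1, Matrix.add_apply, transpose_apply, a1, of_apply]
  rw [if_neg, if_neg]; · simp
  · intro h'; apply h; rw [h', pow_succ]; ring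
  · intro h'; apply h; rw [h', pow_succ]; ring
lemma D1_zero (k l : Fin M) (h : (-1 : ℝ) ^ (k : ℕ) ≠ -(-1 : ℝ) ^ (l : ℕ)) : D1 M k l = 0 := by
  simp only [D1, Matrix.sub_apply, transpose_apply, a1, of_apply]
  rw [if_neg, if_neg]; · simp
  · intro h'; apply h; rw [h', pow_succ]; ring
  · intro h'; apply h; rw [h', pow_succ]; ring
end osc1

section model
open Kronecker
variable {n M : ℕ} {ι : Type} [Fintype ι] [DecidableEq ι]

/-- product operator -/
def tens (A : Fin n → Matrix (Fin M) (Fin M) ℝ) : Matrix (Fin n → Fin M) (Fin n → Fin M) ℝ :=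
  of fun α β => ∏ j, A j (α j) (β j)

lemma tens_mul (A B : Fin n → Matrix (Fin M) (Fin M) ℝ) : tens (A * B) = tens A * tens B := by
  ext α β
  simp only [tens, of_apply, mul_apply, Pi.mul_apply, ← Finset.prod_mul_distrib]
  rw [Finset.prod_univ_sum]
  simp
lemma tens_one : tens (1 : Fin n → Matrix (Fin M) (Fin M) ℝ) = 1 := by
  ext α β
  simp only [tens, of_apply, Pi.one_apply, one_apply]
  by_cases h : α = β
  · simp [h]
  · rw [if_neg h]
    obtain ⟨j, hj⟩ := Function.ne_iff.1 h
    exact Finset.prod_eq_zero (Finset.mem_univ j) (if_neg hj)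
lemma tens_tr (A : Fin n → Matrix (Fin M) (Fin M) ℝ) : (tens A)ᵀ = tens (fun j => (A j)ᵀ) := rfl

def lft (i : Fin n) (A : Matrix (Fin M) (Fin M) ℝ) : Matrix (Fin n → Fin M) (Fin n → Fin M) ℝ :=
  tens (Pi.mulSingle i A)

lemma lft_apply (i : Fin n) (A : Matrix (Fin M) (Fin M) ℝ) (α β) :
    lft i A α β = A (α i) (β i) * ∏ j ∈ Finset.univ.erase i, (1 : Matrix (Fin M) (Fin M) ℝ) (α j) (β j) := by
  rw [lft, tens, of_apply, ← Finset.mul_prod_erase _ _ (Finset.mem_univ i), Pi.mulSingle_eq_same]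
  congr 1
  refine Finset.prod_congr rfl fun j hj => ?_
  rw [Pi.mulSingle_eq_of_ne (Finset.ne_of_mem_erase hj)]

lemma lft_mul (i : Fin n) (A B : Matrix (Fin M) (Fin M) ℝ) : lft i (A * B) = lft i A * lft i B := by
  rw [lft, Pi.mulSingle_mul, tens_mul]; rfl
lemma lft_one (i : Fin n) : lft i (1 : Matrix (Fin M) (Fin M) ℝ) = 1 := by
  rw [lft, Pi.mulSingle_one, tens_one]
lemma lft_add (i : Fin n) (A B : Matrix (Fin M) (Fin M) ℝ) : lft i (A + B) = lft i A + lft i B := by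
  ext α β; simp only [lft_apply, Matrix.add_apply]; ring
lemma lft_smul (i : Fin n) (c : ℝ) (A : Matrix (Fin M) (Fin M) ℝ) : lft i (c • A) = c • lft i A := by
  ext α β; simp only [lft_apply, Matrix.smul_apply, smul_eq_mul]; ring
lemma lft_tr (i : Fin n) (A : Matrix (Fin M) (Fin M) ℝ) : (lft i A)ᵀ = lft i Aᵀ := by
  ext α β; simp only [lft_apply, transpose_apply]
  congr 1; refine Finset.prod_congr rfl fun j _ => ?_; simp only [one_apply, eq_comm]
lemma lft_comm {i j : Fin n} (h : i ≠ j) (A B : Matrix (Fin M) (Fin M) ℝ) :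
    lft i A * lft j B = lft j B * lft i A := by
  rw [lft, lft, ← tens_mul, ← tens_mul, (Pi.mulSingle_commute (f := fun _ => Matrix (Fin M) (Fin M) ℝ) h A B).eq]
lemma lft_diag (i : Fin n) (d : Fin M → ℝ) : lft i (diagonal d) = diagonal fun α => d (α i) := by
  ext α β
  rw [lft_apply]
  by_cases h : α = β
  · subst h; simp
  · rw [diagonal_apply_ne _ h]
    obtain ⟨j, hj⟩ := Function.ne_iff.1 h
    by_cases hji : j = i
    · subst hji; simp [diagonal_apply_ne _ hj]
    · rw [Finset.prod_eq_zero (i := j) (s := Finset.univ.erase i) (f := fun j => (1 : Matrix (Fin M) (Fin M) ℝ) (α j) (β j)) (by simp [hji]) (one_apply_ne hj), mul_zero]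

/-- lift of an operator on the i-th oscillator -/
def J (ι : Type) [DecidableEq ι] (i : Fin n) (A : Matrix (Fin M) (Fin M) ℝ) :
    Matrix ((Fin n → Fin M) × ι) ((Fin n → Fin M) × ι) ℝ := lft i A ⊗ₖ (1 : Matrix ι ι ℝ)
/-- lift of an internal operator -/
def I (n M : ℕ) (S : Matrix ι ι ℝ) : Matrix ((Fin n → Fin M) × ι) ((Fin n → Fin M) × ι) ℝ :=
  (1 : Matrix (Fin n → Fin M) (Fin n → Fin M) ℝ) ⊗ₖ S

lemma J_mul (i : Fin n) (A B : Matrix (Fin M) (Fin M) ℝ) : J ι i (A * B) = J ι i A * J ι i B := by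
  rw [J, J, J, ← mul_kronecker_mul, lft_mul, one_mul]
lemma J_one (i : Fin n) : J ι i (1 : Matrix (Fin M) (Fin M) ℝ) = 1 := by
  rw [J, lft_one, one_kronecker_one]
lemma J_add (i : Fin n) (A B : Matrix (Fin M) (Fin M) ℝ) : J ι i (A + B) = J ι i A + J ι i B := by
  rw [J, lft_add, add_kronecker]; rfl
lemma J_smul (i : Fin n) (c : ℝ) (A : Matrix (Fin M) (Fin M) ℝ) : J ι i (c • A) = c • J ι i A := by
  rw [J, lft_smul, smul_kronecker]; rfl
lemma J_neg (i : Fin n) (A : Matrix (Fin M) (Fin M) ℝ) : J ι i (-A) = - J ι i A := by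
  have := J_smul (ι := ι) i (-1) A; simpa using this
lemma J_sub (i : Fin n) (A B : Matrix (Fin M) (Fin M) ℝ) : J ι i (A - B) = J ι i A - J ι i B := by
  rw [sub_eq_add_neg, J_add, J_neg, ← sub_eq_add_neg]
lemma J_tr (i : Fin n) (A : Matrix (Fin M) (Fin M) ℝ) : (J ι i A)ᵀ = J ι i Aᵀ := by
  rw [J, ← kroneckerMap_transpose, lft_tr, transpose_one]; rfl
lemma J_comm {i j : Fin n} (h : i ≠ j) (A B : Matrix (Fin M) (Fin M) ℝ) :
    Commute (J ι i A) (J ι j B) := by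
  rw [Commute, SemiconjBy, J, J, ← mul_kronecker_mul, ← mul_kronecker_mul, lft_comm h]
lemma J_comm' (i j : Fin n) (A : Matrix (Fin M) (Fin M) ℝ) :
    Commute (J ι i A) (J ι j A) := by
  rcases eq_or_ne i j with rfl | h
  · exact Commute.refl _
  · exact J_comm h A A
lemma J_diag (i : Fin n) (d : Fin M → ℝ) : J ι i (diagonal d) = diagonal fun k => d (k.1 i) := by
  rw [J, lft_diag, ← diagonal_one, diagonal_kronecker_diagonal]; simp

lemma I_mul (A B : Matrix ι ι ℝ) : I n M (A * B) = I n M A * I n M B := by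
  rw [I, I, I, ← mul_kronecker_mul, one_mul]
lemma I_one : I n M (1 : Matrix ι ι ℝ) = 1 := by rw [I, one_kronecker_one]
lemma I_add (A B : Matrix ι ι ℝ) : I n M (A + B) = I n M A + I n M B := by
  rw [I, kronecker_add]; rfl
lemma I_smul (c : ℝ) (A : Matrix ι ι ℝ) : I n M (c • A) = c • I n M A := by
  rw [I, kronecker_smul]; rfl
lemma I_neg (A : Matrix ι ι ℝ) : I n M (-A) = - I n M A := by
  have := I_smul (n := n) (M := M) (-1) A; simpa using this
lemma I_sub (A B : Matrix ι ι ℝ) : I n M (A - B) = I n M A - I n M B := by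
  rw [sub_eq_add_neg, I_add, I_neg, ← sub_eq_add_neg]
lemma I_zero : I n M (0 : Matrix ι ι ℝ) = 0 := by rw [I, kronecker_zero]
lemma I_tr (A : Matrix ι ι ℝ) : (I n M A)ᵀ = I n M Aᵀ := by
  rw [I, ← kroneckerMap_transpose, transpose_one]; rfl
lemma IJ (S : Matrix ι ι ℝ) (i : Fin n) (A : Matrix (Fin M) (Fin M) ℝ) :
    Commute (I n M S) (J ι i A) := by
  rw [Commute, SemiconjBy, I, J, ← mul_kronecker_mul, ← mul_kronecker_mul]; simp

/-- functions of the multi-index act diagonally -/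
def dg (ι : Type) [DecidableEq ι] (f : (Fin n → Fin M) → ℝ) :
    Matrix ((Fin n → Fin M) × ι) ((Fin n → Fin M) × ι) ℝ := diagonal fun k => f k.1
lemma dg_I (f : (Fin n → Fin M) → ℝ) (S : Matrix ι ι ℝ) : Commute (dg ι f) (I n M S) := by
  have : dg ι f = (diagonal f) ⊗ₖ (1 : Matrix ι ι ℝ) := by
    rw [← diagonal_one, diagonal_kronecker_diagonal]; simp [dg]
  rw [this, Commute, SemiconjBy, I, ← mul_kronecker_mul, ← mul_kronecker_mul]; simp
lemma dg_mul (f g : (Fin n → Fin M) → ℝ) : dg ι f * dg ι g = dg ι (fun α => f α * g α) := by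
  rw [dg, dg, diagonal_mul_diagonal]; rfl
lemma dg_comm (f g : (Fin n → Fin M) → ℝ) : Commute (dg ι f) (dg ι g) := by
  rw [Commute, SemiconjBy, dg_mul, dg_mul]; simp only [mul_comm]
lemma dg_tr (f : (Fin n → Fin M) → ℝ) : (dg ι f)ᵀ = dg ι f := diagonal_transpose _

/-- parity -/
def sgn (α : Fin n → Fin M) : ℝ := ∏ j, (-1 : ℝ) ^ (α j : ℕ)
lemma sgn_sq (α : Fin n → Fin M) : sgn α * sgn α = 1 := by
  rw [sgn, ← Finset.prod_mul_distrib]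
  refine Finset.prod_eq_one fun j _ => ?_
  rw [← mul_pow]; simp
def Rr (n M : ℕ) (ι : Type) [DecidableEq ι] :
    Matrix ((Fin n → Fin M) × ι) ((Fin n → Fin M) × ι) ℝ := dg ι sgn
lemma Rr_sq : Rr n M ι * Rr n M ι = 1 := by
  rw [Rr, dg_mul]; simp only [sgn_sq]; exact diagonal_one
lemma Rr_tr : (Rr n M ι)ᵀ = Rr n M ι := dg_tr _
lemma RJ (i : Fin n) (A : Matrix (Fin M) (Fin M) ℝ)
    (hA : ∀ k l : Fin M, (-1 : ℝ) ^ (k : ℕ) ≠ -(-1 : ℝ) ^ (l : ℕ) → A k l = 0) :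
    Rr n M ι * J ι i A = -(J ι i A * Rr n M ι) := by
  ext ⟨α, w⟩ ⟨β, w'⟩
  simp only [Rr, dg, diagonal_mul, Matrix.neg_apply, mul_diagonal, J, kronecker_apply, lft_apply]
  by_cases h : ∀ j ∈ Finset.univ.erase i, α j = β j
  · by_cases h2 : (-1 : ℝ) ^ (α i : ℕ) = -(-1 : ℝ) ^ (β i : ℕ)
    · have : sgn α = - sgn β := by
        rw [sgn, sgn, ← Finset.mul_prod_erase _ _ (Finset.mem_univ i),
          ← Finset.mul_prod_erase _ (fun j => (-1 : ℝ) ^ (β j : ℕ)) (Finset.mem_univ i), h2,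
          Finset.prod_congr rfl (fun j hj => by rw [h j hj])]
        ring
      rw [this]; ring
    · rw [hA _ _ h2]; ring
  · push Not at h
    obtain ⟨j, hj, hne⟩ := h
    rw [Finset.prod_eq_zero (f := fun j => (1 : Matrix (Fin M) (Fin M) ℝ) (α j) (β j)) hj (one_apply_ne hne)]; ring
end model
end HR

open Matrix
set_option linter.all false
set_option linter.unusedSectionVars false
set_option linter.unusedSimpArgs false
namespace HR
section
open Kronecker
variable {n M : ℕ} {ι : Type} [Fintype ι] [DecidableEq ι]

lemma I_mulVec (S : Matrix ι ι ℝ) (u : (Fin n → Fin M) × ι → ℝ) (α w) :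
    (I n M S *ᵥ u) (α, w) = (S *ᵥ (fun i => u (α, i))) w := by
  simp only [I, mulVec, dotProduct, kronecker_apply, Fintype.sum_prod_type, one_apply]
  rw [Finset.sum_eq_single α]
  · simp
  · intro b _ hb; simp [hb.symm]
  · simp

lemma dg_mulVec (f : (Fin n → Fin M) → ℝ) (u : (Fin n → Fin M) × ι → ℝ) (k) :
    (dg ι f *ᵥ u) k = f k.1 * u k := by
  simp [dg, mulVec_diagonal]

lemma dot_prod (u v : (Fin n → Fin M) × ι → ℝ) :
    u ⬝ᵥ v = ∑ α, (fun i => u (α, i)) ⬝ᵥ (fun i => v (α, i)) := by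
  simp only [dotProduct, Fintype.sum_prod_type]

lemma dot_isom {κ : Type} [Fintype κ] [DecidableEq κ] (O : Matrix κ κ ℝ) (h : Oᵀ * O = 1) (u : κ → ℝ) :
    (O *ᵥ u) ⬝ᵥ (O *ᵥ u) = u ⬝ᵥ u := by
  have := q_mul Oᵀ O u
  rw [h, q_one, transpose_transpose] at this
  exact this.symm

lemma phi_pos (Φ : Fin n → Matrix ι ι ℝ) (c : ℝ)
    (hΦ : ∀ (y : Fin n → ℝ) (w : ι → ℝ), c * (∑ i, y i * y i) * (w ⬝ᵥ w) ≤
      ((∑ i, y i • Φ i) *ᵥ w) ⬝ᵥ ((∑ i, y i • Φ i) *ᵥ w))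
    (u : (Fin n → Fin M) × ι → ℝ) :
    c * ∑ i, (J ι i (X1 M) *ᵥ u) ⬝ᵥ (J ι i (X1 M) *ᵥ u) ≤
      ((∑ i, I n M (Φ i) * J ι i (X1 M)) *ᵥ u) ⬝ᵥ ((∑ i, I n M (Φ i) * J ι i (X1 M)) *ᵥ u) := by
  obtain ⟨O, d, h1, h2, hX⟩ := exists_diag (X1 M) (X1t M)
  let V : Matrix ((Fin n → Fin M) × ι) ((Fin n → Fin M) × ι) ℝ := tens (fun _ => O) ⊗ₖ (1 : Matrix ι ι ℝ)
  have hV : Vᵀ * V = 1 := by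
    simp only [V]
    rw [← kroneckerMap_transpose, ← mul_kronecker_mul, tens_tr, ← tens_mul, transpose_one, one_mul]
    have : (fun _ : Fin n => Oᵀ) * (fun _ : Fin n => O) = 1 := by
      funext j; simp [h2]
    rw [this, tens_one, one_kronecker_one]
  have hJ : ∀ i, J ι i (X1 M) = V * dg ι (fun α => d (α i)) * Vᵀ := by
    intro i
    have e1 : dg ι (fun α : Fin n → Fin M => d (α i)) = J ι i (diagonal d) := by rw [J_diag]; rfl
    rw [e1]
    simp only [V, J]
    rw [← kroneckerMap_transpose, ← mul_kronecker_mul, ← mul_kronecker_mul, tens_tr, lft, lft,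
      ← tens_mul, ← tens_mul, transpose_one, one_mul, one_mul]
    congr 2
    funext j
    rcases eq_or_ne j i with rfl | h
    · simp [hX]
    · simp [Pi.mulSingle_eq_of_ne h, h1]
  have hI : ∀ S : Matrix ι ι ℝ, I n M S * V = V * I n M S := by
    intro S
    simp only [V, I]
    rw [← mul_kronecker_mul, ← mul_kronecker_mul]; simp
  set v := Vᵀ *ᵥ u with hv
  have hJu : ∀ i, J ι i (X1 M) *ᵥ u = V *ᵥ (dg ι (fun α => d (α i)) *ᵥ v) := by
    intro i; rw [hJ, hv]; simp only [mulVec_mulVec, mul_assoc]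
  have hSu : (∑ i, I n M (Φ i) * J ι i (X1 M)) *ᵥ u =
      V *ᵥ ((∑ i, I n M (Φ i) * dg ι (fun α => d (α i))) *ᵥ v) := by
    rw [hv, mulVec_mulVec, mulVec_mulVec, Finset.mul_sum, Finset.sum_mul]
    congr 1
    refine Finset.sum_congr rfl fun i _ => ?_
    rw [hJ, ← mul_assoc, ← mul_assoc, ← mul_assoc, hI]
  rw [hSu, dot_isom V hV]
  simp only [hJu, dot_isom V hV]
  have h3 : ∀ α, (fun w => ((∑ i, I n M (Φ i) * dg ι (fun α => d (α i))) *ᵥ v) (α, w)) =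
      (∑ i, d (α i) • Φ i) *ᵥ (fun w => v (α, w)) := by
    intro α; funext w
    rw [sum_mulVec, sum_mulVec, Finset.sum_apply, Finset.sum_apply]
    refine Finset.sum_congr rfl fun i _ => ?_
    rw [← mulVec_mulVec, I_mulVec]
    simp only [dg_mulVec]
    rw [smul_mulVec]
    have : (fun w => d (α i) * v (α, w)) = d (α i) • (fun w => v (α, w)) := rfl
    rw [this, mulVec_smul]
  rw [dot_prod]
  simp only [h3]
  have h4 : ∑ i, (dg ι (fun α : Fin n → Fin M => d (α i)) *ᵥ v) ⬝ᵥ (dg ι (fun α => d (α i)) *ᵥ v) =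
      ∑ α : Fin n → Fin M, (∑ i, d (α i) * d (α i)) * ((fun w => v (α, w)) ⬝ᵥ (fun w => v (α, w))) := by
    simp only [dot_prod, dg_mulVec]
    rw [Finset.sum_comm]
    refine Finset.sum_congr rfl fun α _ => ?_
    rw [Finset.sum_mul]
    refine Finset.sum_congr rfl fun i _ => ?_
    simp only [dotProduct, Finset.mul_sum]
    refine Finset.sum_congr rfl fun w _ => ?_
    ring
  rw [h4, Finset.mul_sum]
  refine Finset.sum_le_sum fun α _ => ?_
  have := hΦ (fun i => d (α i)) (fun w => v (α, w))
  linarith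
end
end HR

open Matrix
set_option linter.all false
set_option linter.unusedSectionVars false
set_option linter.unusedSimpArgs false
namespace HR
section
variable {n M : ℕ} {ι : Type} [Fintype ι] [DecidableEq ι]

lemma sum_antisymm {V : Type} [AddCommGroup V] [Module ℝ V] (g : Fin n → Fin n → V)
    (h : ∀ i j, i ≠ j → g i j = - g j i) : ∑ i, ∑ j, g i j = ∑ i, g i i := by
  have h1 : (2:ℝ) • ∑ i, ∑ j, g i j = (2:ℝ) • ∑ i, g i i := by
    rw [two_smul]
    nth_rewrite 2 [Finset.sum_comm]
    rw [← Finset.sum_add_distrib, Finset.smul_sum]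
    refine Finset.sum_congr rfl fun i _ => ?_
    rw [← Finset.sum_add_distrib, Finset.sum_eq_single i]
    · rw [two_smul]
    · intro j _ hj; rw [h j i hj]; simp
    · simp
  exact smul_right_injective V (two_ne_zero) h1

/-- Clifford data -/
structure Cliff (E Φ : Fin n → Matrix ι ι ℝ) : Prop where
  Et : ∀ i, (E i)ᵀ = -E i
  ee : ∀ i, E i * E i = -1
  ij : ∀ i j, i ≠ j → E i * E j = -(E j * E i)
  Pt : ∀ i, (Φ i)ᵀ = Φ i
  ep : ∀ i j, E i * Φ j = -(Φ j * E i)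

noncomputable def PP (M : ℕ) (E Φ : Fin n → Matrix ι ι ℝ) :
    Matrix ((Fin n → Fin M) × ι) ((Fin n → Fin M) × ι) ℝ :=
  ∑ i, (I n M (E i) * J ι i (D1 M) + I n M (Φ i) * J ι i (X1 M))
noncomputable def tot (α : Fin n → Fin M) : ℝ := ∑ i, ((α i : ℕ) : ℝ)
noncomputable def TT (n M : ℕ) (ι : Type) [DecidableEq ι] :
    Matrix ((Fin n → Fin M) × ι) ((Fin n → Fin M) × ι) ℝ := dg ι tot
noncomputable def LL (M : ℕ) (E Φ : Fin n → Matrix ι ι ℝ) (d0 : ℝ) :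
    Matrix ((Fin n → Fin M) × ι) ((Fin n → Fin M) × ι) ℝ :=
  PP M E Φ + (d0 • 1 - TT n M ι) * Rr n M ι

lemma TT_eq : TT n M ι = ∑ j, J ι j (N1 M) := by
  simp only [TT, dg, N1, J_diag]
  ext k l
  rw [Matrix.sum_apply]
  by_cases h : k = l
  · subst h; simp [tot]
  · simp [diagonal_apply_ne _ h]

lemma J_TT (i : Fin n) (A : Matrix (Fin M) (Fin M) ℝ) :
    J ι i A * TT n M ι - TT n M ι * J ι i A = J ι i (A * N1 M - N1 M * A) := by
  rw [TT_eq, Finset.mul_sum, Finset.sum_mul, ← Finset.sum_sub_distrib, Finset.sum_eq_single i]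
  · rw [J_sub, J_mul, J_mul]
  · intro j _ hj
    rw [(J_comm (ι := ι) hj.symm A (N1 M)).eq, sub_self]
  · simp

lemma PP_tr {E Φ : Fin n → Matrix ι ι ℝ} (h : Cliff E Φ) : (PP M E Φ)ᵀ = PP M E Φ := by
  rw [PP, transpose_sum]
  refine Finset.sum_congr rfl fun i _ => ?_
  rw [transpose_add, transpose_mul, transpose_mul, I_tr, I_tr, J_tr, J_tr, h.Et, h.Pt, D1t, X1t,
    I_neg, J_neg, neg_mul_neg, (IJ (E i) i (D1 M)).eq, (IJ (Φ i) i (X1 M)).eq]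

lemma R_PP (E Φ : Fin n → Matrix ι ι ℝ) : Rr n M ι * PP M E Φ = -(PP M E Φ * Rr n M ι) := by
  rw [PP, Finset.mul_sum, Finset.sum_mul, ← Finset.sum_neg_distrib]
  refine Finset.sum_congr rfl fun i _ => ?_
  have h1 := RJ (ι := ι) i (D1 M) (D1_zero M)
  have h2 := RJ (ι := ι) i (X1 M) (X1_zero M)
  have h3 : ∀ S : Matrix ι ι ℝ, Rr n M ι * I n M S = I n M S * Rr n M ι := fun S => (dg_I _ S).eq
  rw [mul_add, ← mul_assoc, ← mul_assoc, h3, h3, mul_assoc, mul_assoc, h1, h2]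
  noncomm_ring

lemma LL_tr {E Φ : Fin n → Matrix ι ι ℝ} (h : Cliff E Φ) (d0 : ℝ) : (LL M E Φ d0)ᵀ = LL M E Φ d0 := by
  rw [LL, transpose_add, PP_tr h, transpose_mul, Rr_tr, transpose_sub, TT, dg_tr, Rr]
  have := (dg_comm (ι := ι) (n := n) (M := M) sgn tot).eq
  simp only [mul_sub, sub_mul, this, transpose_smul, transpose_one]
  simp

lemma PP_TT (E Φ : Fin n → Matrix ι ι ℝ) : PP M E Φ * TT n M ι - TT n M ι * PP M E Φ =
    ∑ i, (I n M (E i) * J ι i (X1 M) + I n M (Φ i) * J ι i (D1 M)) := by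
  rw [PP, Finset.mul_sum, Finset.sum_mul, ← Finset.sum_sub_distrib]
  refine Finset.sum_congr rfl fun i _ => ?_
  have h3 : ∀ S : Matrix ι ι ℝ, TT n M ι * I n M S = I n M S * TT n M ι := fun S => (dg_I _ S).eq
  have h1 := J_TT (ι := ι) i (D1 M)
  have h2 := J_TT (ι := ι) i (X1 M)
  rw [DN] at h1; rw [XN] at h2
  rw [mul_add (TT n M ι), ← mul_assoc (TT n M ι), ← mul_assoc (TT n M ι), h3, h3]
  linear_combination (norm := noncomm_ring) I n M (E i) * h1 + I n M (Φ i) * h2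

lemma LL_sq (E Φ : Fin n → Matrix ι ι ℝ) (d0 : ℝ) : LL M E Φ d0 * LL M E Φ d0 =
    PP M E Φ * PP M E Φ + (d0 • 1 - TT n M ι) * (d0 • 1 - TT n M ι) -
    (∑ i, (I n M (E i) * J ι i (X1 M) + I n M (Φ i) * J ι i (D1 M))) * Rr n M ι := by
  rw [← PP_TT, LL]
  have h1 := R_PP (M := M) E Φ
  have h2 : Rr n M ι * TT n M ι = TT n M ι * Rr n M ι := (dg_comm sgn tot).eq
  have h3 := Rr_sq (n := n) (M := M) (ι := ι)
  set P := PP M E Φ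
  set T := TT n M ι
  set R := Rr n M ι
  set A : Matrix ((Fin n → Fin M) × ι) ((Fin n → Fin M) × ι) ℝ := d0 • 1 - T with hA
  have h4 : R * A = A * R := by rw [hA, mul_sub, sub_mul, h2]; simp
  have h5 : P * A - A * P = -(P * T - T * P) := by rw [hA, mul_sub, sub_mul]; simp
  calc (P + A * R) * (P + A * R) = P * P + A * (R * A) * R + P * A * R + A * (R * P) := by noncomm_ring
    _ = P * P + A * A * (R * R) + (P * A - A * P) * R := by rw [h4, h1]; noncomm_ring
    _ = _ := by rw [h3, h5]; noncomm_ring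

lemma PP_sq {E Φ : Fin n → Matrix ι ι ℝ} (h : Cliff E Φ) : PP M E Φ * PP M E Φ =
    -(∑ i, J ι i (D1 M) * J ι i (D1 M)) +
    (∑ i, I n M (Φ i) * J ι i (X1 M)) * (∑ i, I n M (Φ i) * J ι i (X1 M)) +
    (2 : ℝ) • ∑ i, I n M (E i * Φ i) * (1 - (M : ℝ) • J ι i (T1 M)) := by
  have hm : ∀ (S S' : Matrix ι ι ℝ) (i j : Fin n) (A B : Matrix (Fin M) (Fin M) ℝ),
      I n M S * J ι i A * (I n M S' * J ι j B) = I n M (S * S') * (J ι i A * J ι j B) := by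
    intro S S' i j A B
    rw [I_mul, ((IJ S' i A).symm).mul_mul_mul_comm]
  have e1 : (∑ i, I n M (E i) * J ι i (D1 M)) * (∑ i, I n M (E i) * J ι i (D1 M)) =
      -(∑ i, J ι i (D1 M) * J ι i (D1 M)) := by
    rw [Finset.sum_mul_sum]
    simp only [hm]
    rw [sum_antisymm]
    · rw [← Finset.sum_neg_distrib]
      refine Finset.sum_congr rfl fun i _ => ?_
      rw [h.ee, I_neg, I_one]; simp
    · intro i j hij
      rw [h.ij i j hij, I_neg, (J_comm' i j (D1 M)).eq, neg_mul]
  have e2 : (∑ i, I n M (E i) * J ι i (D1 M)) * (∑ i, I n M (Φ i) * J ι i (X1 M)) +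
      (∑ i, I n M (Φ i) * J ι i (X1 M)) * (∑ i, I n M (E i) * J ι i (D1 M)) =
      (2 : ℝ) • ∑ i, I n M (E i * Φ i) * (1 - (M : ℝ) • J ι i (T1 M)) := by
    rw [Finset.sum_mul_sum, Finset.sum_mul_sum]
    nth_rewrite 2 [Finset.sum_comm]
    simp only [hm]
    rw [← Finset.sum_add_distrib, Finset.smul_sum]
    refine Finset.sum_congr rfl fun i _ => ?_
    rw [← Finset.sum_add_distrib, Finset.sum_eq_single i]
    · have := congrArg (J ι i) (DX M)
      rw [J_sub, J_mul, J_mul, J_smul, J_sub, J_one, J_smul] at this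
      rw [← mul_smul_comm, ← this, show Φ i * E i = -(E i * Φ i) by rw [h.ep, neg_neg], I_neg]
      noncomm_ring
    · intro j _ hj
      rw [show Φ j * E i = -(E i * Φ j) by rw [h.ep, neg_neg], I_neg, (J_comm hj (X1 M) (D1 M)).eq]
      noncomm_ring
    · simp
  rw [PP, Finset.sum_add_distrib, ← e1, ← e2]
  noncomm_ring
end
end HR

open Matrix
set_option linter.all false
set_option linter.unusedSectionVars false
set_option linter.unusedSimpArgs false
namespace HR
section
variable {n M : ℕ} {ι : Type} [Fintype ι] [DecidableEq ι]

lemma I_norm_le (S : Matrix ι ι ℝ) (C : ℝ) (hS : ∀ w, (S *ᵥ w) ⬝ᵥ (S *ᵥ w) ≤ C * (w ⬝ᵥ w))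
    (u : (Fin n → Fin M) × ι → ℝ) : (I n M S *ᵥ u) ⬝ᵥ (I n M S *ᵥ u) ≤ C * (u ⬝ᵥ u) := by
  rw [dot_prod, dot_prod, Finset.mul_sum]
  refine Finset.sum_le_sum fun α _ => ?_
  simp only [I_mulVec]
  exact hS _

lemma Rr_isom (u : (Fin n → Fin M) × ι → ℝ) : (Rr n M ι *ᵥ u) ⬝ᵥ (Rr n M ι *ᵥ u) = u ⬝ᵥ u :=
  dot_isom _ (by rw [Rr_tr, Rr_sq]) u

lemma IE_isom {E Φ : Fin n → Matrix ι ι ℝ} (h : Cliff E Φ) (i) (u : (Fin n → Fin M) × ι → ℝ) :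
    (I n M (E i) *ᵥ u) ⬝ᵥ (I n M (E i) *ᵥ u) = u ⬝ᵥ u :=
  dot_isom _ (by rw [I_tr, ← I_mul, h.Et, neg_mul, h.ee, neg_neg, I_one]) u

lemma T1_sq : T1 M * T1 M = T1 M := by
  rw [T1, diagonal_mul_diagonal]; congr 1; funext k; split_ifs <;> simp

lemma LL_est {E Φ : Fin n → Matrix ι ι ℝ} (h : Cliff E Φ) (c Cb : ℝ) (hc : 0 < c) (hc1 : c ≤ 1)
    (hΦ : ∀ (y : Fin n → ℝ) (w : ι → ℝ), c * (∑ i, y i * y i) * (w ⬝ᵥ w) ≤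
      ((∑ i, y i • Φ i) *ᵥ w) ⬝ᵥ ((∑ i, y i • Φ i) *ᵥ w))
    (hCb : ∀ i w, (Φ i *ᵥ w) ⬝ᵥ (Φ i *ᵥ w) ≤ Cb * (w ⬝ᵥ w)) (d0 : ℝ) (u : (Fin n → Fin M) × ι → ℝ) :
    2 * c * q (TT n M ι) u + q ((d0 • 1 - TT n M ι) * (d0 • 1 - TT n M ι)) u
      - n * (1 + Cb + 1 / (2 * c) + Cb / 2) * (u ⬝ᵥ u)
      - M * (1 + Cb + c) * ∑ i, q (J ι i (T1 M)) u ≤ q (LL M E Φ d0 * LL M E Φ d0) u := by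
  rw [LL_sq, PP_sq h]
  have ea : ∀ i, q (J ι i (D1 M) * J ι i (D1 M)) u = -((J ι i (D1 M) *ᵥ u) ⬝ᵥ (J ι i (D1 M) *ᵥ u)) := by
    intro i; rw [q_mul, J_tr, D1t, J_neg, neg_mulVec, neg_dotProduct]
  have ex : ∀ i, q (J ι i (X1 M) * J ι i (X1 M)) u = ((J ι i (X1 M) *ᵥ u) ⬝ᵥ (J ι i (X1 M) *ᵥ u)) := by
    intro i; rw [q_mul, J_tr, X1t]
  have et : ∀ i, q (J ι i (T1 M)) u = ((J ι i (T1 M) *ᵥ u) ⬝ᵥ (J ι i (T1 M) *ᵥ u)) := by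
    intro i
    have := q_mul (J ι i (T1 M)) (J ι i (T1 M)) u
    rwa [J_tr, T1t, ← J_mul, T1_sq] at this
  have eb : q ((∑ i, I n M (Φ i) * J ι i (X1 M)) * (∑ i, I n M (Φ i) * J ι i (X1 M))) u =
      ((∑ i, I n M (Φ i) * J ι i (X1 M)) *ᵥ u) ⬝ᵥ ((∑ i, I n M (Φ i) * J ι i (X1 M)) *ᵥ u) := by
    rw [q_mul, transpose_sum]
    simp only [transpose_mul, I_tr, J_tr, X1t, h.Pt, (IJ (Φ _) _ (X1 M)).eq]
  have hb := phi_pos Φ c hΦ u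
  have hI : ∀ i (w : (Fin n → Fin M) × ι → ℝ), |q (I n M (E i * Φ i)) w| ≤ (1 + Cb) / 2 * (w ⬝ᵥ w) := by
    intro i w
    have h1 := dot_le 1 one_pos ((I n M (E i))ᵀ *ᵥ w) (I n M (Φ i) *ᵥ w)
    have h2 := dot_ge 1 one_pos ((I n M (E i))ᵀ *ᵥ w) (I n M (Φ i) *ᵥ w)
    have h3 := IE_isom h i w
    have h4 := I_norm_le (Φ i) Cb (hCb i) w
    rw [I_tr, h.Et, I_neg, neg_mulVec, neg_dotProduct_neg, h3] at h1 h2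
    rw [I_mul, q_mul, I_tr, h.Et, I_neg, neg_mulVec, abs_le]
    constructor <;> linarith
  have e2 : ∀ i, q (I n M (E i * Φ i) * (1 - (M : ℝ) • J ι i (T1 M))) u ≥
      -((1 + Cb) / 2 * (u ⬝ᵥ u)) - M * ((1 + Cb) / 2 * q (J ι i (T1 M)) u) := by
    intro i
    have h1 : q (I n M (E i * Φ i) * J ι i (T1 M)) u = q (I n M (E i * Φ i)) (J ι i (T1 M) *ᵥ u) := by
      have : I n M (E i * Φ i) * J ι i (T1 M) = J ι i (T1 M) * (I n M (E i * Φ i) * J ι i (T1 M)) := by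
        rw [← mul_assoc, ← (IJ (E i * Φ i) i (T1 M)).eq, mul_assoc, ← J_mul, T1_sq]
      rw [this, q_mul, J_tr, T1t, q, mulVec_mulVec]
    rw [mul_sub, q_sub, mul_one, mul_smul_comm, q_smul, h1]
    have h2 := abs_le.1 (hI i u)
    have h3 := abs_le.1 (hI i (J ι i (T1 M) *ᵥ u))
    rw [← et] at h3
    have h4 := mul_le_mul_of_nonneg_left h3.2 (Nat.cast_nonneg (α := ℝ) M)
    linarith [h2.1]
  have e3 : ∀ i, q (I n M (E i) * J ι i (X1 M) * Rr n M ι) u ≤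
      c / 2 * ((J ι i (X1 M) *ᵥ u) ⬝ᵥ (J ι i (X1 M) *ᵥ u)) + 1 / (2 * c) * (u ⬝ᵥ u) := by
    intro i
    have h1 : I n M (E i) * J ι i (X1 M) * Rr n M ι = -((I n M (E i) * Rr n M ι) * J ι i (X1 M)) := by
      rw [mul_assoc, mul_assoc, RJ i (X1 M) (X1_zero M), mul_neg, neg_neg]
    have h2 := dot_le c hc (J ι i (X1 M) *ᵥ u) (Rr n M ι *ᵥ (I n M (E i) *ᵥ u))
    rw [Rr_isom, IE_isom h] at h2
    rw [h1, q_neg, q_mul, transpose_mul, Rr_tr, I_tr, h.Et, I_neg, mul_neg, neg_mulVec, neg_dotProduct,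
      neg_neg, ← mulVec_mulVec, dotProduct_comm]
    exact h2
  have e4 : ∀ i, q (I n M (Φ i) * J ι i (D1 M) * Rr n M ι) u ≤
      1 / 2 * ((J ι i (D1 M) *ᵥ u) ⬝ᵥ (J ι i (D1 M) *ᵥ u)) + 1 / 2 * (Cb * (u ⬝ᵥ u)) := by
    intro i
    have h1 : I n M (Φ i) * J ι i (D1 M) * Rr n M ι = -((I n M (Φ i) * Rr n M ι) * J ι i (D1 M)) := by
      rw [mul_assoc, mul_assoc, RJ i (D1 M) (D1_zero M), mul_neg, neg_neg]
    have h2 := dot_ge 1 one_pos (J ι i (D1 M) *ᵥ u) (Rr n M ι *ᵥ (I n M (Φ i) *ᵥ u))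
    rw [Rr_isom] at h2
    have h4 := I_norm_le (Φ i) Cb (hCb i) u
    rw [h1, q_neg, q_mul, transpose_mul, Rr_tr, I_tr, h.Pt, ← mulVec_mulVec, dotProduct_comm]
    linarith
  have e5 : ∀ i, (J ι i (X1 M) *ᵥ u) ⬝ᵥ (J ι i (X1 M) *ᵥ u) + (J ι i (D1 M) *ᵥ u) ⬝ᵥ (J ι i (D1 M) *ᵥ u) =
      4 * q (J ι i (N1 M)) u + 2 * (u ⬝ᵥ u) - 2 * (M * q (J ι i (T1 M)) u) := by
    intro i
    have := congrArg (fun A => q (J ι i A) u) (XXDD M)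
    simp only [J_sub, J_mul, J_smul, J_add, J_one, q_sub, q_smul, q_add, q_one, ea, ex] at this
    linarith
  have e6 : q (TT n M ι) u = ∑ i, q (J ι i (N1 M)) u := by rw [TT_eq, q_sum]
  have hn : (n : ℝ) * (1 + Cb + 1 / (2 * c) + Cb / 2) * (u ⬝ᵥ u) =
      ∑ i : Fin n, (1 + Cb + 1 / (2 * c) + Cb / 2) * (u ⬝ᵥ u) := by
    simp [mul_assoc]
  rw [q_sub, q_add, q_add, q_add, q_neg, q_sum, eb, q_smul, q_sum, Finset.sum_mul, q_sum, e6, hn]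
  simp only [ea, add_mul, q_add]
  rw [Finset.sum_neg_distrib, neg_neg]
  have key : ∑ i, (2 * c * q (J ι i (N1 M)) u - (1 + Cb + 1 / (2 * c) + Cb / 2) * (u ⬝ᵥ u)
      - M * (1 + Cb + c) * q (J ι i (T1 M)) u) ≤
      ∑ i, ((J ι i (D1 M) *ᵥ u) ⬝ᵥ (J ι i (D1 M) *ᵥ u) + c * ((J ι i (X1 M) *ᵥ u) ⬝ᵥ (J ι i (X1 M) *ᵥ u))
      + 2 * q (I n M (E i * Φ i) * (1 - (M : ℝ) • J ι i (T1 M))) u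
      - (q (I n M (E i) * J ι i (X1 M) * Rr n M ι) u + q (I n M (Φ i) * J ι i (D1 M) * Rr n M ι) u)) := by
    refine Finset.sum_le_sum fun i _ => ?_
    have h2 := e2 i
    have h3 := e3 i
    have h4 := e4 i
    have h5 := e5 i
    have h6 := nsq_nonneg (J ι i (D1 M) *ᵥ u)
    have h7 := nsq_nonneg u
    have h8 : c / 2 * ((J ι i (X1 M) *ᵥ u) ⬝ᵥ (J ι i (X1 M) *ᵥ u) + (J ι i (D1 M) *ᵥ u) ⬝ᵥ (J ι i (D1 M) *ᵥ u)) =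
      c / 2 * (4 * q (J ι i (N1 M)) u + 2 * (u ⬝ᵥ u) - 2 * (M * q (J ι i (T1 M)) u)) := by rw [h5]
    have h9 : c * ((J ι i (D1 M) *ᵥ u) ⬝ᵥ (J ι i (D1 M) *ᵥ u)) ≤ 1 * ((J ι i (D1 M) *ᵥ u) ⬝ᵥ (J ι i (D1 M) *ᵥ u)) :=
      mul_le_mul_of_nonneg_right hc1 h6
    have h10 : 0 ≤ c * (u ⬝ᵥ u) := by positivity
    linarith
  simp only [Finset.sum_add_distrib, Finset.sum_sub_distrib, ← Finset.mul_sum, add_mul] at key ⊢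
  linarith

lemma q_dg (f : (Fin n → Fin M) → ℝ) (u : (Fin n → Fin M) × ι → ℝ) :
    q (dg ι f) u = ∑ k : (Fin n → Fin M) × ι, f k.1 * (u k * u k) := by
  simp only [q, dotProduct, dg_mulVec]
  exact Finset.sum_congr rfl fun k _ => by ring

/-- the uniform gap -/
lemma LL_gap (n : ℕ) (c Cb Γ : ℝ) (hc : 0 < c) (hc1 : c ≤ 1) (hCb0 : 0 ≤ Cb) (hΓ : 0 ≤ Γ) :
    ∃ (M : ℕ) (d0 : ℝ), 1 / 2 ≤ d0 ∧ d0 < M ∧ ∀ (ι : Type) [Fintype ι] [DecidableEq ι]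
      (E Φ : Fin n → Matrix ι ι ℝ), Cliff E Φ →
      (∀ (y : Fin n → ℝ) (w : ι → ℝ), c * (∑ i, y i * y i) * (w ⬝ᵥ w) ≤
        ((∑ i, y i • Φ i) *ᵥ w) ⬝ᵥ ((∑ i, y i • Φ i) *ᵥ w)) →
      (∀ i w, (Φ i *ᵥ w) ⬝ᵥ (Φ i *ᵥ w) ≤ Cb * (w ⬝ᵥ w)) →
      ∀ u, Γ * (u ⬝ᵥ u) ≤ q (LL M E Φ d0 * LL M E Φ d0) u := by
  set C1 : ℝ := n * (1 + Cb + 1 / (2 * c) + Cb / 2) with hC1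
  have hC10 : 0 ≤ C1 := by positivity
  set d0 : ℝ := (Γ + C1) / c + Γ + C1 + 4 with hd0
  have hd1 : Γ + C1 ≤ c * d0 := by
    have : c * d0 = Γ + C1 + c * (Γ + C1 + 4) := by rw [hd0]; field_simp; ring
    have : 0 ≤ c * (Γ + C1 + 4) := by positivity
    linarith
  have hd2 : Γ + C1 + 4 ≤ d0 := by
    have : 0 ≤ (Γ + C1) / c := by positivity
    linarith
  set W : ℝ := (1 + Cb + c) * n with hW
  have hW0 : 0 ≤ W := by positivity
  obtain ⟨M, hM⟩ := exists_nat_ge (2 * (d0 + 1) + 4 * W + Γ + C1 + 4)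
  have hbig : Γ + C1 + M * W ≤ (M - 1 - d0) ^ 2 := by
    have h1 : (M : ℝ) / 2 ≤ M - 1 - d0 := by linarith
    have h2 : ((M : ℝ) / 2) ^ 2 ≤ (M - 1 - d0) ^ 2 := by
      apply pow_le_pow_left₀ (by positivity) h1
    have h3 : (4 * W + Γ + C1 + 4) * (M : ℝ) ≤ M * M :=
      mul_le_mul_of_nonneg_right (by linarith) (by positivity)
    have h4 : 4 * (Γ + C1) ≤ (Γ + C1 + 4) * (M : ℝ) := by
      have : (4 : ℝ) ≤ M := by linarith
      have h5 : (Γ + C1) * 4 ≤ (Γ + C1) * M := mul_le_mul_of_nonneg_left this (by linarith)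
      linarith
    linarith
  refine ⟨M, d0, by linarith, by linarith, ?_⟩
  intro ι _ _ E Φ h hΦ hCb u
  refine le_trans ?_ (LL_est h c Cb hc hc1 hΦ hCb d0 u)
  have e1 : (d0 • 1 - TT n M ι) * (d0 • 1 - TT n M ι) = dg ι (fun α => (d0 - tot α) * (d0 - tot α)) := by
    have : d0 • 1 - TT n M ι = dg ι (fun α => d0 - tot α) := by
      rw [TT, dg, dg, smul_one_eq_diagonal, diagonal_sub]
    rw [this, dg_mul]
  have e2 : ∀ i, J ι i (T1 M) = dg ι (fun α : Fin n → Fin M => if (α i : ℕ) + 1 = M then 1 else 0) := by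
    intro i; rw [T1, J_diag]; rfl
  rw [← hC1, e1]
  simp only [e2, q_dg, TT]
  rw [Finset.sum_comm]
  simp only [dotProduct, Finset.mul_sum]
  rw [← Finset.sum_add_distrib, ← Finset.sum_sub_distrib, ← Finset.sum_sub_distrib]
  refine Finset.sum_le_sum fun k _ => ?_
  have hu : 0 ≤ u k * u k := mul_self_nonneg _
  set s := tot k.1 with hs
  have hs0 : 0 ≤ s := by rw [hs, tot]; positivity
  have main : Γ ≤ 2 * c * s + (d0 - s) * (d0 - s) - C1
      - ∑ i, M * (1 + Cb + c) * (if (k.1 i : ℕ) + 1 = M then 1 else 0) := by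
    by_cases hex : ∃ i, (k.1 i : ℕ) + 1 = M
    · obtain ⟨i, hi⟩ := hex
      have h1 : (M : ℝ) - 1 ≤ s := by
        have h2 : ((k.1 i : ℕ) : ℝ) ≤ s := by
          rw [hs, tot]
          exact Finset.single_le_sum (f := fun i => ((k.1 i : ℕ) : ℝ)) (fun _ _ => by positivity) (Finset.mem_univ i)
        have : ((k.1 i : ℕ) : ℝ) + 1 = M := by exact_mod_cast hi
        linarith
      have h3 : ∑ i, M * (1 + Cb + c) * (if (k.1 i : ℕ) + 1 = M then (1:ℝ) else 0) ≤ M * W := by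
        calc _ ≤ ∑ i : Fin n, M * (1 + Cb + c) * (1 : ℝ) := by
              refine Finset.sum_le_sum fun i _ => ?_
              refine mul_le_mul_of_nonneg_left ?_ (by positivity)
              split_ifs <;> norm_num
          _ = _ := by simp [hW]; ring
      have h4 : (M - 1 - d0) ^ 2 ≤ (d0 - s) * (d0 - s) := by
        have h0 : 0 ≤ (M : ℝ) - 1 - d0 := by linarith
        have h6 := mul_self_le_mul_self h0 (show (M : ℝ) - 1 - d0 ≤ s - d0 by linarith)
        linarith
      have h5 : 0 ≤ 2 * c * s := by positivity
      linarith
    · push Not at hex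
      rw [Finset.sum_eq_zero (fun i _ => by rw [if_neg (hex i), mul_zero])]
      rcases le_total s (d0 / 2) with h1 | h1
      · have : (d0 / 2) * (d0 / 2) ≤ (d0 - s) * (d0 - s) := by
          apply mul_self_le_mul_self (by linarith) (by linarith)
        have h5 : 0 ≤ 2 * c * s := by positivity
        have h6 : 4 * d0 ≤ d0 * d0 := mul_le_mul_of_nonneg_right (by linarith) (by linarith)
        linarith
      · have h6 := mul_self_nonneg (d0 - s)
        have h7 : c * d0 ≤ c * (2 * s) := mul_le_mul_of_nonneg_left (by linarith) hc.le
        linarith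
  have := mul_le_mul_of_nonneg_right main hu
  rw [sub_mul, sub_mul, add_mul, Finset.sum_mul] at this
  simp only [mul_assoc] at this ⊢
  linarith
end
end HR

open Matrix
set_option linter.all false
set_option linter.unusedSectionVars false
set_option linter.unusedSimpArgs false
namespace HR
section
variable {n M : ℕ} {ι : Type} [Fintype ι] [DecidableEq ι]

/-- Bott–Dirac data -/
structure BD (E C : Fin n → Matrix ι ι ℝ) : Prop extends Cliff E C where
  cc : ∀ i, C i * C i = 1
  cij : ∀ i j, i ≠ j → C i * C j = -(C j * C i)

noncomputable def FF (E C : Fin n → Matrix ι ι ℝ) (i : Fin n) : Matrix ι ι ℝ :=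
  (1 / 2 : ℝ) • (1 + E i * C i)

variable {E C : Fin n → Matrix ι ι ℝ}

lemma BD.ece (h : BD E C) (i) : E i * C i * E i = C i := by
  rw [mul_assoc, show C i * E i = -(E i * C i) by rw [h.ep, neg_neg], mul_neg, ← mul_assoc, h.ee]; simp
lemma BD.cec (h : BD E C) (i) : C i * (E i * C i) = -E i := by
  rw [h.ep, mul_neg, ← mul_assoc, h.cc]; simp
lemma BD.Ft (h : BD E C) (i) : (FF E C i)ᵀ = FF E C i := by
  rw [FF, transpose_smul, transpose_add, transpose_mul, h.Et, h.Pt, transpose_one, h.ep]; simp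
lemma BD.FF_sq (h : BD E C) (i) : FF E C i * FF E C i = FF E C i := by
  have h1 : E i * C i * (E i * C i) = 1 := by rw [← mul_assoc, h.ece, h.cc]
  simp only [FF, smul_mul_smul_comm, mul_add, add_mul, h1, one_mul, mul_one]
  module
lemma BD.E_EC (h : BD E C) {i j} (hij : i ≠ j) : E i * (E j * C j) = E j * C j * E i := by
  rw [← mul_assoc, h.ij i j hij, neg_mul, mul_assoc, h.ep, mul_neg, neg_neg, mul_assoc]
lemma BD.C_EC (h : BD E C) {i j} (hij : i ≠ j) : C i * (E j * C j) = E j * C j * C i := by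
  rw [mul_assoc, h.cij j i hij.symm, mul_neg, ← mul_assoc, ← mul_assoc,
    show C i * E j = -(E j * C i) by rw [h.ep, neg_neg], neg_mul]
lemma BD.E_F (h : BD E C) {i j} (hij : i ≠ j) : Commute (E i) (FF E C j) := by
  rw [Commute, SemiconjBy, FF, mul_smul_comm, smul_mul_assoc, mul_add, add_mul, h.E_EC hij]; simp
lemma BD.C_F (h : BD E C) {i j} (hij : i ≠ j) : Commute (C i) (FF E C j) := by
  rw [Commute, SemiconjBy, FF, mul_smul_comm, smul_mul_assoc, mul_add, add_mul, h.C_EC hij]; simp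
lemma BD.FF_comm (h : BD E C) (i j) : Commute (FF E C i) (FF E C j) := by
  rcases eq_or_ne i j with rfl | hij
  · exact Commute.refl _
  · rw [FF]
    exact (((Commute.one_left _).add_left ((h.E_F hij).mul_left (h.C_F hij)))).smul_left _
lemma BD.E_F_self (h : BD E C) (i) : E i * FF E C i - FF E C i * E i = -C i := by
  have h1 : E i * (E i * C i) = -C i := by rw [← mul_assoc, h.ee]; simp
  simp only [FF, mul_smul_comm, smul_mul_assoc, mul_add, add_mul, h1, h.ece, one_mul, mul_one]
  module
lemma BD.C_F_self (h : BD E C) (i) : C i * FF E C i - FF E C i * C i = -E i := by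
  have h1 : E i * C i * C i = E i := by rw [mul_assoc, h.cc, mul_one]
  simp only [FF, mul_smul_comm, smul_mul_assoc, mul_add, add_mul, h1, h.cec, one_mul, mul_one]
  module
lemma BD.E_Fhat (h : BD E C) (i) : E i * (∑ j, FF E C j) - (∑ j, FF E C j) * E i = -C i := by
  rw [Finset.mul_sum, Finset.sum_mul, ← Finset.sum_sub_distrib, Finset.sum_eq_single i, h.E_F_self]
  · intro j _ hj; rw [(h.E_F hj.symm).eq, sub_self]
  · simp
lemma BD.C_Fhat (h : BD E C) (i) : C i * (∑ j, FF E C j) - (∑ j, FF E C j) * C i = -E i := by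
  rw [Finset.mul_sum, Finset.sum_mul, ← Finset.sum_sub_distrib, Finset.sum_eq_single i, h.C_F_self]
  · intro j _ hj; rw [(h.C_F hj.symm).eq, sub_self]
  · simp
lemma BD.q_F (h : BD E C) (i) (w) : q (FF E C i) w = (FF E C i *ᵥ w) ⬝ᵥ (FF E C i *ᵥ w) := by
  have := q_mul (FF E C i) (FF E C i) w
  rwa [h.FF_sq, h.Ft] at this
lemma BD.q_F_nonneg (h : BD E C) (i) (w) : 0 ≤ q (FF E C i) w := by
  rw [h.q_F]; exact nsq_nonneg _
lemma BD.F_le (h : BD E C) (i) (w) : (FF E C i *ᵥ w) ⬝ᵥ (FF E C i *ᵥ w) ≤ w ⬝ᵥ w := by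
  have h1 := q_mul (1 - FF E C i) (1 - FF E C i) w
  have h2 : (1 - FF E C i) * (1 - FF E C i) = 1 - FF E C i := by
    have := h.FF_sq i; simp only [mul_sub, sub_mul, this, one_mul, mul_one]; simp
  rw [h2, transpose_sub, transpose_one, h.Ft, q_sub, q_one, h.q_F] at h1
  have := nsq_nonneg ((1 - FF E C i) *ᵥ w)
  linarith
lemma BD.Fhat_le (h : BD E C) (w) : ((∑ i, FF E C i) *ᵥ w) ⬝ᵥ ((∑ i, FF E C i) *ᵥ w) ≤ (n : ℝ) ^ 2 * (w ⬝ᵥ w) := by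
  have h1 : ((∑ i, FF E C i) *ᵥ w) ⬝ᵥ ((∑ i, FF E C i) *ᵥ w) ≤ n * ∑ i, (FF E C i *ᵥ w) ⬝ᵥ (FF E C i *ᵥ w) := by
    rw [sum_mulVec]
    simp only [dotProduct]
    rw [Finset.sum_comm, Finset.mul_sum]
    refine Finset.sum_le_sum fun k _ => ?_
    rw [Finset.sum_apply]
    have := sq_sum_le_card_mul_sum_sq (s := Finset.univ) (f := fun i => (FF E C i *ᵥ w) k)
    simp only [Finset.card_univ, Fintype.card_fin, sq] at this
    exact this
  have h2 : ∑ i, (FF E C i *ᵥ w) ⬝ᵥ (FF E C i *ᵥ w) ≤ ∑ i : Fin n, w ⬝ᵥ w :=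
    Finset.sum_le_sum fun i _ => h.F_le i w
  simp at h2
  nlinarith [Nat.cast_nonneg (α := ℝ) n]

/-- total number operator -/
noncomputable def ell (M : ℕ) (E C : Fin n → Matrix ι ι ℝ) := TT n M ι + I n M (∑ i, FF E C i)

lemma BD.ell_P (h : BD E C) : PP M E C * ell M E C = ell M E C * PP M E C := by
  have h1 := PP_TT (M := M) E C
  have h2 : PP M E C * I n M (∑ i, FF E C i) - I n M (∑ i, FF E C i) * PP M E C =
      -∑ i, (I n M (E i) * J ι i (X1 M) + I n M (C i) * J ι i (D1 M)) := by
    rw [PP, Finset.mul_sum, Finset.sum_mul, ← Finset.sum_sub_distrib, ← Finset.sum_neg_distrib]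
    refine Finset.sum_congr rfl fun i _ => ?_
    have e1 := congrArg (I n M) (h.E_Fhat i)
    have e2 := congrArg (I n M) (h.C_Fhat i)
    rw [I_sub, I_mul, I_mul, I_neg] at e1 e2
    rw [add_mul, mul_assoc, mul_assoc, ← (IJ (∑ i, FF E C i) i (D1 M)).eq, ← (IJ (∑ i, FF E C i) i (X1 M)).eq]
    linear_combination (norm := noncomm_ring) e1 * J ι i (D1 M) + e2 * J ι i (X1 M)
  rw [ell]
  linear_combination (norm := noncomm_ring) h1 + h2
lemma ell_R : Rr n M ι * ell M E C = ell M E C * Rr n M ι := by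
  rw [ell, mul_add, add_mul, Rr, (dg_I sgn _).eq, TT, (dg_comm sgn tot).eq]
lemma BD.ell_tr (h : BD E C) : (ell M E C)ᵀ = ell M E C := by
  rw [ell, transpose_add, TT, dg_tr, I_tr, transpose_sum]
  simp only [h.Ft]

/-- step 2 -/
lemma BD.step2 (h : BD E C) (d0 Γ : ℝ) (hΓ : ((n : ℝ) + 1) ^ 2 ≤ Γ)
    (hg : ∀ u, Γ * (u ⬝ᵥ u) ≤ q (LL M E C d0 * LL M E C d0) u) (k : ℕ)
    (hk : HasSig (q (LL M E C d0)) k) :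
    HasSig (q (PP M E C + (d0 • 1 - ell M E C) * Rr n M ι)) k := by
  have hFR : I n M (∑ i, FF E C i) * Rr n M ι = Rr n M ι * I n M (∑ i, FF E C i) := ((dg_I sgn _).eq).symm
  have := sig_path (LL M E C d0) (-(I n M (∑ i, FF E C i) * Rr n M ι)) (LL_tr h.toCliff d0) (by
      rw [transpose_neg, transpose_mul, Rr_tr, I_tr, transpose_sum]
      simp only [h.Ft, hFR]) (by
      intro t h0 h1 u hu
      by_contra hne
      have hp := nsq_pos u hne
      have e1 : LL M E C d0 *ᵥ u = t • (I n M (∑ i, FF E C i) *ᵥ (Rr n M ι *ᵥ u)) := by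
        rw [add_mulVec, smul_neg, neg_mulVec, smul_mulVec, ← mulVec_mulVec] at hu
        exact eq_of_sub_eq_zero (by rw [sub_eq_add_neg]; exact hu)
      have e2 := hg u
      rw [q_mul, LL_tr h.toCliff, e1, smul_dotProduct, dotProduct_smul, smul_eq_mul, smul_eq_mul] at e2
      have e3 := I_norm_le (n := n) (M := M) (∑ i, FF E C i) _ h.Fhat_le (Rr n M ι *ᵥ u)
      rw [Rr_isom] at e3
      have e4 := nsq_nonneg (I n M (∑ i, FF E C i) *ᵥ (Rr n M ι *ᵥ u))
      have e5 : t * t ≤ 1 := by nlinarith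
      have e6 := mul_le_mul_of_nonneg_right e5 e4
      have e7 := mul_le_mul_of_nonneg_right hΓ hp.le
      have e8 : (0:ℝ) ≤ n := Nat.cast_nonneg n
      nlinarith) k hk
  convert this using 2
  rw [LL, ell]
  noncomm_ring

lemma J_pd (i : Fin n) (d : Fin M → ℝ) (hd : ∀ k, 0 ≤ d k) (u : (Fin n → Fin M) × ι → ℝ) :
    0 ≤ q (J ι i (diagonal d)) u ∧ (q (J ι i (diagonal d)) u = 0 → J ι i (diagonal d) *ᵥ u = 0) := by
  have e : J ι i (diagonal d) = dg ι (fun α => d (α i)) := J_diag i d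
  rw [e, q_dg]
  have hn : ∀ k ∈ (Finset.univ : Finset ((Fin n → Fin M) × ι)), 0 ≤ d (k.1 i) * (u k * u k) :=
    fun k _ => mul_nonneg (hd _) (mul_self_nonneg _)
  refine ⟨Finset.sum_nonneg hn, fun h0 => ?_⟩
  funext k
  have := (Finset.sum_eq_zero_iff_of_nonneg hn).1 h0 k (Finset.mem_univ k)
  rw [dg_mulVec]
  rcases mul_eq_zero.1 this with h | h
  · simp [h]
  · simp [mul_self_eq_zero.1 h]

lemma BD.IF_q (h : BD E C) (i) (u : (Fin n → Fin M) × ι → ℝ) :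
    q (I n M (FF E C i)) u = (I n M (FF E C i) *ᵥ u) ⬝ᵥ (I n M (FF E C i) *ᵥ u) := by
  have := q_mul (I n M (FF E C i)) (I n M (FF E C i)) u
  rwa [I_tr, ← I_mul, h.FF_sq, h.Ft] at this

lemma ell_eq : ell M E C = ∑ j, (J ι j (N1 M) + I n M (FF E C j)) := by
  rw [ell, TT_eq, Finset.sum_add_distrib]
  congr 1
  induction (Finset.univ : Finset (Fin n)) using Finset.induction_on with
  | empty => simp [I_zero]
  | insert a s ha ih => rw [Finset.sum_insert ha, Finset.sum_insert ha, I_add, ih]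

lemma BD.ell_ge (h : BD E C) (i) (v : (Fin n → Fin M) × ι → ℝ) :
    q (J ι i (N1 M)) v + q (I n M (FF E C i)) v ≤ q (ell M E C) v := by
  rw [ell_eq, q_sum, ← q_add]
  refine Finset.single_le_sum (f := fun j => q (J ι j (N1 M) + I n M (FF E C j)) v) (fun j _ => ?_) (Finset.mem_univ i)
  rw [q_add, h.IF_q]
  have := (J_pd (ι := ι) j (fun k : Fin M => ((k : ℕ) : ℝ)) (fun k => by positivity) v).1
  have := nsq_nonneg (I n M (FF E C j) *ᵥ v)
  unfold N1
  linarith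

lemma JJ_comm (i j : Fin n) (d d' : Fin M → ℝ) : Commute (J ι i (diagonal d)) (J ι j (diagonal d')) := by
  rw [J_diag, J_diag, Commute, SemiconjBy, diagonal_mul_diagonal, diagonal_mul_diagonal]
  simp only [mul_comm]

lemma BD.ell_F (h : BD E C) (i) : Commute (I n M (FF E C i)) (ell M E C) := by
  rw [ell_eq]
  refine Commute.sum_right _ _ _ fun j _ => Commute.add_right (IJ _ _ _) ?_
  rw [Commute, SemiconjBy, ← I_mul, ← I_mul, (h.FF_comm i j).eq]

lemma ell_t (i : Fin n) (d : Fin M → ℝ) : Commute (J ι i (diagonal d)) (ell M E C) := by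
  rw [ell_eq]
  exact Commute.sum_right _ _ _ fun j _ => Commute.add_right (JJ_comm _ _ _ _) (IJ _ _ _).symm

lemma NT : N1 M * T1 M = ((M : ℝ) - 1) • T1 M := by
  rw [N1, T1, diagonal_mul_diagonal, ← diagonal_smul]
  congr 1; funext k
  by_cases h : (k : ℕ) + 1 = M
  · have : ((k : ℕ) : ℝ) + 1 = M := by exact_mod_cast h
    simp only [Pi.smul_apply, if_pos h, smul_eq_mul]; linarith
  · simp [h]

lemma BD.P_sq (h : BD E C) : PP M E C * PP M E C = (4 : ℝ) • ∑ i, (J ι i (N1 M) + I n M (FF E C i) -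
    (M : ℝ) • (J ι i (T1 M) * I n M (FF E C i))) := by
  have hm : ∀ (i j : Fin n),
      I n M (C i) * J ι i (X1 M) * (I n M (C j) * J ι j (X1 M)) = I n M (C i * C j) * (J ι i (X1 M) * J ι j (X1 M)) := by
    intro i j
    rw [I_mul, ((IJ (C j) i (X1 M)).symm).mul_mul_mul_comm]
  have e1 : (∑ i, I n M (C i) * J ι i (X1 M)) * (∑ i, I n M (C i) * J ι i (X1 M)) =
      (∑ i, J ι i (X1 M) * J ι i (X1 M)) := by
    rw [Finset.sum_mul_sum]
    simp only [hm]
    rw [sum_antisymm]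
    · refine Finset.sum_congr rfl fun i _ => ?_
      rw [h.cc, I_one]; simp
    · intro i j hij
      rw [h.cij i j hij, I_neg, (J_comm' i j (X1 M)).eq, neg_mul]
  rw [PP_sq h.toCliff, e1, ← Finset.sum_neg_distrib, Finset.smul_sum, Finset.smul_sum, ← Finset.sum_add_distrib,
    ← Finset.sum_add_distrib]
  refine Finset.sum_congr rfl fun i _ => ?_
  have e2 := congrArg (J ι i) (XXDD M)
  simp only [J_sub, J_mul, J_smul, J_add, J_one] at e2
  have e3 : E i * C i = (2 : ℝ) • FF E C i - 1 := by rw [FF]; module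
  have e4 := (IJ (FF E C i) i (T1 M)).eq
  rw [e3, I_sub, I_smul, I_one, ← e4, add_comm (-_), ← sub_eq_add_neg, e2]
  simp only [mul_sub, sub_mul, smul_mul_assoc, mul_smul_comm, mul_one, one_mul]
  module

lemma BD.ker (h : BD E C) (τ : ℝ) (h0 : 0 < τ) (hM : τ < M) (u : (Fin n → Fin M) × ι → ℝ)
    (hP : PP M E C *ᵥ u = 0) (hl : ell M E C *ᵥ u = τ • u) : u = 0 := by
  have hF2 : ∀ i, I n M (FF E C i) * I n M (FF E C i) = I n M (FF E C i) := fun i => by rw [← I_mul, h.FF_sq]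
  have ht2 : ∀ i : Fin n, J ι i (T1 M) * J ι i (T1 M) = J ι i (T1 M) := fun i => by rw [← J_mul, T1_sq]
  have hat : ∀ i : Fin n, J ι i (N1 M) * J ι i (T1 M) = ((M : ℝ) - 1) • J ι i (T1 M) := fun i => by rw [← J_mul, NT, J_smul]
  have hta : ∀ i : Fin n, J ι i (T1 M) * J ι i (N1 M) = ((M : ℝ) - 1) • J ι i (T1 M) := fun i => by
    rw [← hat]; exact (JJ_comm i i _ _).eq
  have hFt : ∀ i, I n M (FF E C i) * J ι i (T1 M) = J ι i (T1 M) * I n M (FF E C i) := fun i => (IJ _ _ _).eq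
  have hFa : ∀ i, I n M (FF E C i) * J ι i (N1 M) = J ι i (N1 M) * I n M (FF E C i) := fun i => (IJ _ _ _).eq
  have hN : ∀ (i : Fin n) w, 0 ≤ q (J ι i (N1 M)) w ∧ (q (J ι i (N1 M)) w = 0 → J ι i (N1 M) *ᵥ w = 0) := fun i w =>
    J_pd i (fun k : Fin M => ((k : ℕ) : ℝ)) (fun k => by positivity) w
  have hZZ : ∀ i, J ι i (T1 M) * I n M (FF E C i) * (J ι i (T1 M) * I n M (FF E C i)) =
      J ι i (T1 M) * I n M (FF E C i) := fun i => by
    rw [mul_assoc, ← mul_assoc (I n M (FF E C i)), hFt, mul_assoc, hF2, ← mul_assoc, ht2]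
  have haZ : ∀ i, (J ι i (N1 M) + I n M (FF E C i)) * (J ι i (T1 M) * I n M (FF E C i)) =
      (M : ℝ) • (J ι i (T1 M) * I n M (FF E C i)) := fun i => by
    rw [add_mul, ← mul_assoc, hat, ← mul_assoc, hFt, mul_assoc, hF2, smul_mul_assoc]; module
  have hZa : ∀ i, (J ι i (T1 M) * I n M (FF E C i)) * (J ι i (N1 M) + I n M (FF E C i)) =
      (M : ℝ) • (J ι i (T1 M) * I n M (FF E C i)) := fun i => by
    rw [mul_add, mul_assoc, hFa, ← mul_assoc, hta, mul_assoc, hF2, smul_mul_assoc]; module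
  have hZt : ∀ i, (J ι i (T1 M) * I n M (FF E C i))ᵀ = J ι i (T1 M) * I n M (FF E C i) := fun i => by
    rw [transpose_mul, I_tr, J_tr, h.Ft, T1t, hFt]
  have hG : ∀ i, J ι i (N1 M) + I n M (FF E C i) - (M : ℝ) • (J ι i (T1 M) * I n M (FF E C i)) =
      (1 - J ι i (T1 M) * I n M (FF E C i)) * ((J ι i (N1 M) + I n M (FF E C i)) * (1 - J ι i (T1 M) * I n M (FF E C i))) := fun i => by
    rw [mul_sub, haZ, mul_one, sub_mul, one_mul, mul_sub, hZa, mul_smul_comm, hZZ]; module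
  have hq : ∀ i, q (J ι i (N1 M) + I n M (FF E C i) - (M : ℝ) • (J ι i (T1 M) * I n M (FF E C i))) u =
      q (J ι i (N1 M)) ((1 - J ι i (T1 M) * I n M (FF E C i)) *ᵥ u) +
      q (I n M (FF E C i)) ((1 - J ι i (T1 M) * I n M (FF E C i)) *ᵥ u) := fun i => by
    rw [hG, q_mul, transpose_sub, transpose_one, hZt, ← q_add, q, mulVec_mulVec]
  have hF0 : ∀ i w, 0 ≤ q (I n M (FF E C i)) w := fun i w => by rw [h.IF_q]; exact nsq_nonneg _
  have hs : ∑ i, q (J ι i (N1 M) + I n M (FF E C i) - (M : ℝ) • (J ι i (T1 M) * I n M (FF E C i))) u = 0 := by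
    have e : q (PP M E C * PP M E C) u = 0 := by rw [q_mul, hP]; simp
    rw [h.P_sq, q_smul, q_sum] at e
    linarith
  have key : ∀ i, J ι i (N1 M) *ᵥ u + I n M (FF E C i) *ᵥ u = 0 := by
    intro i
    have e1 := (Finset.sum_eq_zero_iff_of_nonneg (fun i _ => by rw [hq]; exact add_nonneg (hN i _).1 (hF0 i _))).1 hs i (Finset.mem_univ i)
    rw [hq] at e1
    have e2 := (hN i ((1 - J ι i (T1 M) * I n M (FF E C i)) *ᵥ u)).1
    have e3 := hF0 i ((1 - J ι i (T1 M) * I n M (FF E C i)) *ᵥ u)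
    have e4 := (hN i _).2 (show q (J ι i (N1 M)) ((1 - J ι i (T1 M) * I n M (FF E C i)) *ᵥ u) = 0 by linarith)
    have e5 : I n M (FF E C i) *ᵥ ((1 - J ι i (T1 M) * I n M (FF E C i)) *ᵥ u) = 0 := by
      rw [h.IF_q] at e3 e1
      by_contra hne
      have := nsq_pos _ hne
      linarith
    have e6 : (J ι i (N1 M) + I n M (FF E C i)) *ᵥ u = (M : ℝ) • ((J ι i (T1 M) * I n M (FF E C i)) *ᵥ u) := by
      have : (J ι i (N1 M) + I n M (FF E C i)) *ᵥ ((1 - J ι i (T1 M) * I n M (FF E C i)) *ᵥ u) = 0 := by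
        rw [add_mulVec, e4, e5, add_zero]
      rw [mulVec_mulVec, mul_sub, haZ, mul_one, sub_mulVec, smul_mulVec] at this
      exact eq_of_sub_eq_zero this
    set v := (J ι i (T1 M) * I n M (FF E C i)) *ᵥ u with hv
    have e7 : v = 0 := by
      by_contra hne
      have hp := nsq_pos v hne
      have c1 : ell M E C *ᵥ v = τ • v := by
        rw [hv, mulVec_mulVec, ← ((show Commute (J ι i (T1 M)) (ell M E C) from ell_t i _).mul_left (h.ell_F i)).eq, ← mulVec_mulVec, hl, mulVec_smul]
      have c2 := h.ell_ge (M := M) i v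
      rw [← q_add] at c2
      have c3 : (J ι i (N1 M) + I n M (FF E C i)) *ᵥ v = (M : ℝ) • v := by
        rw [hv, mulVec_mulVec, haZ, smul_mulVec]
      rw [q, q, c1, c3, dotProduct_smul, dotProduct_smul, smul_eq_mul, smul_eq_mul] at c2
      nlinarith
    rw [← add_mulVec, e6, e7, smul_zero]
  have : ell M E C *ᵥ u = 0 := by
    rw [ell_eq, sum_mulVec]
    exact Finset.sum_eq_zero fun i _ => by rw [add_mulVec, key]
  rw [hl] at this
  exact (smul_eq_zero.1 this).resolve_left h0.ne'
end
end HR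

open Matrix
set_option linter.all false
set_option linter.unusedSectionVars false
set_option linter.unusedSimpArgs false
namespace HR
section
variable {n M : ℕ} {ι : Type} [Fintype ι] [DecidableEq ι] {E C : Fin n → Matrix ι ι ℝ}

lemma proj_q (P : Matrix ι ι ℝ) (ht : Pᵀ = P) (hs : P * P = P) (w) : q P w = (P *ᵥ w) ⬝ᵥ (P *ᵥ w) := by
  have := q_mul P P w
  rwa [hs, ht] at this
lemma proj_le (P : Matrix ι ι ℝ) (ht : Pᵀ = P) (hs : P * P = P) (w) : q P w ≤ w ⬝ᵥ w := by
  have h1 := q_mul (1 - P) (1 - P) w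
  have h2 : (1 - P) * (1 - P) = 1 - P := by
    simp only [mul_sub, sub_mul, hs, one_mul, mul_one]; simp
  rw [h2, transpose_sub, transpose_one, ht, q_sub, q_one] at h1
  have := nsq_nonneg ((1 - P) *ᵥ w)
  linarith

lemma BD.CFC (h : BD E C) (k) : C k * FF E C k * C k = 1 - FF E C k := by
  have h1 := h.C_F_self k
  have h2 : E k * C k = (2 : ℝ) • FF E C k - 1 := by rw [FF]; module
  have h3 : C k * FF E C k = FF E C k * C k - E k := by
    rw [sub_eq_iff_eq_add.1 h1]; abel
  rw [h3, sub_mul, mul_assoc, h.cc, mul_one, h2]; module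

lemma BD.exQ (h : BD E C) (s : Finset (Fin n)) : ∃ Q : Matrix ι ι ℝ, Qᵀ = Q ∧ Q * Q = Q ∧
    (∀ j, Commute (FF E C j) Q) ∧ (∀ k, k ∉ s → Commute (C k) Q) ∧ (∀ i ∈ s, FF E C i * Q = 0) ∧
    (∀ u, u ⬝ᵥ u ≤ q Q u + ∑ i ∈ s, q (FF E C i) u) ∧ (2 : ℝ) ^ s.card * trace Q = Fintype.card ι := by
  induction s using Finset.induction_on with
  | empty => exact ⟨1, by simp, by simp, fun j => Commute.one_right _, fun k _ => Commute.one_right _, by simp, by simp [q_one], by simp⟩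
  | insert k s hk ih =>
    obtain ⟨Q, a1, a2, a3, a4, a5, a6, a7⟩ := ih
    have hc : Commute (1 - FF E C k) Q := (Commute.one_left _).sub_left (a3 k)
    have hss : (1 - FF E C k) * (1 - FF E C k) = 1 - FF E C k := by
      have := h.FF_sq k; simp only [mul_sub, sub_mul, this, one_mul, mul_one]; simp
    refine ⟨(1 - FF E C k) * Q, ?_, ?_, ?_, ?_, ?_, ?_, ?_⟩
    · rw [transpose_mul, a1, transpose_sub, transpose_one, h.Ft, hc.eq]
    · rw [hc.symm.mul_mul_mul_comm, hss, a2]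
    · exact fun j => ((Commute.one_right _).sub_right (h.FF_comm j k)).mul_right (a3 j)
    · intro j hj
      rw [Finset.mem_insert, not_or] at hj
      exact ((Commute.one_right _).sub_right (h.C_F hj.1)).mul_right (a4 j hj.2)
    · intro i hi
      rcases Finset.mem_insert.1 hi with rfl | hi
      · rw [← mul_assoc, mul_sub, mul_one, h.FF_sq, sub_self, zero_mul]
      · rw [hc.eq, ← mul_assoc, a5 i hi, zero_mul]
    · intro u
      have e1 : q (FF E C k * Q) u ≤ q (FF E C k) u := by
        have : FF E C k * Q = FF E C k * (Q * FF E C k) := by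
          rw [← (a3 k).eq, ← mul_assoc, h.FF_sq]
        rw [this, q_mul, h.Ft, ← mulVec_mulVec]
        have := proj_le Q a1 a2 (FF E C k *ᵥ u)
        rw [h.q_F]; exact this
      have e2 := a6 u
      rw [Finset.sum_insert hk, sub_mul, one_mul, q_sub]
      linarith
    · have e1 : trace ((1 - FF E C k) * Q) = trace (FF E C k * Q) := by
        rw [← h.CFC, mul_assoc, (a4 k hk).eq, mul_assoc, trace_mul_comm, mul_assoc, mul_assoc, h.cc, mul_one]
      have e2 : trace ((1 - FF E C k) * Q) = trace Q - trace (FF E C k * Q) := by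
        rw [sub_mul, one_mul, trace_sub]
      rw [Finset.card_insert_of_notMem hk, pow_succ, ← a7]
      have : trace Q = 2 * trace ((1 - FF E C k) * Q) := by linarith
      rw [this]; ring

lemma BD.sig0 (h : BD E C) : ∃ r, HasSig (q ((1 / 2 : ℝ) • 1 - ∑ i, FF E C i)) r ∧ 2 ^ n * r = Fintype.card ι := by
  obtain ⟨Q, a1, a2, a3, a4, a5, a6, a7⟩ := h.exQ Finset.univ
  have hp : LinearMap.IsProj (LinearMap.range (mulVecLin Q)) (mulVecLin Q) := by
    constructor
    · intro x; exact ⟨x, rfl⟩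
    · rintro x ⟨y, rfl⟩
      simp [a2]
  have ht := LinearMap.IsProj.trace hp
  have ht' : LinearMap.trace ℝ (ι → ℝ) (mulVecLin Q) = trace Q := by
    rw [← Matrix.toLin'_apply', Matrix.trace_toLin'_eq]
  rw [ht'] at ht
  rw [ht] at a7
  refine ⟨Module.finrank ℝ (LinearMap.range (mulVecLin Q)), ⟨LinearMap.range (mulVecLin Q), LinearMap.ker (mulVecLin Q), 1 / 2, by norm_num, rfl, ?_, ?_, ?_⟩, ?_⟩
  · rw [LinearMap.finrank_range_add_finrank_ker]; simp
  · rintro u ⟨y, rfl⟩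
    rw [q_sub, q_smul, q_one, q_sum, Finset.sum_eq_zero]
    · simp
    · intro i _
      rw [mulVecLin_apply, q, mulVec_mulVec, a5 i (Finset.mem_univ i)]; simp
  · intro u hu
    rw [LinearMap.mem_ker, mulVecLin_apply] at hu
    have := a6 u
    rw [q, hu, dotProduct_zero] at this
    rw [q_sub, q_smul, q_one, q_sum]
    linarith
  · rw [Finset.card_univ, Fintype.card_fin] at a7
    exact_mod_cast a7

lemma BD.ker2 (h : BD E C) (u : (Fin n → Fin M) × ι → ℝ) (hl : ell M E C *ᵥ u = (1 / 2 : ℝ) • u) : u = 0 := by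
  have h1 : ∀ i, I n M (FF E C i) *ᵥ u = 0 := by
    intro i
    by_contra hne
    have hp := nsq_pos _ hne
    set w := I n M (FF E C i) *ᵥ u with hw
    have c1 : ell M E C *ᵥ w = (1 / 2 : ℝ) • w := by
      rw [hw, mulVec_mulVec, ← (h.ell_F i).eq, ← mulVec_mulVec, hl, mulVec_smul]
    have c2 := h.ell_ge (M := M) i w
    have c3 := (J_pd (ι := ι) i (fun k : Fin M => ((k : ℕ) : ℝ)) (fun k => by positivity) w).1
    have c4 : I n M (FF E C i) *ᵥ w = w := by rw [hw, mulVec_mulVec, ← I_mul, h.FF_sq]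
    rw [q, q, q, c1, c4, dotProduct_smul, smul_eq_mul] at c2
    rw [q] at c3
    unfold N1 at c2
    linarith
  have h2 : TT n M ι *ᵥ u = (1 / 2 : ℝ) • u := by
    have h3 : I n M (∑ i, FF E C i) *ᵥ u = 0 := by
      have e : I n M (∑ i, FF E C i) = ∑ i, I n M (FF E C i) := by
        have e1 := ell_eq (M := M) (E := E) (C := C)
        rw [ell, TT_eq, Finset.sum_add_distrib] at e1
        exact add_left_cancel e1
      rw [e, sum_mulVec]
      exact Finset.sum_eq_zero fun i _ => h1 i
    rw [ell, add_mulVec, h3, add_zero] at hl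
    exact hl
  funext k
  have h4 := congrFun h2 k
  rw [TT, dg_mulVec] at h4
  simp only [Pi.smul_apply, smul_eq_mul] at h4
  by_contra hk
  have h5 := mul_right_cancel₀ hk h4
  have h6 : (2 * ∑ i, (k.1 i : ℕ) : ℕ) = 1 := by
    have : (2 : ℝ) * tot k.1 = 1 := by rw [h5]; norm_num
    unfold tot at this
    exact_mod_cast this
  omega

lemma BD.step3 (h : BD E C) (d0 : ℝ) (hd : 1 / 2 ≤ d0) (hM : d0 < M) (k : ℕ)
    (hk : HasSig (q (PP M E C + (d0 • 1 - ell M E C) * Rr n M ι)) k) :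
    HasSig (q (((1 / 2 : ℝ) • 1 - ell M E C) * Rr n M ι)) k := by
  have hR : ∀ τ : ℝ, ((τ • 1 - ell M E C) * Rr n M ι)ᵀ = (τ • 1 - ell M E C) * Rr n M ι := by
    intro τ
    rw [transpose_mul, Rr_tr, transpose_sub, h.ell_tr, transpose_smul, transpose_one, mul_sub, sub_mul, ell_R]
    simp
  have := sig_path (PP M E C + (d0 • 1 - ell M E C) * Rr n M ι) ((1 / 2 - d0) • Rr n M ι - PP M E C)
    (by rw [transpose_add, PP_tr h.toCliff, hR]) (by rw [transpose_sub, PP_tr h.toCliff, transpose_smul, Rr_tr]) (by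
      intro t h0 h1 u hu
      obtain ⟨τ, hτ⟩ : ∃ τ, τ = d0 + t * (1 / 2 - d0) := ⟨_, rfl⟩
      have e1 : PP M E C + (d0 • 1 - ell M E C) * Rr n M ι + t • ((1 / 2 - d0) • Rr n M ι - PP M E C) =
        (1 - t) • PP M E C + (τ • 1 - ell M E C) * Rr n M ι := by
        rw [hτ, sub_mul, sub_mul, smul_mul_assoc, smul_mul_assoc, one_mul]; module
      rw [e1] at hu
      have hS : ((1 - t) • PP M E C + (τ • 1 - ell M E C) * Rr n M ι) * ((1 - t) • PP M E C + (τ • 1 - ell M E C) * Rr n M ι) =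
        ((1 - t) • PP M E C) * ((1 - t) • PP M E C) + (τ • 1 - ell M E C) * (τ • 1 - ell M E C) := by
        have c1 : PP M E C * (τ • 1 - ell M E C) = (τ • 1 - ell M E C) * PP M E C := by
          rw [mul_sub, sub_mul, h.ell_P]; simp
        have c2 : Rr n M ι * (τ • 1 - ell M E C) = (τ • 1 - ell M E C) * Rr n M ι := by
          rw [mul_sub, sub_mul, ell_R]; simp
        have c3 := R_PP (M := M) E C
        have c4 := Rr_sq (n := n) (M := M) (ι := ι)
        generalize τ • 1 - ell M E C = W at *
        have d1 : W * Rr n M ι * (W * Rr n M ι) = W * W := by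
          rw [mul_assoc, ← mul_assoc (Rr n M ι), c2, mul_assoc, c4, mul_one]
        have d2 : PP M E C * (W * Rr n M ι) + W * Rr n M ι * PP M E C = 0 := by
          rw [← mul_assoc, c1, mul_assoc, mul_assoc, c3]; simp
        have d3 : (1 - t) • PP M E C * (W * Rr n M ι) + W * Rr n M ι * ((1 - t) • PP M E C) = 0 := by
          rw [smul_mul_assoc, mul_smul_comm, ← smul_add, d2, smul_zero]
        generalize (1 - t) • PP M E C = P' at *
        linear_combination (norm := noncomm_ring) d1 + d3
      have hz : q (((1 - t) • PP M E C) * ((1 - t) • PP M E C) + (τ • 1 - ell M E C) * (τ • 1 - ell M E C)) u = 0 := by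
        rw [← hS, q, ← mulVec_mulVec, hu]; simp
      rw [q_add, q_mul, q_mul, transpose_sub, h.ell_tr, transpose_smul, transpose_smul, transpose_one, PP_tr h.toCliff] at hz
      have n1 := nsq_nonneg (((1 - t) • PP M E C) *ᵥ u)
      have n2 := nsq_nonneg ((τ • 1 - ell M E C) *ᵥ u)
      have z1 : ((1 - t) • PP M E C) *ᵥ u = 0 := dotProduct_self_eq_zero.1 (by linarith)
      have z2 : (τ • 1 - ell M E C) *ᵥ u = 0 := dotProduct_self_eq_zero.1 (by linarith)
      have z3 : ell M E C *ᵥ u = τ • u := by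
        rw [sub_mulVec, smul_mulVec, one_mulVec] at z2
        exact (eq_of_sub_eq_zero z2).symm
      rcases eq_or_ne t 1 with rfl | ht
      · refine h.ker2 u ?_
        rw [z3, hτ]; congr 1; ring
      · have hτ0 : 0 < τ := by nlinarith
        have hτM : τ < M := by nlinarith
        refine h.ker τ hτ0 hτM u ?_ z3
        rw [smul_mulVec] at z1
        exact (smul_eq_zero.1 z1).resolve_left (sub_ne_zero.2 ht.symm)) k hk
  convert this using 2
  rw [sub_mul, sub_mul, smul_mul_assoc, smul_mul_assoc, one_mul]; module

lemma hasSig_top (A : Matrix ι ι ℝ) (h : ∀ u, 1 / 2 * (u ⬝ᵥ u) ≤ q A u) : HasSig (q A) (Fintype.card ι) :=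
  ⟨⊤, ⊥, 1 / 2, by norm_num, by simp, by simp, fun u _ => h u, fun u hu => by
    rw [Submodule.mem_bot] at hu
    subst hu; simp [q]⟩
lemma hasSig_bot (A : Matrix ι ι ℝ) (h : ∀ u, q A u ≤ - (1 / 2) * (u ⬝ᵥ u)) : HasSig (q A) 0 :=
  ⟨⊥, ⊤, 1 / 2, by norm_num, by simp, by simp, fun u hu => by
    rw [Submodule.mem_bot] at hu
    subst hu; simp [q], fun u _ => h u⟩

lemma tot_cases (α : Fin n → Fin M) : (∀ i, (α i : ℕ) = 0) ∨ 1 ≤ tot α := by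
  by_cases h : ∀ i, (α i : ℕ) = 0
  · exact Or.inl h
  · right
    push Not at h
    obtain ⟨i, hi⟩ := h
    have h1 : (α i : ℕ) ≤ ∑ j, (α j : ℕ) :=
      Finset.single_le_sum (f := fun j => (α j : ℕ)) (fun _ _ => Nat.zero_le _) (Finset.mem_univ i)
    have : 1 ≤ ∑ j, (α j : ℕ) := by omega
    unfold tot; exact_mod_cast this

lemma BD.step4 (h : BD E C) (hM : 0 < M) : ∃ o r, HasSig (q (((1 / 2 : ℝ) • 1 - ell M E C) * Rr n M ι)) (Fintype.card ι * o + r) ∧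
    2 ^ n * r = Fintype.card ι := by
  classical
  obtain ⟨r, hr, hr2⟩ := h.sig0
  let z : Fin n → Fin M := fun _ => ⟨0, hM⟩
  refine ⟨∑ α : Fin n → Fin M, if sgn α = -1 then 1 else 0, r, ?_, hr2⟩
  have hz : sgn z = 1 := by simp [sgn, z]
  have key := HasSig.blocks (Equiv.refl ((Fin n → Fin M) × ι)) (q (((1 / 2 : ℝ) • 1 - ell M E C) * Rr n M ι))
    (fun α => q (sgn α • ((1 / 2 - tot α : ℝ) • 1 - ∑ i, FF E C i)))
    (fun α => (if sgn α = -1 then Fintype.card ι else 0) + (if α = z then r else 0)) (by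
      intro u
      have e : ((1 / 2 : ℝ) • 1 - ell M E C) * Rr n M ι = dg ι (fun α => sgn α * (1 / 2 - tot α)) - dg ι sgn * I n M (∑ i, FF E C i) := by
        have e1 : dg ι (fun α : Fin n → Fin M => sgn α * (1 / 2 - tot α)) = (1 / 2 : ℝ) • Rr n M ι - TT n M ι * Rr n M ι := by
          rw [TT, Rr, dg_mul]
          ext k l
          by_cases hkl : k = l
          · subst hkl; simp [dg]; ring
          · simp [dg, diagonal_apply_ne _ hkl]
        rw [e1, (dg_I sgn _).eq, ell, sub_mul, add_mul, Rr]
        simp only [smul_mul_assoc, one_mul]; abel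
      rw [e, q, dot_prod]
      refine Finset.sum_congr rfl fun α _ => ?_
      rw [q]
      simp only [Equiv.refl_symm, Equiv.refl_apply]
      congr 1
      funext i
      rw [sub_mulVec, Pi.sub_apply, ← mulVec_mulVec, dg_mulVec, dg_mulVec, I_mulVec, smul_mulVec, sub_mulVec, smul_mulVec, one_mulVec]
      simp only [Pi.smul_apply, Pi.sub_apply, smul_eq_mul]; ring) (by
      intro α
      have hF : ∀ u, 0 ≤ q (∑ i, FF E C i) u := fun u => by
        rw [q_sum]; exact Finset.sum_nonneg fun i _ => h.q_F_nonneg i u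
      have hzt : tot z = 0 := by simp [tot, z]
      rcases mul_self_eq_one_iff.1 (sgn_sq α) with hs | hs
      · have hs' : ¬ sgn α = -1 := by rw [hs]; norm_num
        rcases eq_or_ne α z with rfl | hne
        · rw [if_neg hs', if_pos rfl, zero_add, hs, one_smul, hzt, sub_zero]; exact hr
        · rw [if_neg hs', if_neg hne, hs, one_smul]
          refine hasSig_bot _ fun u => ?_
          have ht : 1 ≤ tot α := (tot_cases α).resolve_left fun h0 => hne (funext fun i => Fin.ext (h0 i))
          rw [q_sub, q_smul, q_one]
          have := hF u; have := nsq_nonneg u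
          nlinarith
      · have hne : α ≠ z := by rintro rfl; rw [hz] at hs; norm_num at hs
        rw [if_pos hs, if_neg hne, hs, add_zero]
        refine hasSig_top _ fun u => ?_
        have ht : 1 ≤ tot α := (tot_cases α).resolve_left fun h0 => hne (funext fun i => Fin.ext (h0 i))
        rw [q_smul, q_sub, q_smul, q_one]
        have := hF u; have := nsq_nonneg u
        nlinarith)
  convert key using 1
  rw [Finset.sum_add_distrib, Finset.mul_sum]
  simp
end
end HR

open Matrix
set_option linter.all false
set_option linter.unusedSectionVars false
set_option linter.unusedSimpArgs false
namespace HR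
section
open scoped Kronecker
variable {n M : ℕ} {ι : Type} [Fintype ι] [DecidableEq ι] {μ : Type} [Fintype μ] [DecidableEq μ]

lemma IJ_apply (S : Matrix ι ι ℝ) (i : Fin n) (A : Matrix (Fin M) (Fin M) ℝ) (α a β b) :
    (I n M S * J ι i A) (α, a) (β, b) = lft i A α β * S a b := by
  rw [I, J, ← mul_kronecker_mul, one_mul, mul_one, kronecker_apply]

lemma PP_apply (E Φ : Fin n → Matrix ι ι ℝ) (α a β b) : PP M E Φ (α, a) (β, b) =
    ∑ i, (lft i (D1 M) α β * E i a b + lft i (X1 M) α β * Φ i a b) := by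
  rw [PP, Matrix.sum_apply]
  simp only [Matrix.add_apply, IJ_apply]

lemma PP_big (σ : μ → ℝ) (E Φ : Fin n → Matrix ι ι ℝ) (u : (Fin n → Fin M) × (ι × μ) → ℝ) (α a m) :
    (PP M (fun i => E i ⊗ₖ diagonal σ) (fun i => Φ i ⊗ₖ diagonal σ) *ᵥ u) (α, (a, m)) =
      σ m * (PP M E Φ *ᵥ (fun k => u (k.1, (k.2, m)))) (α, a) := by
  have e : ∀ β b m', PP M (fun i => E i ⊗ₖ diagonal σ) (fun i => Φ i ⊗ₖ diagonal σ) (α, (a, m)) (β, (b, m')) =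
      PP M E Φ (α, a) (β, b) * diagonal σ m m' := by
    intro β b m'
    rw [PP_apply, PP_apply, Finset.sum_mul]
    refine Finset.sum_congr rfl fun i _ => ?_
    rw [kronecker_apply, kronecker_apply]; ring
  simp only [mulVec, dotProduct, Fintype.sum_prod_type, e, Finset.mul_sum]
  refine Finset.sum_congr rfl fun β _ => Finset.sum_congr rfl fun b _ => ?_
  rw [Finset.sum_eq_single m]
  · rw [diagonal_apply_eq]; ring
  · intro m' _ hm; rw [diagonal_apply_ne _ hm.symm]; ring
  · simp

lemma W_eq (d0 : ℝ) : (d0 • 1 - TT n M ι) * Rr n M ι = dg ι (fun α => (d0 - tot α) * sgn α) := by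
  rw [sub_mul, TT, Rr, dg_mul]
  ext k l
  by_cases hkl : k = l
  · subst hkl; simp [dg]; ring
  · simp [dg, diagonal_apply_ne _ hkl]

lemma step0 (σ : μ → ℝ) (hσ : ∀ m, σ m * σ m = 1) (E Φ : Fin n → Matrix ι ι ℝ) (d0 : ℝ) (k : ℕ)
    (hk : HasSig (q (LL M E Φ d0)) k) :
    HasSig (q (LL M (fun i => E i ⊗ₖ diagonal σ) (fun i => Φ i ⊗ₖ diagonal σ) d0)) (Fintype.card μ * k) := by
  let e : (Fin n → Fin M) × (ι × μ) ≃ μ × ((Fin n → Fin M) × ι) :=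
    ⟨fun x => (x.2.2, (x.1, x.2.1)), fun y => (y.2.1, (y.2.2, y.1)), fun _ => rfl, fun _ => rfl⟩
  have := HasSig.blocks e (q (LL M (fun i => E i ⊗ₖ diagonal σ) (fun i => Φ i ⊗ₖ diagonal σ) d0))
    (fun m => q (σ m • PP M E Φ + (d0 • 1 - TT n M ι) * Rr n M ι)) (fun _ => k) (by
      intro u
      have es : ∀ m k, e.symm (m, k) = (k.1, (k.2, m)) := fun _ _ => rfl
      have : ∀ f : (Fin n → Fin M) × (ι × μ) → ℝ, ∑ x, f x = ∑ m, ∑ k : (Fin n → Fin M) × ι, f (k.1, (k.2, m)) := by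
        intro f
        rw [← Equiv.sum_comp e.symm, Fintype.sum_prod_type]
        rfl
      simp only [q, dotProduct]
      rw [this]
      refine Finset.sum_congr rfl fun m _ => Finset.sum_congr rfl fun k _ => ?_
      simp only [es]
      congr 1
      rw [LL, W_eq, W_eq, add_mulVec, add_mulVec, Pi.add_apply, Pi.add_apply, PP_big, dg_mulVec, dg_mulVec, smul_mulVec]
      rfl) (by
      intro m
      rcases mul_self_eq_one_iff.1 (hσ m) with hs | hs
      · rw [hs, one_smul]; exact hk
      · have h1 := HasSig.conj' hk (Rr n M ι) (by rw [Rr_tr, Rr_sq]) (by rw [Rr_tr, Rr_sq])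
        convert h1 using 1
        funext u
        have h2 : (-1 : ℝ) • PP M E Φ + (d0 • 1 - TT n M ι) * Rr n M ι = Rr n M ι * (LL M E Φ d0 * Rr n M ι) := by
          have h3 := R_PP (M := M) E Φ
          have h4 := Rr_sq (n := n) (M := M) (ι := ι)
          have h5 : Rr n M ι * (d0 • 1 - TT n M ι) = (d0 • 1 - TT n M ι) * Rr n M ι := by
            rw [mul_sub, sub_mul, TT, Rr, (dg_comm sgn tot).eq]; simp
          rw [LL]
          generalize d0 • 1 - TT n M ι = W at *
          rw [add_mul, mul_assoc W, h4, mul_one, mul_add, h5, ← mul_assoc, h3, neg_mul, mul_assoc, h4]; simp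
        rw [hs, h2, q_mul, Rr_tr, ← mulVec_mulVec, q])
  simpa using this

lemma anti_norm {κ : Type} [Fintype κ] [DecidableEq κ] (P Q : Matrix κ κ ℝ) (hP : Pᵀ = P) (hQ : Qᵀ = Q) (h : P * Q = -(Q * P))
    (a b : ℝ) (w : κ → ℝ) : ((a • P + b • Q) *ᵥ w) ⬝ᵥ ((a • P + b • Q) *ᵥ w) =
      a * a * ((P *ᵥ w) ⬝ᵥ (P *ᵥ w)) + b * b * ((Q *ᵥ w) ⬝ᵥ (Q *ᵥ w)) := by
  have h1 := q_mul (a • P + b • Q) (a • P + b • Q) w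
  have h2 := q_mul P P w
  have h3 := q_mul Q Q w
  rw [transpose_add, transpose_smul, transpose_smul, hP, hQ] at h1
  rw [hP] at h2; rw [hQ] at h3
  rw [← h1, ← h2, ← h3, ← q_smul, ← q_smul, ← q_add]
  congr 1
  simp only [add_mul, mul_add, smul_mul_assoc, mul_smul_comm, h]
  module

lemma kron_diag_norm (σ : μ → ℝ) (hσ : ∀ m, σ m * σ m = 1) (S : Matrix ι ι ℝ) (w : ι × μ → ℝ) :
    ((S ⊗ₖ diagonal σ) *ᵥ w) ⬝ᵥ ((S ⊗ₖ diagonal σ) *ᵥ w) =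
      ∑ m, (S *ᵥ (fun a => w (a, m))) ⬝ᵥ (S *ᵥ (fun a => w (a, m))) := by
  have e : ∀ a m, ((S ⊗ₖ diagonal σ) *ᵥ w) (a, m) = σ m * (S *ᵥ (fun a => w (a, m))) a := by
    intro a m
    simp only [mulVec, dotProduct, Fintype.sum_prod_type, kronecker_apply, Finset.mul_sum]
    refine Finset.sum_congr rfl fun b _ => ?_
    rw [Finset.sum_eq_single m]
    · rw [diagonal_apply_eq]; ring
    · intro m' _ hm; rw [diagonal_apply_ne _ hm.symm]; ring
    · simp
  simp only [dotProduct, Fintype.sum_prod_type, e]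
  rw [Finset.sum_comm]
  refine Finset.sum_congr rfl fun m _ => Finset.sum_congr rfl fun a _ => ?_
  linear_combination (S *ᵥ (fun a => w (a, m))) a * (S *ᵥ (fun a => w (a, m))) a * hσ m

lemma norm_split (w : ι × μ → ℝ) : w ⬝ᵥ w = ∑ m, (fun a => w (a, m)) ⬝ᵥ (fun a => w (a, m)) := by
  simp only [dotProduct, Fintype.sum_prod_type]
  rw [Finset.sum_comm]

lemma anti_sq {κ : Type} [Fintype κ] [DecidableEq κ] (C : Fin n → Matrix κ κ ℝ) (cc : ∀ i, C i * C i = 1)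
    (cij : ∀ i j, i ≠ j → C i * C j = -(C j * C i)) (y : Fin n → ℝ) :
    (∑ i, y i • C i) * (∑ i, y i • C i) = (∑ i, y i * y i) • 1 := by
  rw [Finset.sum_mul_sum, sum_antisymm, Finset.sum_smul]
  · refine Finset.sum_congr rfl fun i _ => ?_
    rw [smul_mul_smul_comm, cc]
  · intro i j hij
    rw [smul_mul_smul_comm, smul_mul_smul_comm, cij i j hij, smul_neg, mul_comm]

end
end HR

open Matrix
set_option linter.all false
set_option linter.unusedSectionVars false
set_option linter.unusedSimpArgs false
namespace HR
section
open scoped Kronecker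
variable {n M : ℕ} {ι : Type} [Fintype ι] [DecidableEq ι] {μ : Type} [Fintype μ] [DecidableEq μ]

lemma kmul (A B : Matrix ι ι ℝ) (A' B' : Matrix μ μ ℝ) : (A ⊗ₖ A') * (B ⊗ₖ B') = (A * B) ⊗ₖ (A' * B') :=
  (mul_kronecker_mul _ _ _ _).symm
lemma ktr (A : Matrix ι ι ℝ) (A' : Matrix μ μ ℝ) : (A ⊗ₖ A')ᵀ = Aᵀ ⊗ₖ A'ᵀ := (kroneckerMap_transpose _ _ _).symm
lemma kneg (A : Matrix ι ι ℝ) (A' : Matrix μ μ ℝ) : A ⊗ₖ (-A') = -(A ⊗ₖ A') := by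
  have := kronecker_smul (-1 : ℝ) A A'; simpa using this
lemma negk (A : Matrix ι ι ℝ) (A' : Matrix μ μ ℝ) : (-A) ⊗ₖ A' = -(A ⊗ₖ A') := by
  have := smul_kronecker (-1 : ℝ) A A'; simpa using this
lemma ksum {s : Type} (t : Finset s) (A : s → Matrix ι ι ℝ) (B : Matrix μ μ ℝ) : (∑ i ∈ t, A i) ⊗ₖ B = ∑ i ∈ t, A i ⊗ₖ B := by
  ext a b; simp [kronecker_apply, Matrix.sum_apply, Finset.sum_mul]

/-- auxiliary data -/
structure Aux (σ : μ → ℝ) (C : Fin n → Matrix μ μ ℝ) : Prop where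
  ss : ∀ m, σ m * σ m = 1
  ct : ∀ i, (C i)ᵀ = C i
  cc : ∀ i, C i * C i = 1
  cij : ∀ i j, i ≠ j → C i * C j = -(C j * C i)
  cs : ∀ i, diagonal σ * C i = -(C i * diagonal σ)

lemma core_mu {σ : μ → ℝ} {C : Fin n → Matrix μ μ ℝ} (hA : Aux σ C) {E Φ : Fin n → Matrix ι ι ℝ} (h : Cliff E Φ)
    (c Cb Γ : ℝ) (hc : 0 < c) (hc1 : c ≤ 1) (hCb : 0 ≤ Cb) (hΓ : ((n : ℝ) + 1) ^ 2 ≤ Γ)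
    (hlow : ∀ (y : Fin n → ℝ) (w : ι → ℝ), c * (∑ i, y i * y i) * (w ⬝ᵥ w) ≤
        ((∑ i, y i • Φ i) *ᵥ w) ⬝ᵥ ((∑ i, y i • Φ i) *ᵥ w))
    (hup : ∀ i w, (Φ i *ᵥ w) ⬝ᵥ (Φ i *ᵥ w) ≤ Cb * (w ⬝ᵥ w))
    (d0 : ℝ) (hd : 1 / 2 ≤ d0) (hdM : d0 < M)
    (hgap : ∀ (E Φ : Fin n → Matrix (ι × μ) (ι × μ) ℝ), Cliff E Φ →
      (∀ (y : Fin n → ℝ) (w : ι × μ → ℝ), c / 2 * (∑ i, y i * y i) * (w ⬝ᵥ w) ≤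
        ((∑ i, y i • Φ i) *ᵥ w) ⬝ᵥ ((∑ i, y i • Φ i) *ᵥ w)) →
      (∀ i w, (Φ i *ᵥ w) ⬝ᵥ (Φ i *ᵥ w) ≤ (Cb + 1) * (w ⬝ᵥ w)) →
      ∀ u, Γ * (u ⬝ᵥ u) ≤ q (LL M E Φ d0 * LL M E Φ d0) u)
    (k : ℕ) (hk : HasSig (q (LL M E Φ d0)) k) :
    ∃ o r, Fintype.card μ * k = Fintype.card (ι × μ) * o + r ∧ 2 ^ n * r = Fintype.card (ι × μ) := by
  have hss : diagonal σ * diagonal σ = (1 : Matrix μ μ ℝ) := by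
    rw [diagonal_mul_diagonal]; simp only [hA.ss, diagonal_one]
  let E' : Fin n → Matrix (ι × μ) (ι × μ) ℝ := fun i => E i ⊗ₖ diagonal σ
  let Φ' : Fin n → Matrix (ι × μ) (ι × μ) ℝ := fun i => Φ i ⊗ₖ diagonal σ
  let C' : Fin n → Matrix (ι × μ) (ι × μ) ℝ := fun i => (1 : Matrix ι ι ℝ) ⊗ₖ C i
  have hE't : ∀ i, (E' i)ᵀ = -E' i := fun i => by
    simp only [E']; rw [ktr, h.Et, diagonal_transpose, negk]
  have hC't : ∀ i, (C' i)ᵀ = C' i := fun i => by simp only [C']; rw [ktr, hA.ct, transpose_one]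
  have hΦ't : ∀ i, (Φ' i)ᵀ = Φ' i := fun i => by simp only [Φ']; rw [ktr, h.Pt, diagonal_transpose]
  have hee : ∀ i, E' i * E' i = -1 := fun i => by
    simp only [E']; rw [kmul, h.ee, hss, negk, one_kronecker_one]
  have hij : ∀ i j, i ≠ j → E' i * E' j = -(E' j * E' i) := fun i j hij => by
    simp only [E']; rw [kmul, kmul, h.ij i j hij, negk]
  have hEC : ∀ i j, E' i * C' j = -(C' j * E' i) := fun i j => by
    simp only [E', C']; rw [kmul, kmul, hA.cs, kneg, mul_one, one_mul]
  have hEP : ∀ i j, E' i * Φ' j = -(Φ' j * E' i) := fun i j => by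
    simp only [E', Φ']; rw [kmul, kmul, h.ep, negk]
  have hPC : ∀ i j, Φ' i * C' j = -(C' j * Φ' i) := fun i j => by
    simp only [Φ', C']; rw [kmul, kmul, hA.cs, kneg, mul_one, one_mul]
  have hC1 : ∀ i, C' i * C' i = 1 := fun i => by
    simp only [C']; rw [kmul, hA.cc, one_mul, one_kronecker_one]
  have hC2 : ∀ i j, i ≠ j → C' i * C' j = -(C' j * C' i) := fun i j hij => by
    simp only [C']; rw [kmul, kmul, hA.cij i j hij, kneg]
  have hBD : BD E' C' := ⟨⟨hE't, hee, hij, hC't, hEC⟩, hC1, hC2⟩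
  have hcl : ∀ t : ℝ, Cliff E' (fun i => (1 - t) • Φ' i + t • C' i) := fun t =>
    ⟨hE't, hee, hij, fun i => by rw [transpose_add, transpose_smul, transpose_smul, hΦ't, hC't], fun i j => by
      rw [mul_add, add_mul, mul_smul_comm, mul_smul_comm, smul_mul_assoc, smul_mul_assoc, hEC, hEP]; module⟩
  have hupΦ : ∀ i w, (Φ' i *ᵥ w) ⬝ᵥ (Φ' i *ᵥ w) ≤ Cb * (w ⬝ᵥ w) := fun i w => by
    simp only [Φ']
    rw [kron_diag_norm σ hA.ss, norm_split, Finset.mul_sum]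
    exact Finset.sum_le_sum fun m _ => hup i _
  have hCn : ∀ i w, (C' i *ᵥ w) ⬝ᵥ (C' i *ᵥ w) = w ⬝ᵥ w := fun i w =>
    dot_isom _ (by rw [hC't, hC1]) w
  have hg : ∀ t : ℝ, 0 ≤ t → t ≤ 1 → ∀ u, Γ * (u ⬝ᵥ u) ≤
      q (LL M E' (fun i => (1 - t) • Φ' i + t • C' i) d0 * LL M E' (fun i => (1 - t) • Φ' i + t • C' i) d0) u := by
    intro t h0 h1
    refine hgap _ _ (hcl t) ?_ ?_
    · intro y w
      have e1 : ∑ i, y i • ((1 - t) • Φ' i + t • C' i) = (1 - t) • (∑ i, y i • Φ' i) + t • (∑ i, y i • C' i) := by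
        rw [Finset.smul_sum, Finset.smul_sum, ← Finset.sum_add_distrib]
        exact Finset.sum_congr rfl fun i _ => by module
      have s1 : (∑ i, y i • Φ' i)ᵀ = ∑ i, y i • Φ' i := by
        rw [transpose_sum]; exact Finset.sum_congr rfl fun i _ => by rw [transpose_smul, hΦ't]
      have s2 : (∑ i, y i • C' i)ᵀ = ∑ i, y i • C' i := by
        rw [transpose_sum]; exact Finset.sum_congr rfl fun i _ => by rw [transpose_smul, hC't]
      have s3 : (∑ i, y i • Φ' i) * (∑ i, y i • C' i) = -((∑ i, y i • C' i) * ∑ i, y i • Φ' i) := by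
        rw [Finset.sum_mul_sum, Finset.sum_mul_sum, Finset.sum_comm, ← Finset.sum_neg_distrib]
        refine Finset.sum_congr rfl fun i _ => ?_
        rw [← Finset.sum_neg_distrib]
        refine Finset.sum_congr rfl fun j _ => ?_
        rw [smul_mul_smul_comm, smul_mul_smul_comm, hPC, smul_neg, mul_comm]
      rw [e1, anti_norm _ _ s1 s2 s3]
      have n1 : ((∑ i, y i • C' i) *ᵥ w) ⬝ᵥ ((∑ i, y i • C' i) *ᵥ w) = (∑ i, y i * y i) * (w ⬝ᵥ w) := by
        have := q_mul (∑ i, y i • C' i) (∑ i, y i • C' i) w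
        rw [s2] at this
        rw [← this, anti_sq C' hC1 hC2, q_smul, q_one]
      have n2 : c * (∑ i, y i * y i) * (w ⬝ᵥ w) ≤ ((∑ i, y i • Φ' i) *ᵥ w) ⬝ᵥ ((∑ i, y i • Φ' i) *ᵥ w) := by
        have : ∑ i, y i • Φ' i = (∑ i, y i • Φ i) ⊗ₖ diagonal σ := by
          rw [ksum]; exact Finset.sum_congr rfl fun i _ => by rw [smul_kronecker]
        rw [this, kron_diag_norm σ hA.ss, norm_split, Finset.mul_sum]
        exact Finset.sum_le_sum fun m _ => hlow y _
      rw [n1]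
      have y0 : 0 ≤ ∑ i, y i * y i := Finset.sum_nonneg fun i _ => mul_self_nonneg _
      have w0 := nsq_nonneg w
      have yw := mul_nonneg y0 w0
      have m1 := mul_le_mul_of_nonneg_left n2 (mul_self_nonneg (1 - t))
      have m2 : c / 2 ≤ (1 - t) * (1 - t) * c + t * t := by nlinarith [sq_nonneg (2 * t - 1), mul_self_nonneg t]
      have m3 := mul_le_mul_of_nonneg_right m2 yw
      linarith
    · intro i w
      rw [anti_norm _ _ (hΦ't i) (hC't i) (hPC i i), hCn]
      have a1 := hupΦ i w
      have a2 := nsq_nonneg (Φ' i *ᵥ w)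
      have a3 := nsq_nonneg w
      have a4 : (1 - t) * (1 - t) ≤ 1 := by nlinarith
      have a5 : t * t ≤ 1 := by nlinarith
      have a6 := mul_le_mul_of_nonneg_right a4 a2
      have a7 := mul_le_mul_of_nonneg_right a5 a3
      linarith
  have hΓ0 : 0 < Γ := lt_of_lt_of_le (by positivity) hΓ
  have k0 := step0 σ hA.ss E Φ d0 k hk
  have haff : ∀ t : ℝ, LL M E' Φ' d0 + t • (LL M E' C' d0 - LL M E' Φ' d0) = LL M E' (fun i => (1 - t) • Φ' i + t • C' i) d0 := by
    intro t
    have : PP M E' (fun i => (1 - t) • Φ' i + t • C' i) = (1 - t) • PP M E' Φ' + t • PP M E' C' := by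
      simp only [PP, Finset.smul_sum]
      rw [← Finset.sum_add_distrib]
      refine Finset.sum_congr rfl fun i _ => ?_
      rw [I_add, I_smul, I_smul, add_mul, smul_mul_assoc, smul_mul_assoc]; module
    rw [LL, LL, LL, this]; module
  have hc0 : Cliff E' Φ' := ⟨hE't, hee, hij, hΦ't, hEP⟩
  have k1 := sig_path (LL M E' Φ' d0) (LL M E' C' d0 - LL M E' Φ' d0) (LL_tr hc0 d0) (by
      rw [transpose_sub, LL_tr hc0, LL_tr hBD.toCliff]) (by
      intro t h0 h1 u hu
      rw [haff] at hu
      have := hg t h0 h1 u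
      rw [q, ← mulVec_mulVec, hu, mulVec_zero, dotProduct_zero] at this
      have := nsq_nonneg u
      exact dotProduct_self_eq_zero.1 (by nlinarith)) _ k0
  rw [add_sub_cancel] at k1
  have hg1 := hg 1 (by norm_num) le_rfl
  simp only [sub_self, zero_smul, one_smul, zero_add] at hg1
  have k2 := hBD.step2 d0 Γ hΓ hg1 _ k1
  have k3 := hBD.step3 d0 hd hdM _ k2
  have hM0 : 0 < M := by
    have : (0 : ℝ) < M := by linarith
    exact_mod_cast this
  obtain ⟨o, r, k4, hr⟩ := hBD.step4 hM0
  exact ⟨o, r, k3.unique k4, hr⟩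
end
end HR

open Matrix
set_option linter.all false
set_option linter.unusedSectionVars false
set_option linter.unusedSimpArgs false
namespace HR
section
open scoped Kronecker
/-- 2 by 2 matrices -/
noncomputable def ep : Matrix (Fin 2) (Fin 2) ℝ := !![0, 1; -1, 0]
noncomputable def sx : Matrix (Fin 2) (Fin 2) ℝ := !![0, 1; 1, 0]
noncomputable def sz : Matrix (Fin 2) (Fin 2) ℝ := !![1, 0; 0, -1]
lemma ep_t : epᵀ = -ep := by ext i j; fin_cases i <;> fin_cases j <;> simp [ep]
lemma sx_t : sxᵀ = sx := by ext i j; fin_cases i <;> fin_cases j <;> simp [sx]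
lemma sz_t : szᵀ = sz := by ext i j; fin_cases i <;> fin_cases j <;> simp [sz]
lemma ep_ep : ep * ep = -1 := by ext i j; fin_cases i <;> fin_cases j <;> simp [ep]
lemma sx_sx : sx * sx = 1 := by ext i j; fin_cases i <;> fin_cases j <;> simp [sx]
lemma sz_sz : sz * sz = 1 := by ext i j; fin_cases i <;> fin_cases j <;> simp [sz]
lemma sz_sx : sz * sx = ep := by ext i j; fin_cases i <;> fin_cases j <;> simp [sz, sx, ep]
lemma sx_sz : sx * sz = -ep := by ext i j; fin_cases i <;> fin_cases j <;> simp [sz, sx, ep]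
lemma sx_ep : sx * ep = -sz := by ext i j; fin_cases i <;> fin_cases j <;> simp [sz, sx, ep]
lemma ep_sx : ep * sx = sz := by ext i j; fin_cases i <;> fin_cases j <;> simp [sz, sx, ep]
lemma sz_ep : sz * ep = sx := by ext i j; fin_cases i <;> fin_cases j <;> simp [sz, sx, ep]
lemma ep_sz : ep * sz = -sx := by ext i j; fin_cases i <;> fin_cases j <;> simp [sz, sx, ep]

variable {n M : ℕ} {ι : Type} [Fintype ι] [DecidableEq ι]

lemma exists_aux {E Φ : Fin n → Matrix ι ι ℝ} (h : Cliff E Φ) :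
    Aux (μ := Fin 2 × (ι × Fin 2)) (fun m => ![1, -1] m.1) (fun i => sx ⊗ₖ (E i ⊗ₖ ep)) := by
  have hd : diagonal (fun m : Fin 2 × (ι × Fin 2) => (![1, -1] m.1 : ℝ)) = sz ⊗ₖ (1 : Matrix (ι × Fin 2) (ι × Fin 2) ℝ) := by
    have : sz = diagonal ![1, -1] := by ext i j; fin_cases i <;> fin_cases j <;> simp [sz]
    rw [this, ← diagonal_one, diagonal_kronecker_diagonal]; simp
  refine ⟨?_, ?_, ?_, ?_, ?_⟩
  · rintro ⟨a, _⟩; fin_cases a <;> simp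
  · intro i; rw [ktr, ktr, sx_t, ep_t, h.Et]; simp only [negk, kneg, neg_neg]
  · intro i; rw [kmul, kmul, sx_sx, ep_ep, h.ee]; simp only [negk, kneg, neg_neg, one_kronecker_one]
  · intro i j hij; rw [kmul, kmul, kmul, kmul, h.ij i j hij, negk, kneg]
  · intro i; rw [hd, kmul, kmul, sz_sx, sx_sz, negk, one_mul, mul_one, neg_neg]

theorem core {E Φ : Fin n → Matrix ι ι ℝ} (h : Cliff E Φ) (hn : 1 ≤ n) (c : ℝ) (hc : 0 < c)
    (hlow : ∀ (y : Fin n → ℝ) (w : ι → ℝ), c * (∑ i, y i * y i) * (w ⬝ᵥ w) ≤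
        ((∑ i, y i • Φ i) *ᵥ w) ⬝ᵥ ((∑ i, y i • Φ i) *ᵥ w))
    (K : Fin 2 → Matrix ι ι ℝ) (hK : ∀ a, K a * K a = -1) (hKK : K 0 * K 1 = -(K 1 * K 0))
    (η : ℝ) (hη : η = 1 ∨ η = -1) (hKE : ∀ a i, K a * E i = η • (E i * K a)) (hKP : ∀ a i, K a * Φ i = η • (Φ i * K a)) :
    4 * 2 ^ n ∣ Fintype.card ι := by
  have hb : ∀ i, ∃ C : ℝ, 0 ≤ C ∧ ∀ w, (Φ i *ᵥ w) ⬝ᵥ (Φ i *ᵥ w) ≤ C * (w ⬝ᵥ w) := by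
    intro i
    obtain ⟨C, h1, h2⟩ := exists_bound (Φ i * Φ i)
    refine ⟨C, h1, fun w => ?_⟩
    have := q_mul (Φ i) (Φ i) w
    rw [h.Pt] at this
    rw [← this]; exact (le_abs_self _).trans (h2 w)
  choose Cb hCb0 hCb using hb
  have hup : ∀ i w, (Φ i *ᵥ w) ⬝ᵥ (Φ i *ᵥ w) ≤ (∑ i, Cb i) * (w ⬝ᵥ w) := fun i w =>
    (hCb i w).trans (mul_le_mul_of_nonneg_right
      (Finset.single_le_sum (f := Cb) (fun j _ => hCb0 j) (Finset.mem_univ i)) (nsq_nonneg w))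
  have hC0 : 0 ≤ ∑ i, Cb i := Finset.sum_nonneg fun j _ => hCb0 j
  generalize ∑ i, Cb i = B at *
  obtain ⟨c', hc'0, hc'1, hc'⟩ : ∃ c', 0 < c' ∧ c' ≤ 1 ∧ c' ≤ c := ⟨min c 1, by positivity, min_le_right _ _, min_le_left _ _⟩
  have hlow' : ∀ e ≤ c', ∀ (y : Fin n → ℝ) (w : ι → ℝ), e * (∑ i, y i * y i) * (w ⬝ᵥ w) ≤
        ((∑ i, y i • Φ i) *ᵥ w) ⬝ᵥ ((∑ i, y i • Φ i) *ᵥ w) := by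
    intro e he y w
    refine le_trans ?_ (hlow y w)
    have y0 : 0 ≤ ∑ i, y i * y i := Finset.sum_nonneg fun i _ => mul_self_nonneg _
    exact mul_le_mul_of_nonneg_right (mul_le_mul_of_nonneg_right (he.trans hc') y0) (nsq_nonneg w)
  obtain ⟨M, d0, hd, hdM, hgap⟩ := LL_gap n (c' / 2) (B + 1) (((n : ℝ) + 1) ^ 2) (by positivity) (by linarith) (by positivity) (by positivity)
  have hinj : ∀ u, LL M E Φ d0 *ᵥ u = 0 → u = 0 := by
    intro u hu
    have := hgap ι E Φ h (hlow' _ (by linarith)) (fun i w => (hup i w).trans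
      (mul_le_mul_of_nonneg_right (by linarith) (nsq_nonneg w))) u
    rw [q, ← mulVec_mulVec, hu, mulVec_zero, dotProduct_zero] at this
    have h1 := nsq_nonneg u
    have h2 : (0 : ℝ) < ((n : ℝ) + 1) ^ 2 := by positivity
    exact dotProduct_self_eq_zero.1 (by nlinarith)
  have hIK : ∀ a, I n M (K a) * PP M E Φ = η • (PP M E Φ * I n M (K a)) := by
    intro a
    rw [PP, Finset.mul_sum, Finset.sum_mul, Finset.smul_sum]
    refine Finset.sum_congr rfl fun i _ => ?_
    rw [mul_add, add_mul, ← mul_assoc, ← mul_assoc, ← I_mul, ← I_mul, hKE, hKP, I_smul, I_smul, I_mul, I_mul, smul_mul_assoc,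
      smul_mul_assoc, mul_assoc, mul_assoc, (IJ (K a) i _).eq, (IJ (K a) i _).eq, ← mul_assoc, ← mul_assoc, smul_add]
  have hIW : ∀ a, I n M (K a) * ((d0 • 1 - TT n M ι) * Rr n M ι) = (d0 • 1 - TT n M ι) * Rr n M ι * I n M (K a) := by
    intro a; rw [W_eq]; exact (dg_I _ _).eq.symm
  have hRW : Rr n M ι * ((d0 • 1 - TT n M ι) * Rr n M ι) = (d0 • 1 - TT n M ι) * Rr n M ι * Rr n M ι := by
    rw [W_eq]; exact (dg_comm _ _).eq
  have hIR : ∀ a, Rr n M ι * I n M (K a) = I n M (K a) * Rr n M ι := fun a => (dg_I _ _).eq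
  have hII : ∀ a, I n M (K a) * I n M (K a) = -1 := fun a => by rw [← I_mul, hK, I_neg, I_one]
  have hII2 : I n M (K 0) * I n M (K 1) = -(I n M (K 1) * I n M (K 0)) := by rw [← I_mul, hKK, I_neg, I_mul]
  have hRR := Rr_sq (n := n) (M := M) (ι := ι)
  obtain ⟨k, hk, h4⟩ : ∃ k, HasSig (q (LL M E Φ d0)) k ∧ 4 ∣ k := by
    rcases hη with rfl | rfl
    · refine (exists_sig (LL M E Φ d0) (LL_tr h d0) hinj).2 (I n M (K 0)) (I n M (K 1)) (hII 0) (hII 1) hII2 ?_ ?_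
      all_goals rw [LL, mul_add, add_mul, hIK, hIW, one_smul]
    · have hIIR : ∀ a b, I n M (K a) * Rr n M ι * (I n M (K b) * Rr n M ι) = I n M (K a) * I n M (K b) := by
        intro a b
        rw [mul_assoc, ← mul_assoc (Rr n M ι), hIR, mul_assoc, hRR, mul_one]
      have hcm : ∀ a, I n M (K a) * Rr n M ι * LL M E Φ d0 = LL M E Φ d0 * (I n M (K a) * Rr n M ι) := by
        intro a
        have e1 := hIK a
        have e2 := hIW a
        have e3 := R_PP (M := M) E Φ
        rw [neg_smul, one_smul] at e1
        rw [LL]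
        generalize (d0 • 1 - TT n M ι) * Rr n M ι = W at *
        rw [mul_add, add_mul, mul_assoc, mul_assoc, e3, hRW, mul_neg, ← mul_assoc, e1, ← mul_assoc, e2]
        noncomm_ring
      refine (exists_sig (LL M E Φ d0) (LL_tr h d0) hinj).2 (I n M (K 0) * Rr n M ι) (I n M (K 1) * Rr n M ι)
        (by rw [hIIR, hII]) (by rw [hIIR, hII]) (by rw [hIIR, hIIR, hII2]) (hcm 0) (hcm 1)
  obtain ⟨o, r, h1, h2⟩ := core_mu (exists_aux h) h c' B (((n : ℝ) + 1) ^ 2) hc'0 hc'1 hC0 le_rfl (hlow' c' le_rfl) hup d0 hd hdM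
    (fun E Φ => hgap _ E Φ) k hk
  rw [Fintype.card_prod ι] at h1 h2
  rcases Nat.eq_zero_or_pos (Fintype.card ι) with h0 | h0
  · rw [h0]; exact dvd_zero _
  have hμ : 0 < Fintype.card (Fin 2 × (ι × Fin 2)) := by
    simp only [Fintype.card_prod, Fintype.card_fin]; omega
  have h3 : 2 ^ n * k = Fintype.card ι * (2 ^ n * o + 1) := by
    apply Nat.eq_of_mul_eq_mul_left hμ
    calc _ = 2 ^ n * (Fintype.card (Fin 2 × (ι × Fin 2)) * k) := by ring
      _ = _ := by rw [h1, mul_add, h2]; ring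
  have h5 : 4 * 2 ^ n ∣ Fintype.card ι * (2 ^ n * o + 1) := by
    rw [← h3, mul_comm]; exact mul_dvd_mul_left _ h4
  refine Nat.Coprime.dvd_of_dvd_mul_right ?_ h5
  have : (4 * 2 ^ n : ℕ) = 2 ^ (n + 2) := by rw [pow_add]; ring
  rw [this]
  apply Nat.Coprime.pow_left
  obtain ⟨n', rfl⟩ : ∃ n', n = n' + 1 := ⟨n - 1, by omega⟩
  rw [Nat.coprime_two_left, pow_succ]
  exact ⟨2 ^ n' * o, by ring⟩
end
end HR

open Matrix
set_option linter.all false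
set_option linter.unusedSectionVars false
set_option linter.unusedSimpArgs false
namespace HR
section
open scoped Kronecker
variable {n : ℕ} {ι : Type} [Fintype ι] [DecidableEq ι]

lemma low_bound (Φ : Fin n → Matrix ι ι ℝ) (h : ∀ y : Fin n → ℝ, y ≠ 0 → ∀ w, (∑ i, y i • Φ i) *ᵥ w = 0 → w = 0) :
    ∃ c : ℝ, 0 < c ∧ ∀ (y : Fin n → ℝ) (w : ι → ℝ), c * (∑ i, y i * y i) * (w ⬝ᵥ w) ≤
        ((∑ i, y i • Φ i) *ᵥ w) ⬝ᵥ ((∑ i, y i • Φ i) *ᵥ w) := by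
  let S : Set ((Fin n → ℝ) × (ι → ℝ)) := {p | p.1 ⬝ᵥ p.1 = 1 ∧ p.2 ⬝ᵥ p.2 = 1}
  let g : (Fin n → ℝ) × (ι → ℝ) → ℝ := fun p => ((∑ i, p.1 i • Φ i) *ᵥ p.2) ⬝ᵥ ((∑ i, p.1 i • Φ i) *ᵥ p.2)
  have hg : Continuous g := by
    have : Continuous fun p : (Fin n → ℝ) × (ι → ℝ) => (∑ i, p.1 i • Φ i) *ᵥ p.2 := by
      refine Continuous.matrix_mulVec ?_ continuous_snd
      fun_prop
    exact this.dotProduct this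
  have hcl : IsClosed S := by
    have c1 : Continuous fun p : (Fin n → ℝ) × (ι → ℝ) => p.1 ⬝ᵥ p.1 := continuous_fst.dotProduct continuous_fst
    have c2 : Continuous fun p : (Fin n → ℝ) × (ι → ℝ) => p.2 ⬝ᵥ p.2 := continuous_snd.dotProduct continuous_snd
    exact (isClosed_eq c1 continuous_const).inter (isClosed_eq c2 continuous_const)
  have hbd : ∀ {κ : Type} [Fintype κ] (x : κ → ℝ), x ⬝ᵥ x = 1 → ‖x‖ ≤ 1 := by
    intro κ _ x hx
    rw [pi_norm_le_iff_of_nonneg zero_le_one]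
    intro i
    have : x i * x i ≤ ∑ j, x j * x j :=
      Finset.single_le_sum (f := fun j => x j * x j) (fun j _ => mul_self_nonneg _) (Finset.mem_univ i)
    rw [dotProduct] at hx
    rw [hx] at this
    rw [Real.norm_eq_abs, abs_le]
    constructor <;> nlinarith
  have hcp : IsCompact S := by
    refine (isCompact_closedBall (0 : (Fin n → ℝ) × (ι → ℝ)) 1).of_isClosed_subset hcl ?_
    rintro ⟨y, w⟩ ⟨h1, h2⟩
    rw [mem_closedBall_zero_iff, Prod.norm_def]
    exact max_le (hbd y h1) (hbd w h2)
  have scale : ∀ (y : Fin n → ℝ) (w : ι → ℝ) (a b : ℝ), g (a • y, b • w) = a * a * (b * b) * g (y, w) := by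
    intro y w a b
    simp only [g]
    have : ∑ i, (a • y) i • Φ i = a • ∑ i, y i • Φ i := by
      rw [Finset.smul_sum]; exact Finset.sum_congr rfl fun i _ => by rw [Pi.smul_apply, smul_eq_mul, mul_smul]
    rw [this, smul_mulVec, mulVec_smul, smul_dotProduct, smul_dotProduct, dotProduct_smul, dotProduct_smul]
    simp only [smul_eq_mul]; ring
  have fin : ∀ c : ℝ, (∀ p ∈ S, c ≤ g p) → ∀ (y : Fin n → ℝ) (w : ι → ℝ), c * (∑ i, y i * y i) * (w ⬝ᵥ w) ≤ g (y, w) := by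
    intro c hc y w
    change c * (y ⬝ᵥ y) * (w ⬝ᵥ w) ≤ g (y, w)
    have g0 : 0 ≤ g (y, w) := nsq_nonneg _
    rcases eq_or_ne y 0 with rfl | hy
    · simpa using g0
    rcases eq_or_ne w 0 with rfl | hw
    · simpa using g0
    have py := nsq_pos y hy
    have pw := nsq_pos w hw
    have sy := Real.mul_self_sqrt py.le
    have sw := Real.mul_self_sqrt pw.le
    have ey : ((Real.sqrt (y ⬝ᵥ y))⁻¹) * ((Real.sqrt (y ⬝ᵥ y))⁻¹) = (y ⬝ᵥ y)⁻¹ := by rw [← mul_inv, sy]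
    have ew : ((Real.sqrt (w ⬝ᵥ w))⁻¹) * ((Real.sqrt (w ⬝ᵥ w))⁻¹) = (w ⬝ᵥ w)⁻¹ := by rw [← mul_inv, sw]
    have := hc ((Real.sqrt (y ⬝ᵥ y))⁻¹ • y, (Real.sqrt (w ⬝ᵥ w))⁻¹ • w) ⟨by
      simp only [smul_dotProduct, dotProduct_smul, smul_eq_mul]
      rw [← mul_assoc, ey, inv_mul_cancel₀ py.ne'], by
      simp only [smul_dotProduct, dotProduct_smul, smul_eq_mul]
      rw [← mul_assoc, ew, inv_mul_cancel₀ pw.ne']⟩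
    rw [scale, ey, ew, ← mul_inv, inv_mul_eq_div, le_div_iff₀ (by positivity)] at this
    linarith
  rcases S.eq_empty_or_nonempty with hS | hS
  · exact ⟨1, one_pos, fin 1 (by rw [hS]; simp)⟩
  · obtain ⟨p, hp, hmin⟩ := hcp.exists_isMinOn hS hg.continuousOn
    refine ⟨g p, ?_, fin _ fun p' hp' => hmin hp'⟩
    refine nsq_pos _ fun h0 => ?_
    have hy : p.1 ≠ 0 := by intro h; have := hp.1; rw [h] at this; simp at this
    have := h p.1 hy p.2 h0
    have h2 := hp.2
    rw [this] at h2; simp at h2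

/-- skew Clifford family -/
structure Sk {δ : Type} [Fintype δ] [DecidableEq δ] {s : Type} (e : s → Matrix δ δ ℝ) : Prop where
  t : ∀ i, (e i)ᵀ = -e i
  sq : ∀ i, e i * e i = -1
  anti : ∀ i j, i ≠ j → e i * e j = -(e j * e i)

lemma app {δ : Type} [Fintype δ] [DecidableEq δ] {e : Fin n → Matrix δ δ ℝ} (he : Sk e) (hn : 1 ≤ n)
    (K : Fin 2 → Matrix δ δ ℝ) (hK : ∀ a, K a * K a = -1) (hKK : K 0 * K 1 = -(K 1 * K 0))
    (η : ℝ) (hη : η = 1 ∨ η = -1) (hKE : ∀ a i, K a * e i = η • (e i * K a))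
    {N : ℕ} (F : Fin n → Matrix (Fin N) (Fin N) ℝ) (hF : ∀ y : Fin n → ℝ, y ≠ 0 → IsUnit (∑ i, y i • F i)) :
    4 * 2 ^ n ∣ Fintype.card δ * (N + N) := by
  let Z : Matrix (Fin N ⊕ Fin N) (Fin N ⊕ Fin N) ℝ := fromBlocks 1 0 0 (-1)
  let G : Matrix (Fin N) (Fin N) ℝ → Matrix (Fin N ⊕ Fin N) (Fin N ⊕ Fin N) ℝ := fun A => fromBlocks 0 Aᵀ A 0
  have hZt : Zᵀ = Z := by simp [Z, fromBlocks_transpose]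
  have hZZ : Z * Z = 1 := by simp [Z, fromBlocks_multiply, fromBlocks_one]
  have hGt : ∀ A, (G A)ᵀ = G A := by intro A; simp [G, fromBlocks_transpose]
  have hZG : ∀ A, Z * G A = -(G A * Z) := by intro A; simp [G, Z, fromBlocks_multiply, fromBlocks_neg]
  have hGl : ∀ y : Fin n → ℝ, ∑ i, y i • G (F i) = G (∑ i, y i • F i) := by
    intro y
    simp only [G, fromBlocks_smul, transpose_sum, transpose_smul]
    ext (a | a) (b | b) <;> simp [Matrix.sum_apply]
  have hGi : ∀ A, IsUnit A → ∃ B, B * G A = 1 := by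
    intro A hA
    have h1 : A⁻¹ * A = 1 := nonsing_inv_mul _ ((isUnit_iff_isUnit_det _).1 hA)
    have h2 : A⁻¹ᵀ * Aᵀ = 1 := by
      rw [← transpose_mul, mul_nonsing_inv _ ((isUnit_iff_isUnit_det _).1 hA), transpose_one]
    refine ⟨fromBlocks 0 A⁻¹ A⁻¹ᵀ 0, ?_⟩
    simp only [G, fromBlocks_multiply]
    simp [h1, h2, fromBlocks_one]
  obtain ⟨c, hc, hlow⟩ := low_bound (fun i => (1 : Matrix δ δ ℝ) ⊗ₖ G (F i)) (by
    intro y hy w hw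
    have : ∑ i, y i • ((1 : Matrix δ δ ℝ) ⊗ₖ G (F i)) = (1 : Matrix δ δ ℝ) ⊗ₖ G (∑ i, y i • F i) := by
      rw [← hGl]
      ext a b; simp [kronecker_apply, Matrix.sum_apply, Finset.mul_sum, mul_left_comm]
    rw [this] at hw
    obtain ⟨B, hB⟩ := hGi _ (hF y hy)
    have h2 := congrArg (fun x => ((1 : Matrix δ δ ℝ) ⊗ₖ B) *ᵥ x) hw
    simp only [mulVec_mulVec, kmul, hB, one_mul, one_kronecker_one, one_mulVec, mulVec_zero] at h2
    exact h2)
  have hcl : Cliff (fun i => e i ⊗ₖ Z) (fun i => (1 : Matrix δ δ ℝ) ⊗ₖ G (F i)) := by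
    refine ⟨?_, ?_, ?_, ?_, ?_⟩
    · intro i; rw [ktr, he.t, hZt, negk]
    · intro i; rw [kmul, he.sq, hZZ, negk, one_kronecker_one]
    · intro i j hij; rw [kmul, kmul, he.anti i j hij, negk]
    · intro i; rw [ktr, transpose_one, hGt]
    · intro i j; rw [kmul, kmul, hZG, kneg, one_mul, mul_one]
  have hcard : Fintype.card (δ × (Fin N ⊕ Fin N)) = Fintype.card δ * (N + N) := by simp
  rw [← hcard]
  rcases hη with rfl | rfl
  · refine core hcl hn c hc hlow (fun a => K a ⊗ₖ (1 : Matrix (Fin N ⊕ Fin N) (Fin N ⊕ Fin N) ℝ)) ?_ ?_ 1 (Or.inl rfl) ?_ ?_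
    · intro a; rw [kmul, hK, negk, one_mul, one_kronecker_one]
    · rw [kmul, kmul, hKK, negk]
    · intro a i; rw [kmul, kmul, hKE, one_smul, one_smul, one_mul, mul_one]
    · intro a i; rw [kmul, kmul, one_smul, one_mul, one_mul, mul_one, mul_one]
  · refine core hcl hn c hc hlow (fun a => K a ⊗ₖ Z) ?_ ?_ (-1) (Or.inr rfl) ?_ ?_
    · intro a; rw [kmul, hK, hZZ, negk, one_kronecker_one]
    · rw [kmul, kmul, hKK, negk]
    · intro a i; rw [kmul, kmul, hKE, smul_kronecker]
    · intro a i; rw [kmul, kmul, hZG, kneg, one_mul, mul_one, neg_smul, one_smul]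
end
end HR

open Matrix
set_option linter.all false
set_option linter.unusedSectionVars false
set_option linter.unusedSimpArgs false
namespace HR
section
open scoped Kronecker

noncomputable def e7 : Fin 7 → Matrix (Fin 2 × (Fin 2 × Fin 2)) (Fin 2 × (Fin 2 × Fin 2)) ℝ :=
  ![ep ⊗ₖ ((1 : Matrix (Fin 2) (Fin 2) ℝ) ⊗ₖ sx), ep ⊗ₖ ((1 : Matrix (Fin 2) (Fin 2) ℝ) ⊗ₖ sz),
    (1 : Matrix (Fin 2) (Fin 2) ℝ) ⊗ₖ (sx ⊗ₖ ep), (1 : Matrix (Fin 2) (Fin 2) ℝ) ⊗ₖ (sz ⊗ₖ ep), ep ⊗ₖ (ep ⊗ₖ ep),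
    sx ⊗ₖ (ep ⊗ₖ (1 : Matrix (Fin 2) (Fin 2) ℝ)), sz ⊗ₖ (ep ⊗ₖ (1 : Matrix (Fin 2) (Fin 2) ℝ))]

lemma e7_sk : Sk e7 := by
  refine ⟨?_, ?_, ?_⟩
  · intro i; fin_cases i <;> simp [e7, ktr, ep_t, sx_t, sz_t, negk, kneg]
  · intro i; fin_cases i <;> simp [e7, kmul, ep_ep, sx_sx, sz_sz, negk, kneg]
  · intro i j hij
    fin_cases i <;> fin_cases j <;> first
      | exact absurd rfl hij
      | simp [e7, kmul, ep_ep, sx_sx, sz_sz, sx_sz, sz_sx, sx_ep, ep_sx, sz_ep, ep_sz, negk, kneg]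

noncomputable def e3 : Fin 3 → Matrix (Fin 2 × Fin 2) (Fin 2 × Fin 2) ℝ :=
  ![ep ⊗ₖ sx, ep ⊗ₖ sz, (1 : Matrix (Fin 2) (Fin 2) ℝ) ⊗ₖ ep]
noncomputable def k3 : Fin 2 → Matrix (Fin 2 × Fin 2) (Fin 2 × Fin 2) ℝ := ![sx ⊗ₖ ep, sz ⊗ₖ ep]

lemma e3_sk : Sk e3 := by
  refine ⟨?_, ?_, ?_⟩
  · intro i; fin_cases i <;> simp [e3, ktr, ep_t, sx_t, sz_t, negk, kneg]
  · intro i; fin_cases i <;> simp [e3, kmul, ep_ep, sx_sx, sz_sz, negk, kneg]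
  · intro i j hij
    fin_cases i <;> fin_cases j <;> first
      | exact absurd rfl hij
      | simp [e3, kmul, ep_ep, sx_sx, sz_sz, sx_sz, sz_sx, sx_ep, ep_sx, sz_ep, ep_sz, negk, kneg]

/-- plain system -/
def CS (n d : ℕ) : Prop := ∃ (δ : Type) (_ : Fintype δ) (_ : DecidableEq δ) (e : Fin n → Matrix δ δ ℝ),
  Fintype.card δ = d ∧ Sk e
/-- quaternionic system -/
def QS (n d : ℕ) (η : ℝ) : Prop := ∃ (δ : Type) (_ : Fintype δ) (_ : DecidableEq δ) (e : Fin n → Matrix δ δ ℝ)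
  (K : Fin 2 → Matrix δ δ ℝ),
  Fintype.card δ = d ∧ Sk e ∧ (∀ a, K a * K a = -1) ∧ K 0 * K 1 = -(K 1 * K 0) ∧ ∀ a i, K a * e i = η • (e i * K a)

lemma Sk.comp {δ s s' : Type} [Fintype δ] [DecidableEq δ] {e : s → Matrix δ δ ℝ} (h : Sk e) (g : s' → s)
    (hg : Function.Injective g) : Sk (fun i => e (g i)) :=
  ⟨fun i => h.t _, fun i => h.sq _, fun i j hij => h.anti _ _ (hg.ne hij)⟩

lemma CS.mono {n n' d : ℕ} (h : CS n d) (hn : n' ≤ n) : CS n' d := by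
  obtain ⟨δ, _, _, e, h1, h2⟩ := h
  exact ⟨δ, _, _, fun i => e (Fin.castLE hn i), h1, h2.comp _ (Fin.castLE_injective hn)⟩
lemma QS.mono {n n' d : ℕ} {η : ℝ} (h : QS n d η) (hn : n' ≤ n) : QS n' d η := by
  obtain ⟨δ, _, _, e, K, h1, h2, h3, h4, h5⟩ := h
  exact ⟨δ, _, _, fun i => e (Fin.castLE hn i), K, h1, h2.comp _ (Fin.castLE_injective hn), h3, h4, fun a i => h5 a _⟩

abbrev G8 := (Fin 2 × (Fin 2 × Fin 2)) × Fin 2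
noncomputable def om : Matrix G8 G8 ℝ := (1 : Matrix (Fin 2 × (Fin 2 × Fin 2)) (Fin 2 × (Fin 2 × Fin 2)) ℝ) ⊗ₖ sz
noncomputable def g8 : Fin 8 → Matrix G8 G8 ℝ :=
  Fin.snoc (α := fun _ => Matrix G8 G8 ℝ) (fun k : Fin 7 => e7 k ⊗ₖ sx) ((1 : Matrix (Fin 2 × (Fin 2 × Fin 2)) (Fin 2 × (Fin 2 × Fin 2)) ℝ) ⊗ₖ ep)
lemma g8c (k : Fin 7) : g8 k.castSucc = e7 k ⊗ₖ sx := Fin.snoc_castSucc (α := fun _ => Matrix G8 G8 ℝ) _ _ _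
lemma g8l : g8 (Fin.last 7) = (1 : Matrix (Fin 2 × (Fin 2 × Fin 2)) (Fin 2 × (Fin 2 × Fin 2)) ℝ) ⊗ₖ ep :=
  Fin.snoc_last (α := fun _ => Matrix G8 G8 ℝ) _ _

lemma g8_sk : Sk g8 := by
  refine ⟨?_, ?_, ?_⟩
  · intro i
    induction i using Fin.lastCases with
    | last => rw [g8l, ktr, ep_t, kneg, transpose_one]
    | cast i => rw [g8c, ktr, e7_sk.t, sx_t, negk]
  · intro i
    induction i using Fin.lastCases with
    | last => rw [g8l, kmul, ep_ep, kneg, one_mul, one_kronecker_one]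
    | cast i => rw [g8c, kmul, e7_sk.sq, sx_sx, negk, one_kronecker_one]
  · intro i j hij
    induction i using Fin.lastCases with
    | last =>
      induction j using Fin.lastCases with
      | last => exact absurd rfl hij
      | cast j => rw [g8l, g8c, kmul, kmul, ep_sx, sx_ep, kneg, neg_neg, one_mul, mul_one]
    | cast i =>
      induction j using Fin.lastCases with
      | last => rw [g8l, g8c, kmul, kmul, ep_sx, sx_ep, kneg, one_mul, mul_one]
      | cast j => rw [g8c, g8c, kmul, kmul, e7_sk.anti i j (fun h => hij (by rw [h])), negk]
lemma om_t : omᵀ = om := by rw [om, ktr, transpose_one, sz_t]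
lemma om_om : om * om = 1 := by rw [om, kmul, sz_sz, one_mul, one_kronecker_one]
lemma om_g (k) : om * g8 k = -(g8 k * om) := by
  induction k using Fin.lastCases with
  | last => rw [g8l, om, kmul, kmul, sz_ep, ep_sz, kneg, neg_neg]
  | cast i => rw [g8c, om, kmul, kmul, sz_sx, sx_sz, kneg, neg_neg, one_mul, mul_one]

noncomputable def big {n : ℕ} {δ : Type} [DecidableEq δ] (e : Fin n → Matrix δ δ ℝ) : Fin (n + 8) → Matrix (δ × G8) (δ × G8) ℝ :=
  Fin.append (fun i => e i ⊗ₖ om) (fun k => (1 : Matrix δ δ ℝ) ⊗ₖ g8 k)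

lemma big_sk {n : ℕ} {δ : Type} [Fintype δ] [DecidableEq δ] {e : Fin n → Matrix δ δ ℝ} (h : Sk e) : Sk (big e) := by
  refine ⟨?_, ?_, ?_⟩
  · intro i
    induction i using Fin.addCases with
    | left i => rw [big, Fin.append_left, ktr, h.t, om_t, negk]
    | right i => rw [big, Fin.append_right, ktr, g8_sk.t, transpose_one, kneg]
  · intro i
    induction i using Fin.addCases with
    | left i => rw [big, Fin.append_left, kmul, h.sq, om_om, negk, one_kronecker_one]
    | right i => rw [big, Fin.append_right, kmul, g8_sk.sq, one_mul, kneg, one_kronecker_one]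
  · intro i j hij
    induction i using Fin.addCases with
    | left i =>
      induction j using Fin.addCases with
      | left j => rw [big, Fin.append_left, Fin.append_left, kmul, kmul, h.anti i j (fun h => hij (by rw [h])), negk]
      | right j => rw [big, Fin.append_left, Fin.append_right, kmul, kmul, om_g, kneg, one_mul, mul_one]
    | right i =>
      induction j using Fin.addCases with
      | left j => rw [big, Fin.append_left, Fin.append_right, kmul, kmul, om_g, kneg, one_mul, mul_one, neg_neg]
      | right j => rw [big, Fin.append_right, Fin.append_right, kmul, kmul, g8_sk.anti i j (fun h => hij (by rw [h])), kneg]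

lemma CS.step {n d : ℕ} (h : CS n d) : CS (n + 8) (d * 16) := by
  obtain ⟨δ, _, _, e, h1, h2⟩ := h
  exact ⟨δ × G8, inferInstance, inferInstance, big e, by simp [h1], big_sk h2⟩
lemma QS.step {n d : ℕ} {η : ℝ} (hη : η = 1 ∨ η = -1) (h : QS n d η) : QS (n + 8) (d * 16) η := by
  obtain ⟨δ, _, _, e, K, h1, h2, h3, h4, h5⟩ := h
  rcases hη with rfl | rfl
  · refine ⟨δ × G8, inferInstance, inferInstance, big e, fun a => K a ⊗ₖ (1 : Matrix G8 G8 ℝ), by simp [h1], big_sk h2, ?_, ?_, ?_⟩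
    · intro a; rw [kmul, h3, negk, one_mul, one_kronecker_one]
    · rw [kmul, kmul, h4, negk]
    · intro a i
      induction i using Fin.addCases with
      | left i => rw [big, Fin.append_left, kmul, kmul, h5, one_smul, one_smul, one_mul, mul_one]
      | right i => rw [big, Fin.append_right, kmul, kmul, one_smul, one_mul, mul_one, one_mul, mul_one]
  · refine ⟨δ × G8, inferInstance, inferInstance, big e, fun a => K a ⊗ₖ om, by simp [h1], big_sk h2, ?_, ?_, ?_⟩
    · intro a; rw [kmul, h3, om_om, negk, one_kronecker_one]
    · rw [kmul, kmul, h4, negk]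
    · intro a i
      induction i using Fin.addCases with
      | left i => rw [big, Fin.append_left, kmul, kmul, h5, smul_kronecker]
      | right i => rw [big, Fin.append_right, kmul, kmul, om_g, kneg, neg_smul, one_smul, one_mul, mul_one]

lemma CS.steps {n d : ℕ} (h : CS n d) (j : ℕ) : CS (n + 8 * j) (d * 16 ^ j) := by
  induction j with
  | zero => simpa using h
  | succ j ih => have := ih.step; rwa [mul_assoc, ← pow_succ, add_assoc, ← mul_add_one] at this
lemma QS.steps {n d : ℕ} {η : ℝ} (hη : η = 1 ∨ η = -1) (h : QS n d η) (j : ℕ) : QS (n + 8 * j) (d * 16 ^ j) η := by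
  induction j with
  | zero => simpa using h
  | succ j ih => have := ih.step hη; rwa [mul_assoc, ← pow_succ, add_assoc, ← mul_add_one] at this

lemma QS3 : QS 3 4 1 := by
  refine ⟨Fin 2 × Fin 2, inferInstance, inferInstance, e3, k3, by simp, e3_sk, ?_, ?_, ?_⟩
  · intro a; fin_cases a <;> simp [k3, kmul, ep_ep, sx_sx, sz_sz, negk, kneg]
  · simp [k3, kmul, ep_ep, sx_sz, sz_sx, negk, kneg]
  · intro a i
    fin_cases a <;> fin_cases i <;> simp [e3, k3, kmul, ep_ep, sx_sx, sz_sz, sx_sz, sz_sx, sx_ep, ep_sx, sz_ep, ep_sz, negk, kneg]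
lemma QS5 : QS 5 8 (-1) := by
  refine ⟨Fin 2 × (Fin 2 × Fin 2), inferInstance, inferInstance, fun i => e7 (Fin.castLE (by norm_num : 5 ≤ 7) i), ![e7 5, e7 6], by simp,
    e7_sk.comp _ (Fin.castLE_injective (by norm_num : 5 ≤ 7)), ?_, ?_, ?_⟩
  · intro a; fin_cases a
    · exact e7_sk.sq 5
    · exact e7_sk.sq 6
  · exact e7_sk.anti 5 6 (by decide)
  · intro a i
    rw [neg_smul, one_smul]
    fin_cases a
    · exact e7_sk.anti 5 _ (fun h => by have := congrArg Fin.val h; simp at this; omega)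
    · exact e7_sk.anti 6 _ (fun h => by have := congrArg Fin.val h; simp at this; omega)
lemma CS0 : CS 0 1 := ⟨Unit, inferInstance, inferInstance, fun i => i.elim0, by simp, ⟨fun i => i.elim0, fun i => i.elim0, fun i => i.elim0⟩⟩
lemma CS1 : CS 1 2 := ⟨Fin 2, inferInstance, inferInstance, fun _ => ep, by simp, ⟨fun _ => ep_t, fun _ => ep_ep, fun i j h => absurd (Subsingleton.elim i j) h⟩⟩
lemma CS3 : CS 3 4 := ⟨_, inferInstance, inferInstance, e3, by simp, e3_sk⟩
lemma CS7 : CS 7 8 := ⟨_, inferInstance, inferInstance, e7, by simp, e7_sk⟩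

lemma QS.app {n d N : ℕ} {η : ℝ} (hη : η = 1 ∨ η = -1) (h : QS n d η) (hn : 1 ≤ n) (F : Fin n → Matrix (Fin N) (Fin N) ℝ)
    (hF : ∀ y : Fin n → ℝ, y ≠ 0 → IsUnit (∑ i, y i • F i)) : 4 * 2 ^ n ∣ d * (N + N) := by
  obtain ⟨δ, _, _, e, K, h1, h2, h3, h4, h5⟩ := h
  rw [← h1]
  exact HR.app h2 hn K h3 h4 η hη h5 F hF
end
end HR

open Matrix
set_option linter.all false
set_option linter.unusedSectionVars false
set_option linter.unusedSimpArgs false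
namespace HR
section
open scoped Kronecker

lemma CS.real {m d k N : ℕ} (h : CS m d) (hN : N = d * k) : ∃ e : Fin m → Matrix (Fin N) (Fin N) ℝ, Sk e := by
  obtain ⟨δ, _, _, e, h1, h2⟩ := h
  have hc : Fintype.card (δ × Fin k) = N := by simp [h1, hN]
  let q : δ × Fin k ≃ Fin N := Fintype.equivFinOfCardEq hc
  let R := Matrix.reindexAlgEquiv ℝ ℝ q
  have Rt : ∀ A : Matrix (δ × Fin k) (δ × Fin k) ℝ, (R A)ᵀ = R Aᵀ := fun A => rfl
  refine ⟨fun i => R (e i ⊗ₖ (1 : Matrix (Fin k) (Fin k) ℝ)), ⟨?_, ?_, ?_⟩⟩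
  · intro i; rw [Rt, ktr, h2.t, negk, transpose_one, map_neg]
  · intro i; rw [← map_mul, kmul, h2.sq, negk, one_mul, one_kronecker_one, map_neg, map_one]
  · intro i j hij; rw [← map_mul, ← map_mul, kmul, kmul, h2.anti i j hij, negk, map_neg]

lemma Sk.map {m N : ℕ} {e : Fin m → Matrix (Fin N) (Fin N) ℝ} (h : Sk e) :
    ∃ f : EuclideanSpace ℝ (Fin (m + 1)) →ₗ[ℝ] Matrix (Fin N) (Fin N) ℝ,
        ∀ v, (f v)ᵀ * f v = (‖v‖ ^ 2 : ℝ) • (1 : Matrix (Fin N) (Fin N) ℝ) := by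
  refine ⟨{ toFun := fun v => v 0 • 1 + ∑ i : Fin m, v i.succ • e i, map_add' := ?_, map_smul' := ?_ }, ?_⟩
  · intro v w
    simp only [PiLp.add_apply, add_smul, Finset.sum_add_distrib]
    abel
  · intro c v
    simp only [PiLp.smul_apply, smul_eq_mul, mul_smul, RingHom.id_apply, smul_add, Finset.smul_sum]
  · intro v
    simp only [LinearMap.coe_mk, AddHom.coe_mk]
    set S : Matrix (Fin N) (Fin N) ℝ := ∑ i : Fin m, v i.succ • e i with hS
    have St : Sᵀ = -S := by
      rw [hS, transpose_sum, ← Finset.sum_neg_distrib]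
      exact Finset.sum_congr rfl fun i _ => by rw [transpose_smul, h.t, smul_neg]
    have SS : S * S = -((∑ i : Fin m, v i.succ ^ 2) • (1 : Matrix (Fin N) (Fin N) ℝ)) := by
      rw [hS, Finset.sum_mul_sum, sum_antisymm]
      · rw [Finset.sum_smul, ← Finset.sum_neg_distrib]
        refine Finset.sum_congr rfl fun i _ => ?_
        rw [smul_mul_assoc, mul_smul_comm, h.sq, smul_smul, smul_neg, pow_two]
      · intro i j hij
        rw [smul_mul_assoc, mul_smul_comm, h.anti i j hij, smul_mul_assoc, mul_smul_comm, smul_neg, smul_neg, smul_comm]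
    rw [EuclideanSpace.norm_sq_eq, Fin.sum_univ_succ, transpose_add, St, transpose_smul, transpose_one]
    simp only [Real.norm_eq_abs, sq_abs]
    rw [add_smul, add_mul, mul_add, mul_add, neg_mul, neg_mul, SS]
    simp only [smul_mul_assoc, mul_smul_comm, one_mul, mul_one, smul_smul]
    rw [pow_two]
    abel

lemma unit_of {n N : ℕ} (f : EuclideanSpace ℝ (Fin n) →ₗ[ℝ] Matrix (Fin N) (Fin N) ℝ)
    (hf : ∀ v, (f v)ᵀ * f v = (‖v‖ ^ 2 : ℝ) • (1 : Matrix (Fin N) (Fin N) ℝ)) (v) (hv : v ≠ 0) : IsUnit (f v) := by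
  have h0 : ‖v‖ ^ 2 ≠ 0 := pow_ne_zero _ (norm_ne_zero_iff.2 hv)
  have : ((‖v‖ ^ 2)⁻¹ • (f v)ᵀ) * f v = 1 := by
    rw [smul_mul_assoc, hf, smul_smul, inv_mul_cancel₀ h0, one_smul]
  exact IsUnit.of_mul_eq_one _ (mul_eq_one_comm.1 this)

lemma restr {n n' N : ℕ} (f : EuclideanSpace ℝ (Fin n) →ₗ[ℝ] Matrix (Fin N) (Fin N) ℝ)
    (hf : ∀ v, v ≠ 0 → IsUnit (f v)) (hn : n' ≤ n) :
    ∃ F : Fin n' → Matrix (Fin N) (Fin N) ℝ, ∀ y : Fin n' → ℝ, y ≠ 0 → IsUnit (∑ i, y i • F i) := by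
  refine ⟨fun i => f (EuclideanSpace.single (Fin.castLE hn i) 1), fun y hy => ?_⟩
  have : ∑ i, y i • f (EuclideanSpace.single (Fin.castLE hn i) 1) =
      f (∑ i, y i • EuclideanSpace.single (Fin.castLE hn i) 1) := by
    rw [map_sum]; exact Finset.sum_congr rfl fun i _ => by rw [map_smul]
  rw [this]
  apply hf
  intro h0
  apply hy
  funext j
  have h1 := congrArg (fun v : EuclideanSpace ℝ (Fin n) => v (Fin.castLE hn j)) h0
  simpa [Pi.single_apply, (Fin.castLE_injective hn).eq_iff] using h1

/-- number of squares -/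
def rr (v : ℕ) : ℕ := 8 * (v / 4) + 2 ^ (v % 4)

lemma QS.no {r d N n a : ℕ} {η : ℝ} (hη : η = 1 ∨ η = -1) (h : QS r d η) (hr : 1 ≤ r)
    (f : EuclideanSpace ℝ (Fin n) →ₗ[ℝ] Matrix (Fin N) (Fin N) ℝ)
    (hf : ∀ v, v ≠ 0 → IsUnit (f v)) (hn : r + 8 * a ≤ n) : 4 * 2 ^ r * 16 ^ a ∣ d * (N + N) := by
  obtain ⟨F, hF⟩ := restr f hf hn
  have h1 := (h.steps hη a).app hη (by omega) F hF
  have h2 : 4 * 2 ^ (r + 8 * a) = 16 ^ a * (4 * 2 ^ r * 16 ^ a) := by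
    rw [pow_add, pow_mul, show (2:ℕ) ^ 8 = 16 * 16 by norm_num, mul_pow]; ring
  have h3 : d * 16 ^ a * (N + N) = 16 ^ a * (d * (N + N)) := by ring
  rw [h2, h3] at h1
  exact Nat.dvd_of_mul_dvd_mul_left (by positivity) h1

lemma upper {N n v : ℕ} (hv : ¬ 2 ^ (v + 1) ∣ N)
    (f : EuclideanSpace ℝ (Fin n) →ₗ[ℝ] Matrix (Fin N) (Fin N) ℝ)
    (hf : ∀ v, v ≠ 0 → IsUnit (f v)) : n ≤ rr v := by
  by_contra hc
  push Not at hc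
  apply hv
  obtain ⟨a, b, hb, rfl⟩ : ∃ a b, b < 4 ∧ v = 4 * a + b := ⟨v / 4, v % 4, Nat.mod_lt _ (by norm_num), by omega⟩
  have hr : rr (4 * a + b) = 8 * a + 2 ^ b := by
    rw [rr, show (4 * a + b) / 4 = a by omega, show (4 * a + b) % 4 = b by omega]
  rw [hr] at hc
  have hp : 2 ^ (4 * a + b + 1) = 16 ^ a * 2 ^ b * 2 := by
    rw [pow_succ, pow_add, pow_mul]; norm_num
  rw [hp]
  interval_cases b
  · obtain ⟨c, h⟩ := (QS3.mono (by norm_num : 2 ≤ 3)).no (a := a) (Or.inl rfl) (by norm_num) f hf (by omega)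
    exact ⟨c, by linarith⟩
  · obtain ⟨c, h⟩ := QS3.no (a := a) (Or.inl rfl) (by norm_num) f hf (by omega)
    exact ⟨c, by linarith⟩
  · obtain ⟨c, h⟩ := QS5.no (a := a) (Or.inr rfl) (by norm_num) f hf (by omega)
    exact ⟨c, by linarith⟩
  · obtain ⟨c, h⟩ := (QS3.mono (by norm_num : 1 ≤ 3)).no (a := a + 1) (Or.inl rfl) (by norm_num) f hf (by omega)
    rw [pow_succ 16 a] at h
    exact ⟨c, by linarith⟩

lemma lower {N n v : ℕ} (hv : 2 ^ v ∣ N) (hn : n ≤ rr v) : ∃ f : EuclideanSpace ℝ (Fin n) →ₗ[ℝ] Matrix (Fin N) (Fin N) ℝ,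
        ∀ v, (f v)ᵀ * f v = (‖v‖ ^ 2 : ℝ) • (1 : Matrix (Fin N) (Fin N) ℝ) := by
  rcases n with _ | m
  · exact ⟨0, fun v => by rw [Subsingleton.elim v 0]; simp⟩
  obtain ⟨k, hk⟩ := hv
  suffices h : CS m (2 ^ v) by
    obtain ⟨e, he⟩ := h.real hk
    exact he.map
  obtain ⟨a, b, hb, rfl⟩ : ∃ a b, b < 4 ∧ v = 4 * a + b := ⟨v / 4, v % 4, Nat.mod_lt _ (by norm_num), by omega⟩
  have hr : rr (4 * a + b) = 8 * a + 2 ^ b := by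
    rw [rr, show (4 * a + b) / 4 = a by omega, show (4 * a + b) % 4 = b by omega]
  rw [hr] at hn
  have hp : 2 ^ (4 * a + b) = 2 ^ b * 16 ^ a := by
    rw [pow_add, pow_mul]; norm_num [mul_comm]
  rw [hp]
  interval_cases b
  · exact (CS0.steps a).mono (by omega)
  · exact (CS1.steps a).mono (by omega)
  · exact (CS3.steps a).mono (by omega)
  · exact (CS7.steps a).mono (by omega)

lemma rho_eq (N : ℕ) : hrRho (N : ℚ) = (rr (padicValNat 2 N) : ℤ) := by
  rw [hrRho, padicValRat.of_nat, rr]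
  have : ((padicValNat 2 N : ℤ) % 4).toNat = padicValNat 2 N % 4 := by omega
  rw [this]
  push_cast
  rfl

lemma final (N : ℕ) (hN : 1 ≤ N) (n : ℕ) :
    ((∃ f : EuclideanSpace ℝ (Fin n) →ₗ[ℝ] Matrix (Fin N) (Fin N) ℝ,
        ∀ v, (f v)ᵀ * f v = (‖v‖ ^ 2 : ℝ) • (1 : Matrix (Fin N) (Fin N) ℝ)) ↔
      (∃ f : EuclideanSpace ℝ (Fin n) →ₗ[ℝ] Matrix (Fin N) (Fin N) ℝ,
        ∀ v, v ≠ 0 → IsUnit (f v))) ∧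
    ((∃ f : EuclideanSpace ℝ (Fin n) →ₗ[ℝ] Matrix (Fin N) (Fin N) ℝ,
        ∀ v, v ≠ 0 → IsUnit (f v)) ↔
      (n : ℤ) ≤ hrRho (N : ℚ)) := by
  have a12 : (∃ f : EuclideanSpace ℝ (Fin n) →ₗ[ℝ] Matrix (Fin N) (Fin N) ℝ,
        ∀ v, (f v)ᵀ * f v = (‖v‖ ^ 2 : ℝ) • (1 : Matrix (Fin N) (Fin N) ℝ)) →
      (∃ f : EuclideanSpace ℝ (Fin n) →ₗ[ℝ] Matrix (Fin N) (Fin N) ℝ,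
        ∀ v, v ≠ 0 → IsUnit (f v)) := fun ⟨f, hf⟩ => ⟨f, fun v hv => unit_of f hf v hv⟩
  have a23 : (∃ f : EuclideanSpace ℝ (Fin n) →ₗ[ℝ] Matrix (Fin N) (Fin N) ℝ,
        ∀ v, v ≠ 0 → IsUnit (f v)) → n ≤ rr (padicValNat 2 N) := fun ⟨f, hf⟩ =>
    upper (pow_succ_padicValNat_not_dvd (by omega)) f hf
  rw [rho_eq, Nat.cast_le]
  exact ⟨⟨a12, fun h => lower pow_padicValNat_dvd (a23 h)⟩, ⟨a23, fun h => a12 (lower pow_padicValNat_dvd h)⟩⟩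
end
end HR

/-- The Hurwitz–Radon–Eckmann–Adams theorem:
`ρ(N) = ρ⁽¹⁾(𝔰𝔬(N,N),ι) = ρ⁽²⁾(𝔰𝔬(N,N),ι)`. -/
theorem hurwitzRadon_so_N_N (N : ℕ) (hN : 1 ≤ N) (n : ℕ) :
    ((∃ f : EuclideanSpace ℝ (Fin n) →ₗ[ℝ] Matrix (Fin N) (Fin N) ℝ,
        ∀ v, (f v)ᵀ * f v = (‖v‖ ^ 2 : ℝ) • (1 : Matrix (Fin N) (Fin N) ℝ)) ↔
      (∃ f : EuclideanSpace ℝ (Fin n) →ₗ[ℝ] Matrix (Fin N) (Fin N) ℝ,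
        ∀ v, v ≠ 0 → IsUnit (f v))) ∧
    ((∃ f : EuclideanSpace ℝ (Fin n) →ₗ[ℝ] Matrix (Fin N) (Fin N) ℝ,
        ∀ v, v ≠ 0 → IsUnit (f v)) ↔
      (n : ℤ) ≤ hrRho (N : ℚ)) := by
  exact HR.final N hN n
end
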